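/- arXiv:2102.03743 — 8 statements merged into one kernel-verified Lean document; each statement's English description precedes it below -/
import Mathlib

section
/- Let σ ∈ (0,1) be real and let 1 ≤ k ≤ m be integers. Then the sum over all k-tuples (n_1,…,n_k) of positive integers with n_1+⋯+n_k = m of (1/k!)·(m!/(n_1!⋯n_k!))·∏_{i=1}^{k}(1−σ)_{(n_i−1)} equals σ^{−k}·C(m,k;σ). -/
/-- Rising factorial `(x)_(n) = x (x+1) ⋯ (x+n-1)`, with `(x)_(0) = 1`. -/
def risingFactorial (x : ℝ) : ℕ → ℝ
  | 0 => 1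
  | n + 1 => risingFactorial x n * (x + n)

/-- Generalized factorial coefficient
`C(m,k;σ) = (1/k!) ∑_{i=0}^k (-1)^i binom(k,i) (-iσ)_(m)`. -/
noncomputable def genFactCoeff (m k : ℕ) (σ : ℝ) : ℝ :=
  (1 / (k.factorial : ℝ)) *
    ∑ i ∈ Finset.range (k + 1),
      (-1 : ℝ) ^ i * (k.choose i : ℝ) * risingFactorial (-(i : ℝ) * σ) m

open PowerSeries in
lemma coeff_pow_tuple (G : PowerSeries ℝ) (k m : ℕ) :
    coeff m (G ^ k) = ∑ n ∈ Finset.Nat.antidiagonalTuple k m, ∏ i, coeff (n i) G := by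
  have h : G ^ k = ∏ _i : Fin k, G := by simp
  rw [h, coeff_prod]
  refine Finset.sum_nbij' (fun l => (l : Fin k → ℕ)) (fun n => Finsupp.equivFunOnFinite.symm n)
    ?_ ?_ ?_ ?_ ?_
  · intro l hl
    rw [Finset.mem_finsuppAntidiag] at hl
    exact Finset.Nat.mem_antidiagonalTuple.2 hl.1
  · intro n hn
    rw [Finset.mem_finsuppAntidiag]
    exact ⟨Finset.Nat.mem_antidiagonalTuple.1 hn, by simp⟩
  · intro l _
    ext i
    simp
  · intro n _
    ext i
    simp
  · intro l _
    rfl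

lemma rf_vandermonde (x y : ℝ) (n : ℕ) :
    ∑ p ∈ Finset.HasAntidiagonal.antidiagonal n,
      (n.choose p.1 : ℝ) * (risingFactorial x p.1 * risingFactorial y p.2)
      = risingFactorial (x + y) n := by
  induction n with
  | zero => simp [risingFactorial]
  | succ n ih =>
    rw [Finset.sum_antidiagonal_choose_succ_mul
      (fun i j => risingFactorial x i * risingFactorial y j) n, risingFactorial, ← ih,
      ← Finset.sum_add_distrib, Finset.sum_mul]
    refine Finset.sum_congr rfl ?_
    rintro ⟨i, j⟩ hij
    rw [Finset.HasAntidiagonal.mem_antidiagonal] at hij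
    simp only at hij ⊢
    rw [← Nat.choose_symm_of_eq_add hij.symm, ← hij]
    simp only [risingFactorial]
    push_cast
    ring

/-- Generating function of the rising factorials. -/
noncomputable def rfSeries (x : ℝ) : PowerSeries ℝ :=
  PowerSeries.mk fun n => risingFactorial x n / n.factorial

lemma rfSeries_mul (x y : ℝ) : rfSeries x * rfSeries y = rfSeries (x + y) := by
  ext n
  simp only [rfSeries, PowerSeries.coeff_mul, PowerSeries.coeff_mk]
  rw [← rf_vandermonde, Finset.sum_div]
  refine Finset.sum_congr rfl ?_
  rintro ⟨i, j⟩ hij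
  rw [Finset.HasAntidiagonal.mem_antidiagonal] at hij
  simp only at hij ⊢
  rw [← hij, Nat.choose_symm_add, Nat.add_choose, Nat.cast_div (Nat.factorial_mul_factorial_dvd_factorial_add i j)
    (by positivity)]
  push_cast
  field_simp

lemma rf_zero (n : ℕ) : risingFactorial 0 (n + 1) = 0 := by
  induction n with
  | zero => simp [risingFactorial]
  | succ n ih => rw [risingFactorial, ih, zero_mul]

lemma rfSeries_pow (x : ℝ) (i : ℕ) : rfSeries x ^ i = rfSeries (i * x) := by
  induction i with
  | zero =>
    ext n
    cases n with
    | zero => simp [rfSeries, risingFactorial]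
    | succ n => simp [rfSeries, rf_zero, PowerSeries.coeff_one]
  | succ i ih =>
    rw [pow_succ, ih, rfSeries_mul]
    congr 1
    push_cast
    ring

lemma rf_succ_left (x : ℝ) (n : ℕ) :
    risingFactorial x (n + 1) = x * risingFactorial (x + 1) n := by
  induction n with
  | zero => simp [risingFactorial]
  | succ n ih =>
    rw [risingFactorial, ih, risingFactorial]
    push_cast
    ring

lemma coeff_one_sub (σ : ℝ) (n : ℕ) :
    PowerSeries.coeff n (1 - rfSeries (-σ)) =
      if 0 < n then σ * (risingFactorial (1 - σ) (n - 1) / n.factorial) else 0 := by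
  cases n with
  | zero => simp [rfSeries, risingFactorial]
  | succ n =>
    simp only [map_sub, rfSeries, PowerSeries.coeff_mk, PowerSeries.coeff_one, rf_succ_left]
    simp
    rw [show -σ + 1 = 1 - σ by ring]
    ring

lemma coeff_binom (σ : ℝ) (m k : ℕ) :
    PowerSeries.coeff m ((1 - rfSeries (-σ)) ^ k) =
      (∑ i ∈ Finset.range (k + 1),
        (-1 : ℝ) ^ i * (k.choose i : ℝ) * risingFactorial (-(i : ℝ) * σ) m) / m.factorial := by
  rw [sub_eq_neg_add, add_pow, map_sum, Finset.sum_div]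
  refine Finset.sum_congr rfl fun i _ => ?_
  have h : (-rfSeries (-σ)) ^ i * 1 ^ (k - i) * ((k.choose i : ℕ) : PowerSeries ℝ)
      = PowerSeries.C ((-1 : ℝ) ^ i * (k.choose i : ℝ)) * rfSeries (-(i : ℝ) * σ) := by
    rw [neg_pow, rfSeries_pow, show (i : ℝ) * -σ = -(i : ℝ) * σ by ring]
    simp
    ring
  rw [h, PowerSeries.coeff_C_mul, rfSeries, PowerSeries.coeff_mk]
  ring

theorem stmt0 (σ : ℝ) (hσ : σ ∈ Set.Ioo (0 : ℝ) 1) (m k : ℕ) (hk : 1 ≤ k) (hkm : k ≤ m) :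
    ∑ n ∈ (Finset.Nat.antidiagonalTuple k m).filter (fun n => ∀ i, 0 < n i),
      (1 / (k.factorial : ℝ)) * ((m.factorial : ℝ) / ∏ i, ((n i).factorial : ℝ)) *
        ∏ i, risingFactorial (1 - σ) (n i - 1)
      = σ ^ (-(k : ℤ)) * genFactCoeff m k σ := by
  have hσ0 : σ ≠ 0 := ne_of_gt hσ.1
  have h1 := coeff_binom σ m k
  rw [coeff_pow_tuple] at h1
  have hm : (m.factorial : ℝ) ≠ 0 := by positivity
  rw [eq_div_iff hm] at h1
  rw [genFactCoeff, ← h1, Finset.sum_filter, Finset.sum_mul, Finset.mul_sum, Finset.mul_sum]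
  refine Finset.sum_congr rfl fun n _ => ?_
  simp only [coeff_one_sub]
  split_ifs with hn
  · simp only [hn, if_true, Finset.prod_mul_distrib, Finset.prod_div_distrib, Finset.prod_const,
      Finset.card_univ, Fintype.card_fin, zpow_neg, zpow_natCast]
    field_simp
  · push Not at hn
    obtain ⟨i, hi⟩ := hn
    rw [Finset.prod_eq_zero (Finset.mem_univ i) (if_neg (by omega))]
    simp
end

section
/- Let σ ∈ (0,1) be real and let 1 ≤ ℓ ≤ m and 1 ≤ k ≤ m be integers. Then the sum over all k-tuples (n_1,…,n_k) of positive integers with n_1+⋯+n_k = m of (1/k!)·(m!/(n_1!⋯n_k!))·∏_{i=1}^{k}(1−σ)_{(n_i−1)}·#{j ∈ {1,…,k} : n_j = ℓ} equals binom(m,ℓ)·(1−σ)_{(ℓ−1)}·σ^{−(k−1)}·C(m−ℓ, k−1; σ). -/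
open PowerSeries in
noncomputable def auxG (a : ℝ) : PowerSeries ℝ := rescale (-1 : ℝ) (binomialSeries ℝ (-a))

lemma rising_eq (a : ℝ) (n : ℕ) :
    risingFactorial a n = (ascPochhammer ℕ n).smeval a := by
  rw [Polynomial.ascPochhammer_smeval_eq_eval]
  induction n with
  | zero => simp [risingFactorial]
  | succ n ih => rw [risingFactorial, ih, ascPochhammer_succ_eval]

lemma coeff_auxG (a : ℝ) (n : ℕ) :
    PowerSeries.coeff n (auxG a) = risingFactorial a n / n.factorial := by
  have h : (n.factorial : ℝ) ≠ 0 := by positivity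
  rw [auxG, PowerSeries.coeff_rescale, PowerSeries.binomialSeries_coeff, Ring.choose_neg',
    eq_div_iff h, rising_eq, ← Ring.factorial_nsmul_multichoose_eq_ascPochhammer]
  rw [Units.smul_def, Int.coe_negOnePow_natCast]
  have h2 : ((-1 : ℝ) ^ n) * (-1) ^ n = 1 := by rw [← mul_pow]; simp
  simp only [zsmul_eq_mul, nsmul_eq_mul, smul_eq_mul]
  push_cast
  linear_combination (Ring.multichoose a n * n.factorial) * h2

lemma auxG_pow (a : ℝ) (i : ℕ) : auxG a ^ i = auxG (i * a) := by
  induction i with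
  | zero => simp [auxG]
  | succ i ih =>
    rw [pow_succ, ih, auxG, auxG, auxG, ← map_mul, ← PowerSeries.binomialSeries_add]
    congr 2
    push_cast
    ring

lemma rising_neg_succ (σ : ℝ) (n : ℕ) :
    risingFactorial (-σ) (n + 1) = -σ * risingFactorial (1 - σ) n := by
  induction n with
  | zero => simp [risingFactorial]
  | succ n ih =>
    rw [risingFactorial, ih, risingFactorial]
    push_cast
    ring

noncomputable def auxw (σ : ℝ) (n : ℕ) : ℝ :=
  if n = 0 then 0 else risingFactorial (1 - σ) (n - 1) / n.factorial

lemma auxG_eq (σ : ℝ) : σ • PowerSeries.mk (auxw σ) = 1 - auxG (-σ) := by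
  ext n
  rw [map_sub, coeff_auxG, PowerSeries.coeff_smul, PowerSeries.coeff_mk, PowerSeries.coeff_one]
  cases n with
  | zero => simp [auxw, risingFactorial]
  | succ n =>
    rw [rising_neg_succ]
    simp [auxw]
    ring

lemma coeff_pow_auxw (σ : ℝ) (m k : ℕ) :
    σ ^ k * PowerSeries.coeff m (PowerSeries.mk (auxw σ) ^ k) * m.factorial
      = k.factorial * genFactCoeff m k σ := by
  have h : (m.factorial : ℝ) ≠ 0 := by positivity
  have hk : (k.factorial : ℝ) ≠ 0 := by positivity
  have e : σ ^ k * PowerSeries.coeff m (PowerSeries.mk (auxw σ) ^ k)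
      = PowerSeries.coeff m ((1 - auxG (-σ)) ^ k) := by
    rw [← auxG_eq, smul_pow, PowerSeries.coeff_smul]
    rfl
  rw [e, sub_eq_neg_add, add_pow, map_sum, Finset.sum_mul, genFactCoeff, ← mul_assoc,
    mul_one_div_cancel hk, one_mul]
  refine Finset.sum_congr rfl fun i _ => ?_
  have : (-auxG (-σ)) ^ i * 1 ^ (k - i) * (k.choose i : PowerSeries ℝ)
      = ((-1 : ℝ) ^ i * (k.choose i : ℝ)) • auxG (-(i : ℝ) * σ) := by
    rw [neg_pow, auxG_pow, PowerSeries.smul_eq_C_mul]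
    simp
    ring
  rw [this, PowerSeries.coeff_smul, coeff_auxG, smul_eq_mul]
  field_simp

lemma coeff_prod_tuple (k m : ℕ) (F : Fin k → PowerSeries ℝ) :
    ∑ n ∈ Finset.Nat.antidiagonalTuple k m, ∏ i, PowerSeries.coeff (n i) (F i)
      = PowerSeries.coeff m (∏ i, F i) := by
  rw [PowerSeries.coeff_prod]
  refine Finset.sum_bij' (fun n _ => Finsupp.equivFunOnFinite.symm n) (fun l _ => ⇑l)
    ?_ ?_ ?_ ?_ ?_
  · intro n hn
    simpa [Finset.Nat.mem_antidiagonalTuple] using hn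
  · intro l hl
    simpa [Finset.Nat.mem_antidiagonalTuple] using hl
  · intro n hn
    rfl
  · intro l hl
    ext; rfl
  · intro n hn
    rfl

lemma sum_single (σ : ℝ) (k m ℓ : ℕ) (hℓm : ℓ ≤ m) (j : Fin (k + 1)) :
    ∑ n ∈ Finset.Nat.antidiagonalTuple (k + 1) m,
      (∏ i, auxw σ (n i)) * (if n j = ℓ then 1 else 0)
    = auxw σ ℓ * PowerSeries.coeff (m - ℓ) (PowerSeries.mk (auxw σ) ^ k) := by
  have key := coeff_prod_tuple (k + 1) m
    (fun i => if i = j then PowerSeries.X ^ ℓ * PowerSeries.C (auxw σ ℓ) else PowerSeries.mk (auxw σ))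
  rw [← Finset.mul_prod_erase _ _ (Finset.mem_univ j)] at key
  rw [Finset.prod_congr (g := fun _ => PowerSeries.mk (auxw σ)) rfl
    (fun i hi => by simp [Finset.ne_of_mem_erase hi])] at key
  simp only [if_true, Finset.prod_const, Finset.card_erase_of_mem (Finset.mem_univ j),
    Finset.card_univ, Fintype.card_fin, Nat.add_sub_cancel] at key
  rw [mul_assoc,
    PowerSeries.coeff_X_pow_mul', if_pos hℓm, PowerSeries.coeff_C_mul] at key
  rw [← key]
  refine Finset.sum_congr rfl fun n _ => ?_
  rw [← Finset.mul_prod_erase _ _ (Finset.mem_univ j),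
    ← Finset.mul_prod_erase Finset.univ (fun i => PowerSeries.coeff (n i) _) (Finset.mem_univ j)]
  rw [Finset.prod_congr (s₁ := Finset.univ.erase j) (g := fun i => auxw σ (n i))
    (f := fun i => PowerSeries.coeff (n i) _) rfl
    (fun i hi => by simp [Finset.ne_of_mem_erase hi])]
  simp only [if_true, PowerSeries.coeff_mul_C, PowerSeries.coeff_X_pow]
  split_ifs with h
  · rw [h]; ring
  · ring

theorem stmt1 (σ : ℝ) (hσ : σ ∈ Set.Ioo (0 : ℝ) 1) (m k ℓ : ℕ)
    (hℓ : 1 ≤ ℓ) (hℓm : ℓ ≤ m) (hk : 1 ≤ k) (hkm : k ≤ m) :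
    ∑ n ∈ (Finset.Nat.antidiagonalTuple k m).filter (fun n => ∀ i, 0 < n i),
      (1 / (k.factorial : ℝ)) * ((m.factorial : ℝ) / ∏ i, ((n i).factorial : ℝ)) *
        (∏ i, risingFactorial (1 - σ) (n i - 1)) *
        ((Finset.univ.filter (fun j => n j = ℓ)).card : ℝ)
      = (m.choose ℓ : ℝ) * risingFactorial (1 - σ) (ℓ - 1) *
          σ ^ (-((k : ℤ) - 1)) * genFactCoeff (m - ℓ) (k - 1) σ := by
  obtain ⟨k, rfl⟩ : ∃ k', k = k' + 1 := ⟨k - 1, by omega⟩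
  have hσ0 : σ ≠ 0 := hσ.1.ne'
  have hkf : (k.factorial : ℝ) ≠ 0 := by positivity
  have h1 : ∑ n ∈ (Finset.Nat.antidiagonalTuple (k + 1) m).filter (fun n => ∀ i, 0 < n i),
      (1 / ((k + 1).factorial : ℝ)) * ((m.factorial : ℝ) / ∏ i, ((n i).factorial : ℝ)) *
        (∏ i, risingFactorial (1 - σ) (n i - 1)) *
        ((Finset.univ.filter (fun j => n j = ℓ)).card : ℝ)
      = ∑ n ∈ Finset.Nat.antidiagonalTuple (k + 1) m,
        ∑ j : Fin (k + 1), (m.factorial / (k + 1).factorial : ℝ) *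
          ((∏ i, auxw σ (n i)) * (if n j = ℓ then 1 else 0)) := by
    rw [Finset.sum_filter]
    refine Finset.sum_congr rfl fun n _ => ?_
    rw [← Finset.mul_sum, ← Finset.mul_sum, Finset.sum_boole]
    split_ifs with h
    · have : ∏ i, auxw σ (n i)
          = (∏ i, risingFactorial (1 - σ) (n i - 1)) / ∏ i, ((n i).factorial : ℝ) := by
        rw [← Finset.prod_div_distrib]
        exact Finset.prod_congr rfl fun i _ => by simp [auxw, (h i).ne']
      rw [this]
      ring
    · push Not at h
      obtain ⟨i, hi⟩ := h
      rw [Finset.prod_eq_zero (Finset.mem_univ i) (by simp [auxw]; omega)]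
      ring
  rw [h1, Finset.sum_comm]
  simp only [← Finset.mul_sum, sum_single σ k m ℓ hℓm]
  have h2 := coeff_pow_auxw σ (m - ℓ) k
  have h3 : (m.factorial : ℝ) = m.choose ℓ * ℓ.factorial * (m - ℓ).factorial := by
    exact_mod_cast (Nat.choose_mul_factorial_mul_factorial hℓm).symm
  have h4 : auxw σ ℓ * ℓ.factorial = risingFactorial (1 - σ) (ℓ - 1) := by
    have : (ℓ.factorial : ℝ) ≠ 0 := by positivity
    rw [auxw, if_neg (by omega)]
    field_simp
  have h5 : σ ^ (-(((k + 1 : ℕ) : ℤ) - 1)) = (σ ^ k)⁻¹ := by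
    rw [← zpow_natCast, ← zpow_neg]
    congr 1
    push_cast
    ring
  have h6 : genFactCoeff (m - ℓ) k σ = σ ^ k * PowerSeries.coeff (m - ℓ)
      (PowerSeries.mk (auxw σ) ^ k) * (m - ℓ).factorial / k.factorial := by
    rw [h2]; field_simp
  rw [h5, Nat.add_sub_cancel, h6, ← h4, h3, Nat.factorial_succ, Finset.sum_const,
    Finset.card_univ, Fintype.card_fin, nsmul_eq_mul]
  have : ((k : ℝ) + 1) ≠ 0 := by positivity
  push_cast
  field_simp
end

section
/- For integers 1 ≤ k ≤ m, the limit as σ → 0⁺ of σ^{−k}·C(m,k;σ) equals |s(m,k)|, the signless Stirling number of the first kind, i.e. the coefficient of x^k in the polynomial x(x+1)⋯(x+m−1). -/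
theorem risingFactorial_eq_eval (x : ℝ) (m : ℕ) :
    risingFactorial x m = (ascPochhammer ℝ m).eval x := by
  induction m with
  | zero => simp [risingFactorial]
  | succ n ih => rw [risingFactorial, ih, ascPochhammer_succ_eval]

theorem altSum_eq (k j : ℕ) :
    ∑ i ∈ Finset.range (k + 1), (-1 : ℝ) ^ i * (k.choose i : ℝ) * (-(i : ℝ)) ^ j
      = (-1) ^ j * (-1) ^ k * ((fwdDiff (1 : ℝ))^[k] (fun r : ℝ => r ^ j) 0) := by
  rw [fwdDiff_iter_eq_sum_shift, Finset.mul_sum]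
  refine Finset.sum_congr rfl fun i hi => ?_
  have hi' : i ≤ k := Nat.lt_succ_iff.mp (Finset.mem_range.mp hi)
  obtain ⟨d, rfl⟩ := Nat.exists_eq_add_of_le hi'
  have h1 : ((-1 : ℝ) ^ d) * (-1) ^ d = 1 := by
    rw [← mul_pow]; norm_num
  rw [neg_pow (i : ℝ) j]
  simp only [zsmul_eq_mul, nsmul_eq_mul, Nat.add_sub_cancel_left, pow_add]
  push_cast
  simp only [mul_one, zero_add]
  linear_combination (-(-1 : ℝ) ^ i * ((i + d).choose i : ℝ) * (-1) ^ j * (i : ℝ) ^ j) * h1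

theorem altSum_lt (k j : ℕ) (h : j < k) :
    ∑ i ∈ Finset.range (k + 1), (-1 : ℝ) ^ i * (k.choose i : ℝ) * (-(i : ℝ)) ^ j = 0 := by
  rw [altSum_eq, fwdDiff_iter_pow_eq_zero_of_lt h]; simp

theorem altSum_self (k : ℕ) :
    ∑ i ∈ Finset.range (k + 1), (-1 : ℝ) ^ i * (k.choose i : ℝ) * (-(i : ℝ)) ^ k
      = k.factorial := by
  rw [altSum_eq, fwdDiff_iter_eq_factorial, ← mul_pow]; simp

/-- As `σ → 0⁺`, `σ^{-k} C(m,k;σ)` converges to the signless Stirling number of the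
first kind `|s(m,k)|`, i.e. the coefficient of `x^k` in `x (x+1) ⋯ (x+m-1)`. -/
theorem stmt2 (m k : ℕ) (hk : 1 ≤ k) (hkm : k ≤ m) :
    Filter.Tendsto (fun σ : ℝ => σ ^ (-(k : ℤ)) * genFactCoeff m k σ)
      (nhdsWithin 0 (Set.Ioi 0))
      (nhds ((ascPochhammer ℝ m).coeff k)) := by
  set a := fun j => (ascPochhammer ℝ m).coeff j with ha
  set S := fun j : ℕ =>
    ∑ i ∈ Finset.range (k + 1), (-1 : ℝ) ^ i * (k.choose i : ℝ) * (-(i : ℝ)) ^ j with hS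
  have hf : (k.factorial : ℝ) ≠ 0 := by positivity
  have key : ∀ σ : ℝ, genFactCoeff m k σ
      = ∑ j ∈ Finset.range (m + 1), 1 / (k.factorial : ℝ) * (a j * S j) * σ ^ j := by
    intro σ
    simp only [genFactCoeff, risingFactorial_eq_eval, Polynomial.eval_eq_sum_range,
      ascPochhammer_natDegree, hS, ha, Finset.mul_sum, Finset.sum_mul]
    rw [Finset.sum_comm]
    refine Finset.sum_congr rfl fun j _ => Finset.sum_congr rfl fun i _ => ?_
    rw [mul_pow]; ring
  set g := fun σ : ℝ => ∑ j ∈ Finset.range (m + 1),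
    1 / (k.factorial : ℝ) * (a j * S j) * σ ^ (j - k) with hg
  have hg0 : g 0 = a k := by
    simp only [hg]
    rw [Finset.sum_eq_single k]
    · have : S k = k.factorial := altSum_self k
      rw [this]; simp; field_simp
    · intro j _ hj
      rcases lt_or_gt_of_ne hj with h | h
      · have : S j = 0 := altSum_lt k j h
        simp [this]
      · rw [zero_pow (by omega), mul_zero]
    · intro h; exact absurd (Finset.mem_range.mpr (by omega)) h
  have hc : Continuous g := by simp only [hg]; fun_prop
  have ht : Filter.Tendsto g (nhdsWithin 0 (Set.Ioi 0)) (nhds (a k)) := by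
    rw [← hg0]; exact hc.continuousAt.tendsto.mono_left nhdsWithin_le_nhds
  refine ht.congr' ?_
  filter_upwards [self_mem_nhdsWithin] with σ hσ
  have hσ0 : σ ≠ 0 := ne_of_gt hσ
  rw [key, Finset.mul_sum]
  refine Finset.sum_congr rfl fun j _ => ?_
  rcases lt_or_ge j k with h | h
  · have : S j = 0 := altSum_lt k j h
    simp [this]
  · obtain ⟨d, rfl⟩ := Nat.exists_eq_add_of_le h
    rw [Nat.add_sub_cancel_left, zpow_neg, zpow_natCast, pow_add]
    field_simp
end

section
/- Let α > 0 and let 1 ≤ k ≤ m be integers. Then lim_{σ→0⁺} ((α·2^{σ−1})^k / Γ(m)) · ∫_0^∞ x^{m−1}·(1/2 + x)^{−(m − kσ)}·exp( −(α·2^{σ−1}/σ)·[ (1/2 + x)^σ − 2^{−σ} ] ) dx = (α/2)^k / (α/2)_{(m)}, where (α/2)_{(m)} is the rising factorial. -/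
open MeasureTheory Real

lemma aux_integrable (b : ℝ) (hb : 0 < b) :
    IntegrableOn (fun x : ℝ => ((1 / 2 : ℝ) + x) ^ (-(1 + b))) (Set.Ioi 0) := by
  have := integrableOn_add_rpow_Ioi_of_lt (a := -(1 + b)) (c := 0) (m := 1 / 2)
    (by linarith) (by norm_num)
  simpa only [add_comm] using this

lemma aux_le (n : ℕ) (s x : ℝ) (hx : 0 ≤ x) :
    x ^ n * ((1 / 2 : ℝ) + x) ^ (-(n + s)) ≤ ((1 / 2 : ℝ) + x) ^ (-s) := by
  have hu : (0 : ℝ) < 1 / 2 + x := by linarith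
  have h1 : x ^ n ≤ (1 / 2 + x) ^ n := pow_le_pow_left₀ hx (by linarith) n
  calc _ ≤ (1 / 2 + x) ^ n * ((1 / 2 : ℝ) + x) ^ (-(n + s)) :=
        mul_le_mul_of_nonneg_right h1 (rpow_nonneg hu.le _)
    _ = _ := by
        rw [← rpow_natCast, ← rpow_add hu]
        congr 1
        ring

lemma aux_int_n (a : ℝ) (ha : 0 < a) (n : ℕ) :
    IntegrableOn (fun x : ℝ => x ^ n * ((1 / 2 : ℝ) + x) ^ (-(n + (1 + a)))) (Set.Ioi 0) := by
  refine Integrable.mono' (aux_integrable a ha) ?_ ?_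
  · exact (by fun_prop : Measurable
      (fun x : ℝ => x ^ n * ((1 / 2 : ℝ) + x) ^ (-(n + (1 + a))))).aestronglyMeasurable
  · refine (ae_restrict_iff' measurableSet_Ioi).2 (Filter.Eventually.of_forall fun x hx => ?_)
    have hx' : (0 : ℝ) < x := hx
    rw [Real.norm_of_nonneg (by positivity)]
    exact aux_le n (1 + a) x hx'.le

lemma aux_rf_pos (a : ℝ) (ha : 0 < a) (n : ℕ) : 0 < risingFactorial a n := by
  induction n with
  | zero => simp [risingFactorial]
  | succ n ih => rw [risingFactorial]; positivity

lemma aux_tendsto (a : ℝ) (ha : 0 < a) :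
    Filter.Tendsto (fun x : ℝ => ((1 / 2 : ℝ) + x) ^ (-a)) Filter.atTop (nhds 0) :=
  (tendsto_rpow_neg_atTop ha).comp (Filter.tendsto_atTop_add_const_left _ _ Filter.tendsto_id)

lemma aux_beta (a : ℝ) (ha : 0 < a) (n : ℕ) :
    ∫ x in Set.Ioi (0 : ℝ), x ^ n * ((1 / 2 : ℝ) + x) ^ (-(n + (1 + a))) =
      2 ^ a * n.factorial / risingFactorial a (n + 1) := by
  induction n with
  | zero =>
    have hd : ∀ x ∈ Set.Ici (0 : ℝ), HasDerivAt (fun x : ℝ => -(1 / a) * ((1 / 2 : ℝ) + x) ^ (-a))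
        (x ^ 0 * ((1 / 2 : ℝ) + x) ^ (-(((0 : ℕ) : ℝ) + (1 + a)))) x := by
      intro x hx
      have hx' : (0 : ℝ) ≤ x := hx
      have h := ((((hasDerivAt_id x).const_add (1 / 2 : ℝ)).rpow_const (p := -a)
        (Or.inl (by simp only [id]; positivity))).const_mul (-(1 / a)))
      refine h.congr_deriv ?_
      simp only [id, pow_zero, one_mul, Nat.cast_zero, zero_add]
      rw [show -(1 + a) = -a - 1 by ring]
      field_simp
    have h := integral_Ioi_of_hasDerivAt_of_tendsto' hd (aux_int_n a ha 0)
      ((aux_tendsto a ha).const_mul (-(1 / a)))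
    rw [h]
    have : ((1 / 2 : ℝ) + 0) ^ (-a) = 2 ^ a := by
      rw [add_zero, one_div, inv_rpow (by norm_num), rpow_neg (by norm_num), inv_inv]
    rw [this]
    simp [risingFactorial]
    field_simp
  | succ n ih =>
    have hd : ∀ x ∈ Set.Ici (0 : ℝ), HasDerivAt
        (fun x : ℝ => x ^ (n + 1) * ((1 / 2 : ℝ) + x) ^ (-(((n + 1 : ℕ) : ℝ) + a)))
        ((n + 1) * (x ^ n * ((1 / 2 : ℝ) + x) ^ (-(n + (1 + a)))) -
          (a + (n + 1)) *
            (x ^ (n + 1) * ((1 / 2 : ℝ) + x) ^ (-(((n + 1 : ℕ) : ℝ) + (1 + a))))) x := by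
      intro x hx
      have hx' : (0 : ℝ) ≤ x := hx
      have h := (hasDerivAt_pow (n + 1) x).mul
        (((hasDerivAt_id x).const_add (1 / 2 : ℝ)).rpow_const (p := -(((n + 1 : ℕ) : ℝ) + a))
        (Or.inl (by simp only [id]; positivity)))
      refine h.congr_deriv ?_
      simp only [id, Nat.add_sub_cancel]
      push_cast
      rw [show -((n : ℝ) + 1 + (1 + a)) = -(n + 1 + a) - 1 by ring,
        show -((n : ℝ) + (1 + a)) = -(n + 1 + a) by ring]
      ring
    have hi1 := (aux_int_n a ha n).const_mul ((n : ℝ) + 1)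
    have hi2 := (aux_int_n a ha (n + 1)).const_mul (a + ((n : ℝ) + 1))
    have ht : Filter.Tendsto
        (fun x : ℝ => x ^ (n + 1) * ((1 / 2 : ℝ) + x) ^ (-(((n + 1 : ℕ) : ℝ) + a)))
        Filter.atTop (nhds 0) := by
      refine squeeze_zero' ?_ ?_ (aux_tendsto a ha)
      · filter_upwards [Filter.eventually_ge_atTop (0 : ℝ)] with x hx
        positivity
      · filter_upwards [Filter.eventually_ge_atTop (0 : ℝ)] with x hx
        exact aux_le (n + 1) a x hx
    have h := integral_Ioi_of_hasDerivAt_of_tendsto' hd (hi1.sub hi2) ht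
    rw [integral_sub hi1 hi2, integral_const_mul, integral_const_mul, ih] at h
    have hp := aux_rf_pos a ha (n + 1)
    have hn : (0 : ℝ) < a + (n + 1) := by positivity
    rw [risingFactorial, Nat.factorial_succ]
    push_cast at h ⊢
    simp only [ne_eq, Nat.add_eq_zero_iff, one_ne_zero, and_false, not_false_eq_true, zero_pow,
      zero_mul, sub_zero] at h
    rw [eq_div_iff (by positivity)]
    generalize (∫ x in Set.Ioi (0 : ℝ),
      x ^ (n + 1) * ((1 / 2 : ℝ) + x) ^ (-((n : ℝ) + 1 + (1 + a)))) = I at h ⊢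
    field_simp at h
    linarith

lemma aux_exponent (α σ x : ℝ) (hx : 0 < x) :
    -(α * (2 : ℝ) ^ (σ - 1) / σ) * (((1 / 2 : ℝ) + x) ^ σ - (2 : ℝ) ^ (-σ)) =
      -(α / 2) * (σ⁻¹ * (exp (σ * (log 2 + log (1 / 2 + x))) - 1)) := by
  have hu : (0 : ℝ) < 1 / 2 + x := by linarith
  have h2 : (2 : ℝ) ^ (σ - 1) = exp (σ * log 2) / 2 := by
    rw [rpow_sub_one (by norm_num), rpow_def_of_pos (by norm_num), mul_comm]
  have h3 : (2 : ℝ) ^ (-σ) = (exp (σ * log 2))⁻¹ := by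
    rw [rpow_def_of_pos (by norm_num), ← exp_neg]; congr 1; ring
  have h4 : ((1 / 2 : ℝ) + x) ^ σ = exp (σ * log (1 / 2 + x)) := by
    rw [rpow_def_of_pos hu, mul_comm]
  rw [h2, h3, h4, mul_add, exp_add]
  have := (exp_pos (σ * log 2)).ne'
  field_simp

lemma aux_slope (M : ℝ) :
    Filter.Tendsto (fun σ : ℝ => σ⁻¹ * (exp (σ * M) - 1)) (nhdsWithin 0 (Set.Ioi 0)) (nhds M) := by
  have h : HasDerivAt (fun σ : ℝ => exp (σ * M)) M 0 := by
    simpa using ((hasDerivAt_id (0 : ℝ)).mul_const M).exp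
  have h2 := (hasDerivAt_iff_tendsto_slope_zero.1 h).mono_left
    (nhdsWithin_mono 0 (show Set.Ioi (0 : ℝ) ⊆ {0}ᶜ from fun x hx => ne_of_gt hx))
  simpa using h2

lemma aux_bound (α : ℝ) (hα : 0 < α) (n k : ℕ) (σ x : ℝ) (hσ : 0 < σ) (hk : k * σ ≤ α / 4)
    (hx : 0 < x) :
    x ^ n * ((1 / 2 : ℝ) + x) ^ (-(((n + 1 : ℕ) : ℝ) - k * σ)) *
      exp (-(α * (2 : ℝ) ^ (σ - 1) / σ) * (((1 / 2 : ℝ) + x) ^ σ - (2 : ℝ) ^ (-σ))) ≤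
    exp (-(α / 4) * log 2) * ((1 / 2 : ℝ) + x) ^ (-(1 + α / 4)) := by
  have hu : (0 : ℝ) < 1 / 2 + x := by linarith
  have hM : 0 ≤ log 2 + log (1 / 2 + x) := by
    rw [← log_mul (by norm_num) hu.ne']
    exact log_nonneg (by linarith)
  have hl2 : 0 ≤ log 2 := log_nonneg (by norm_num)
  have hE : log 2 + log (1 / 2 + x) ≤ σ⁻¹ * (exp (σ * (log 2 + log (1 / 2 + x))) - 1) := by
    rw [inv_mul_eq_div, le_div_iff₀ hσ]
    linarith [add_one_le_exp (σ * (log 2 + log (1 / 2 + x)))]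
  rw [aux_exponent α σ x hx]
  have h1 := aux_le n (1 - k * σ) x hx.le
  rw [show -((n : ℝ) + (1 - k * σ)) = -(((n + 1 : ℕ) : ℝ) - k * σ) by push_cast; ring] at h1
  refine (mul_le_mul_of_nonneg_right h1 (exp_pos _).le).trans ?_
  rw [rpow_def_of_pos hu, rpow_def_of_pos hu, ← exp_add, ← exp_add, exp_le_exp]
  set L := log (1 / 2 + x)
  have e1 : (α / 2) * (log 2 + L) ≤ (α / 2) * (σ⁻¹ * (exp (σ * (log 2 + L)) - 1)) :=
    mul_le_mul_of_nonneg_left hE (by positivity)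
  have e2 : k * σ * (log 2 + L) ≤ α / 4 * (log 2 + L) := mul_le_mul_of_nonneg_right hk hM
  have e3 : 0 ≤ k * σ * log 2 := by positivity
  nlinarith

/-- As `σ → 0⁺`, the NGGP weight `V_{m,k}` converges to the Dirichlet process
(Ewens) weight `(α/2)^k / (α/2)_(m)`. -/
theorem stmt3 (α : ℝ) (hα : 0 < α) (m k : ℕ) (hk : 1 ≤ k) (hkm : k ≤ m) :
    Filter.Tendsto
      (fun σ : ℝ =>
        ((α * (2 : ℝ) ^ (σ - 1)) ^ k / Real.Gamma m) *
          ∫ x in Set.Ioi (0 : ℝ),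
            x ^ (m - 1) * ((1 / 2 : ℝ) + x) ^ (-((m : ℝ) - k * σ)) *
              Real.exp (-(α * (2 : ℝ) ^ (σ - 1) / σ) *
                (((1 / 2 : ℝ) + x) ^ σ - (2 : ℝ) ^ (-σ))))
      (nhdsWithin 0 (Set.Ioi 0))
      (nhds ((α / 2) ^ k / risingFactorial (α / 2) m)) := by
  obtain ⟨n, rfl⟩ : ∃ n, m = n + 1 := ⟨m - 1, by omega⟩
  have ha : 0 < α / 2 := by positivity
  have hmain : Filter.Tendsto (fun σ : ℝ => ∫ x in Set.Ioi (0 : ℝ),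
      x ^ (n + 1 - 1) * ((1 / 2 : ℝ) + x) ^ (-(((n + 1 : ℕ) : ℝ) - k * σ)) *
        Real.exp (-(α * (2 : ℝ) ^ (σ - 1) / σ) *
          (((1 / 2 : ℝ) + x) ^ σ - (2 : ℝ) ^ (-σ))))
      (nhdsWithin 0 (Set.Ioi 0))
      (nhds (∫ x in Set.Ioi (0 : ℝ), exp (-(α / 2) * log 2) *
        (x ^ n * ((1 / 2 : ℝ) + x) ^ (-(n + (1 + α / 2)))))) := by
    simp only [Nat.add_sub_cancel]
    refine tendsto_integral_filter_of_dominated_convergence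
      (fun x => exp (-(α / 4) * log 2) * ((1 / 2 : ℝ) + x) ^ (-(1 + α / 4))) ?_ ?_ ?_ ?_
    · refine Filter.Eventually.of_forall fun σ => Measurable.aestronglyMeasurable ?_
      fun_prop
    · have hk0 : (0 : ℝ) < k := by exact_mod_cast hk
      filter_upwards [Ioo_mem_nhdsGT (show (0 : ℝ) < α / 4 / k by positivity)] with σ hσ
      refine (ae_restrict_iff' measurableSet_Ioi).2 (Filter.Eventually.of_forall fun x hx => ?_)
      have hx' : (0 : ℝ) < x := hx
      rw [Real.norm_of_nonneg (by positivity)]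
      refine aux_bound α hα n k σ x hσ.1 ?_ hx'
      have := (lt_div_iff₀ hk0).1 hσ.2
      linarith
    · exact (aux_integrable (α / 4) (by positivity)).const_mul _
    · refine (ae_restrict_iff' measurableSet_Ioi).2 (Filter.Eventually.of_forall fun x hx => ?_)
      have hx' : (0 : ℝ) < x := hx
      have hu : (0 : ℝ) < 1 / 2 + x := by linarith
      simp only [aux_exponent α _ x hx']
      have t1 := ((aux_slope (log 2 + log (1 / 2 + x))).const_mul (-(α / 2))).rexp
      have t2 : Filter.Tendsto (fun σ : ℝ => ((1 / 2 : ℝ) + x) ^ (-(((n + 1 : ℕ) : ℝ) - k * σ)))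
          (nhdsWithin 0 (Set.Ioi 0))
          (nhds (((1 / 2 : ℝ) + x) ^ (-(((n + 1 : ℕ) : ℝ) - k * 0)))) := by
        refine Filter.Tendsto.mono_left ?_ nhdsWithin_le_nhds
        refine Continuous.tendsto (f := fun σ : ℝ =>
          ((1 / 2 : ℝ) + x) ^ (-(((n + 1 : ℕ) : ℝ) - k * σ))) ?_ 0
        exact Continuous.rpow continuous_const (by fun_prop) (fun _ => Or.inl hu.ne')
      have t3 := (t2.const_mul (x ^ n)).mul t1
      convert t3 using 2
      rw [rpow_def_of_pos hu, rpow_def_of_pos hu, mul_assoc, mul_left_comm, ← exp_add, ← exp_add]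
      congr 2
      push_cast
      ring
  have hpre : Filter.Tendsto (fun σ : ℝ => (α * (2 : ℝ) ^ (σ - 1)) ^ k /
      Real.Gamma ((n + 1 : ℕ) : ℝ))
      (nhdsWithin 0 (Set.Ioi 0)) (nhds ((α / 2) ^ k / n.factorial)) := by
    have hc : Continuous (fun σ : ℝ => (α * (2 : ℝ) ^ (σ - 1)) ^ k /
        Real.Gamma ((n + 1 : ℕ) : ℝ)) := by
      refine Continuous.div_const (Continuous.pow (Continuous.mul continuous_const ?_) k) _
      exact Continuous.rpow continuous_const (by fun_prop) (fun _ => Or.inl (by norm_num))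
    have h := (hc.tendsto 0).mono_left (nhdsWithin_le_nhds (s := Set.Ioi 0))
    convert h using 2
    push_cast
    rw [Real.Gamma_nat_eq_factorial, zero_sub, rpow_neg_one, div_eq_mul_inv α]
  have h := hpre.mul hmain
  convert h using 2
  rw [integral_const_mul, aux_beta (α / 2) ha n, rpow_def_of_pos (by norm_num : (0 : ℝ) < 2)]
  have hp := (aux_rf_pos (α / 2) ha (n + 1)).ne'
  have hf : (n.factorial : ℝ) ≠ 0 := by positivity
  rw [show -(α / 2) * log 2 = -(log 2 * (α / 2)) by ring, exp_neg]
  have := (exp_pos (log 2 * (α / 2))).ne'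
  field_simp
end

section
/- Let α > 0 and let m ≥ 1 be an integer. Then Σ_{k=1}^{m} V^{1/2}_{m+1,k+1}(α)·2^{k}·C(m,k;1/2) = (1/(2√π))·∫_0^∞ ∫_0^1 h^{−1/2}·f_{1/2}(h·p)·exp(−h·α² + α)·p^{m}·(1−p)^{−1/2} dp dh, where both sides are the probability that a new token is a previously unseen symbol under the normalized generalized gamma process with σ = 1/2. -/
open MeasureTheory

/-- The NGGP weight `V_{m,k}` with stability parameter `σ = 1/2`:
`V^{1/2}_{m,k}(α) = ((α/√2)^k/Γ(m)) ∫_0^∞ x^{m−1} (1/2+x)^{−(m−k/2)} e^{−α(√(1+2x)−1)} dx`. -/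
noncomputable def Vhalf (m k : ℕ) (α : ℝ) : ℝ :=
  ((α / Real.sqrt 2) ^ k / Real.Gamma m) *
    ∫ x in Set.Ioi (0 : ℝ),
      x ^ (m - 1) * ((1 / 2 : ℝ) + x) ^ (-((m : ℝ) - (k : ℝ) / 2)) *
        Real.exp (-α * (Real.sqrt (1 + 2 * x) - 1))

/-- The positive `1/2`-stable density `f_{1/2}(x) = (1/(2√π)) x^{−3/2} e^{−1/(4x)}`. -/
noncomputable def fHalf (x : ℝ) : ℝ :=
  (1 / (2 * Real.sqrt Real.pi)) * x ^ (-(3 / 2) : ℝ) * Real.exp (-1 / (4 * x))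


open Real Set Filter Topology

noncomputable def gE (z : ℝ) : ℝ := ∫ s in (0:ℝ)..z, Real.exp (-s ^ 2)

lemma gE_deriv (z : ℝ) : HasDerivAt gE (Real.exp (-z ^ 2)) z := by
  have hc : Continuous (fun s : ℝ => Real.exp (-s ^ 2)) := by fun_prop
  exact hc.integral_hasStrictDerivAt 0 z |>.hasDerivAt

lemma gE_top : Tendsto gE atTop (𝓝 (√π / 2)) := by
  have h1 : IntegrableOn (fun s : ℝ => Real.exp (-s ^ 2)) (Ioi 0) := by
    have := (integrable_exp_neg_mul_sq (b := 1) one_pos).integrableOn (s := Ioi 0)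
    simpa using this
  have h2 := intervalIntegral_tendsto_integral_Ioi 0 h1 tendsto_id
  have h3 := integral_gaussian_Ioi 1
  simp only [neg_mul, one_mul, div_one] at h3
  rw [h3] at h2
  exact h2

lemma gE_neg (z : ℝ) : gE (-z) = - gE z := by
  unfold gE
  rw [intervalIntegral.integral_symm]
  have := intervalIntegral.integral_comp_neg (a := 0) (b := z) (fun s : ℝ => Real.exp (-s ^ 2))
  simp only [neg_sq, neg_zero] at this
  rw [this]

lemma gE_bot : Tendsto gE atBot (𝓝 (-(√π / 2))) := by
  have h := (gE_top.comp tendsto_neg_atBot_atTop).neg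
  refine h.congr (fun z => ?_)
  simp [gE_neg]

/-- the Lévy density with scale `α`. -/
noncomputable def levy (α t : ℝ) : ℝ :=
  α / (2 * √π) * t ^ (-(3 / 2) : ℝ) * Real.exp (-α ^ 2 / (4 * t))

lemma levy_nonneg {α t : ℝ} (hα : 0 < α) (ht : 0 < t) : 0 ≤ levy α t := by
  unfold levy; positivity

lemma levy_meas (α : ℝ) : Measurable (levy α) := by
  unfold levy; fun_prop

noncomputable def levyH (α u t : ℝ) : ℝ :=
  -(1 / √π) * (Real.exp (α * √u) * gE (α / 2 * (√t)⁻¹ + √u * √t) +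
    Real.exp (-(α * √u)) * gE (α / 2 * (√t)⁻¹ - √u * √t))

lemma levyH_deriv {α u t : ℝ} (hu : 0 < u) (ht : 0 < t) :
    HasDerivAt (levyH α u) (levy α t * Real.exp (-u * t)) t := by
  have hs : HasDerivAt (fun t : ℝ => √t) (1 / (2 * √t)) t := Real.hasDerivAt_sqrt ht.ne'
  have hst : 0 < √t := Real.sqrt_pos.2 ht
  have hi := hs.inv hst.ne'
  have hA := (hi.const_mul (α / 2)).add (hs.const_mul (√u))
  have hB := (hi.const_mul (α / 2)).sub (hs.const_mul (√u))
  have h1 := ((gE_deriv _).comp t hA).const_mul (Real.exp (α * √u))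
  have h2 := ((gE_deriv _).comp t hB).const_mul (Real.exp (-(α * √u)))
  have h3 := (h1.add h2).const_mul (-(1 / √π))
  refine h3.congr_deriv ?_
  have e1 : Real.exp (α * √u) * Real.exp (-(α / 2 * (√t)⁻¹ + √u * √t) ^ 2)
      = Real.exp (-α ^ 2 / (4 * t)) * Real.exp (-u * t) := by
    rw [← Real.exp_add, ← Real.exp_add]
    congr 1
    have := Real.sq_sqrt hu.le
    have h' := Real.sq_sqrt ht.le
    generalize √u = a at *
    generalize √t = b at *
    subst this h'
    field_simp
    ring
  have e2 : Real.exp (-(α * √u)) * Real.exp (-(α / 2 * (√t)⁻¹ - √u * √t) ^ 2)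
      = Real.exp (-α ^ 2 / (4 * t)) * Real.exp (-u * t) := by
    rw [← Real.exp_add, ← Real.exp_add]
    congr 1
    have := Real.sq_sqrt hu.le
    have h' := Real.sq_sqrt ht.le
    generalize √u = a at *
    generalize √t = b at *
    subst this h'
    field_simp
    ring
  have e3 : t ^ (-(3 / 2) : ℝ) = (√t)⁻¹ ^ 3 := by
    rw [Real.sqrt_eq_rpow, ← Real.rpow_neg ht.le, ← Real.rpow_natCast, ← Real.rpow_mul ht.le]
    norm_num
  simp only [Pi.add_apply, Pi.sub_apply, Pi.inv_apply]
  rw [← mul_assoc, ← mul_assoc, e1, e2, levy, e3]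
  have hp : 0 < √π := Real.sqrt_pos.2 Real.pi_pos
  field_simp
  ring

lemma levy_laplace_aux {α u : ℝ} (hα : 0 < α) (hu : 0 < u) :
    IntegrableOn (fun t => levy α t * Real.exp (-u * t)) (Ioi 0) ∧
    ∫ t in Ioi 0, levy α t * Real.exp (-u * t) = Real.exp (-(α * √u)) := by
  have hp : 0 < √π := Real.sqrt_pos.2 Real.pi_pos
  have hsu : 0 < √u := Real.sqrt_pos.2 hu
  set l0 : ℝ := -(1 / √π) * (Real.exp (α * √u) * (√π / 2) +
    Real.exp (-(α * √u)) * (√π / 2)) with hl0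
  set l1 : ℝ := -(1 / √π) * (Real.exp (α * √u) * (√π / 2) +
    Real.exp (-(α * √u)) * (-(√π / 2))) with hl1
  have hs0 : Tendsto (fun t : ℝ => √t) (𝓝[>] 0) (𝓝 0) := by
    have := (Real.continuous_sqrt.tendsto 0).mono_left (nhdsWithin_le_nhds (s := Ioi 0))
    simpa using this
  have hs0' : Tendsto (fun t : ℝ => √t) (𝓝[>] 0) (𝓝[>] 0) := by
    refine tendsto_nhdsWithin_iff.2 ⟨hs0, ?_⟩
    filter_upwards [self_mem_nhdsWithin] with t ht using Real.sqrt_pos.2 ht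
  have hi0 : Tendsto (fun t : ℝ => α / 2 * (√t)⁻¹) (𝓝[>] 0) atTop :=
    (tendsto_inv_nhdsGT_zero.comp hs0').const_mul_atTop (by positivity)
  have hsi : Tendsto (fun t : ℝ => √u * √t) atTop atTop :=
    Real.tendsto_sqrt_atTop.const_mul_atTop hsu
  have hii : Tendsto (fun t : ℝ => α / 2 * (√t)⁻¹) atTop (𝓝 0) := by
    simpa using (tendsto_inv_atTop_zero.comp Real.tendsto_sqrt_atTop).const_mul (α / 2)
  have hm0 : Tendsto (fun t : ℝ => √u * √t) (𝓝[>] 0) (𝓝 0) := by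
    simpa using hs0.const_mul (√u)
  have T0 : Tendsto (levyH α u) (𝓝[>] 0) (𝓝 l0) := by
    refine Tendsto.const_mul _ (Tendsto.add (Tendsto.const_mul _ ?_) (Tendsto.const_mul _ ?_))
    · exact gE_top.comp (hi0.atTop_add hm0)
    · have := hi0.atTop_add hm0.neg
      exact gE_top.comp (by simpa [sub_eq_add_neg] using this)
  have T1 : Tendsto (levyH α u) atTop (𝓝 l1) := by
    refine Tendsto.const_mul _ (Tendsto.add (Tendsto.const_mul _ ?_) (Tendsto.const_mul _ ?_))
    · exact gE_top.comp (hii.add_atTop hsi)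
    · have := hii.add_atBot (tendsto_neg_atTop_atBot.comp hsi)
      exact gE_bot.comp (by simpa [sub_eq_add_neg] using this)
  have hcont : ContinuousWithinAt (Function.update (levyH α u) 0 l0) (Ici 0) 0 := by
    rw [continuousWithinAt_update_same]
    simpa using T0
  have hd : ∀ t ∈ Ioi (0:ℝ), HasDerivAt (Function.update (levyH α u) 0 l0)
      (levy α t * Real.exp (-u * t)) t := by
    intro t ht
    refine (levyH_deriv hu ht).congr_of_eventuallyEq ?_
    filter_upwards [isOpen_ne.mem_nhds (ne_of_gt ht : t ≠ 0)] with s hs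
    exact Function.update_of_ne hs _ _
  have hnn : ∀ t ∈ Ioi (0:ℝ), 0 ≤ levy α t * Real.exp (-u * t) := fun t ht =>
    mul_nonneg (levy_nonneg hα ht) (Real.exp_pos _).le
  have T1' : Tendsto (Function.update (levyH α u) 0 l0) atTop (𝓝 l1) := by
    refine T1.congr' ?_
    filter_upwards [eventually_gt_atTop 0] with s hs
    exact (Function.update_of_ne hs.ne' _ _).symm
  refine ⟨integrableOn_Ioi_deriv_of_nonneg hcont hd hnn T1', ?_⟩
  rw [integral_Ioi_of_hasDerivAt_of_nonneg hcont hd hnn T1', Function.update_self, hl0, hl1]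
  field_simp
  ring

lemma gfc_rec (m k : ℕ) (σ : ℝ) : genFactCoeff (m + 1) (k + 1) σ =
    (m - (k + 1) * σ) * genFactCoeff m (k + 1) σ + σ * genFactCoeff m k σ := by
  unfold genFactCoeff
  have hk : ((k + 1).factorial : ℝ) = (k + 1) * k.factorial := by
    rw [Nat.factorial_succ]; push_cast; ring
  have hk0 : (k.factorial : ℝ) ≠ 0 := by positivity
  have hk1 : (k : ℝ) + 1 ≠ 0 := by positivity
  have key : ∑ i ∈ Finset.range (k + 1 + 1),
      (-1 : ℝ) ^ i * ((k + 1).choose i : ℝ) * risingFactorial (-(i : ℝ) * σ) (m + 1)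
      = (m - (k + 1) * σ) * (∑ i ∈ Finset.range (k + 1 + 1),
      (-1 : ℝ) ^ i * ((k + 1).choose i : ℝ) * risingFactorial (-(i : ℝ) * σ) m)
      + σ * (k + 1) * ∑ i ∈ Finset.range (k + 1),
      (-1 : ℝ) ^ i * (k.choose i : ℝ) * risingFactorial (-(i : ℝ) * σ) m := by
    have h0 : ∑ i ∈ Finset.range (k + 1),
      (-1 : ℝ) ^ i * (k.choose i : ℝ) * risingFactorial (-(i : ℝ) * σ) m =
      ∑ i ∈ Finset.range (k + 1 + 1),
      (-1 : ℝ) ^ i * (k.choose i : ℝ) * risingFactorial (-(i : ℝ) * σ) m := by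
      rw [Finset.sum_range_succ _ (k + 1)]
      simp
    rw [h0, Finset.mul_sum, Finset.mul_sum, ← Finset.sum_add_distrib]
    refine Finset.sum_congr rfl fun i hi => ?_
    have hi' : i ≤ k + 1 := by simpa [Nat.lt_succ_iff] using hi
    have hc : ((k + 1 : ℝ) - i) * ((k + 1).choose i : ℝ) = (k + 1) * (k.choose i : ℝ) := by
      have h := Nat.choose_mul_succ_eq k i
      have h' : ((k.choose i * (k + 1) : ℕ) : ℝ) = (((k + 1).choose i * (k + 1 - i) : ℕ) : ℝ) := by
        rw [h]
      rw [Nat.cast_mul, Nat.cast_mul, Nat.cast_sub hi'] at h'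
      push_cast at h'
      linarith
    simp only [risingFactorial]
    linear_combination (-1) ^ i * risingFactorial (-(i : ℝ) * σ) m * σ * hc
  rw [key, hk]
  field_simp

lemma gfc_rec0 (m : ℕ) (σ : ℝ) : genFactCoeff (m + 1) 0 σ = m * genFactCoeff m 0 σ := by
  simp [genFactCoeff, risingFactorial]; ring

lemma gfc_zero (m k : ℕ) (h : m < k) (σ : ℝ) : genFactCoeff m k σ = 0 := by
  induction m generalizing k with
  | zero =>
    have := Int.alternating_sum_range_choose_of_ne (n := k) (by omega)
    have h2 : ((∑ i ∈ Finset.range (k + 1), (-1 : ℤ) ^ i * (k.choose i : ℤ) : ℤ) : ℝ) = 0 := by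
      rw [this]; simp
    push_cast at h2
    simp [genFactCoeff, risingFactorial, h2]
  | succ m ih =>
    obtain ⟨k, rfl⟩ : ∃ j, k = j + 1 := ⟨k - 1, by omega⟩
    rw [gfc_rec, ih _ (by omega), ih _ (by omega)]
    ring

lemma gfc_zero' (m : ℕ) (h : 1 ≤ m) (σ : ℝ) : genFactCoeff m 0 σ = 0 := by
  induction m, h using Nat.le_induction with
  | base => rw [gfc_rec0]; simp
  | succ m hm ih => rw [gfc_rec0, ih, mul_zero]

lemma gfc_sum (m : ℕ) (T : ℕ → ℝ) :
    ∑ k ∈ Finset.range (m + 1 + 1), genFactCoeff (m + 1) k (1 / 2) * T k =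
    ∑ k ∈ Finset.range (m + 1), genFactCoeff m k (1 / 2) *
      (1 / 2 * T (k + 1) + (m - k / 2) * T k) := by
  have hg : ∑ k ∈ Finset.range (m + 1), ((m : ℝ) - k / 2) * genFactCoeff m k (1 / 2) * T k =
      ∑ k ∈ Finset.range (m + 1 + 1), ((m : ℝ) - k / 2) * genFactCoeff m k (1 / 2) * T k := by
    rw [Finset.sum_range_succ _ (m + 1), gfc_zero m (m + 1) (by omega)]
    simp
  have h2 : ∑ k ∈ Finset.range (m + 1), genFactCoeff m k (1 / 2) *
      (1 / 2 * T (k + 1) + (m - k / 2) * T k) =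
      ∑ k ∈ Finset.range (m + 1), 1 / 2 * genFactCoeff m k (1 / 2) * T (k + 1) +
      ∑ k ∈ Finset.range (m + 1), ((m : ℝ) - k / 2) * genFactCoeff m k (1 / 2) * T k := by
    rw [← Finset.sum_add_distrib]
    exact Finset.sum_congr rfl fun k _ => by ring
  rw [h2, hg, Finset.sum_range_succ', Finset.sum_range_succ' _ (m + 1), gfc_rec0, ← add_assoc,
    ← Finset.sum_add_distrib]
  congr 1
  · refine Finset.sum_congr rfl fun k _ => ?_
    rw [gfc_rec]; push_cast; ring
  · simp

noncomputable def levyP (α : ℝ) (m : ℕ) (u : ℝ) : ℝ :=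
  Real.exp (-(α * √u)) * ∑ k ∈ Finset.range (m + 1),
    genFactCoeff m k (1 / 2) * (α ^ k * u ^ ((k : ℝ) / 2 - m))

lemma levyP_deriv (α : ℝ) (m : ℕ) {u : ℝ} (hu : 0 < u) :
    HasDerivAt (levyP α m) (-levyP α (m + 1) u) u := by
  have hs : HasDerivAt (fun t : ℝ => √t) (1 / (2 * √u)) u := Real.hasDerivAt_sqrt hu.ne'
  have h1 := ((hs.const_mul α).neg).exp
  have h2 : HasDerivAt (fun u : ℝ => ∑ k ∈ Finset.range (m + 1),
      genFactCoeff m k (1 / 2) * (α ^ k * u ^ ((k : ℝ) / 2 - m)))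
      (∑ k ∈ Finset.range (m + 1),
      genFactCoeff m k (1 / 2) * (α ^ k * (((k : ℝ) / 2 - m) * u ^ ((k : ℝ) / 2 - m - 1)))) u := by
    refine HasDerivAt.fun_sum fun k _ => ?_
    exact ((Real.hasDerivAt_rpow_const (Or.inl hu.ne')).const_mul _).const_mul _
  refine (h1.mul h2).congr_deriv ?_
  simp only [levyP, Pi.neg_apply]
  rw [gfc_sum m (fun k => α ^ k * u ^ ((k : ℝ) / 2 - ((m + 1 : ℕ) : ℝ))), mul_assoc, ← mul_add,
    ← mul_neg (Real.exp _)]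
  congr 1
  rw [Finset.mul_sum, ← Finset.sum_add_distrib, ← Finset.sum_neg_distrib]
  refine Finset.sum_congr rfl fun k _ => ?_
  have e1 : u ^ ((k : ℝ) / 2 - m - 1) = u ^ ((k : ℝ) / 2 - ((m + 1 : ℕ) : ℝ)) := by
    congr 1; push_cast; ring
  have e2 : u ^ (((k + 1 : ℕ) : ℝ) / 2 - ((m + 1 : ℕ) : ℝ)) =
      u ^ ((k : ℝ) / 2 - m) * (√u)⁻¹ := by
    rw [Real.sqrt_eq_rpow, ← Real.rpow_neg hu.le, ← Real.rpow_add hu]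
    congr 1; push_cast; ring
  simp only [e1, e2]
  have : 0 < √u := Real.sqrt_pos.2 hu
  field_simp
  ring

noncomputable def levyM (α : ℝ) : Measure ℝ :=
  (volume.restrict (Ioi 0)).withDensity (fun t => ENNReal.ofReal (levy α t))

lemma levyM_integrable {α : ℝ} (hα : 0 < α) (g : ℝ → ℝ) :
    Integrable g (levyM α) ↔ IntegrableOn (fun t => levy α t * g t) (Ioi 0) := by
  unfold levyM
  rw [integrable_withDensity_iff_integrable_smul' (levy_meas α).ennreal_ofReal (by simp)]
  refine integrable_congr ?_
  filter_upwards [ae_restrict_mem measurableSet_Ioi] with t ht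
  rw [ENNReal.toReal_ofReal (levy_nonneg hα ht), smul_eq_mul]

lemma levyM_integral {α : ℝ} (hα : 0 < α) (g : ℝ → ℝ) :
    ∫ t, g t ∂(levyM α) = ∫ t in Ioi 0, levy α t * g t := by
  unfold levyM
  rw [integral_withDensity_eq_integral_toReal_smul (levy_meas α).ennreal_ofReal (by simp)]
  refine setIntegral_congr_fun measurableSet_Ioi fun t ht => ?_
  simp only [ENNReal.toReal_ofReal (levy_nonneg hα ht), smul_eq_mul]

lemma levyM_interior {α u : ℝ} (hα : 0 < α) (hu : 0 < u) :
    -u ∈ interior (ProbabilityTheory.integrableExpSet id (levyM α)) := by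
  refine mem_interior.2 ⟨Iio 0, ?_, isOpen_Iio, by simpa using hu⟩
  intro v hv
  have hv' : v < 0 := hv
  have := (levy_laplace_aux hα (neg_pos.2 hv')).1
  show Integrable _ _
  rw [levyM_integrable hα]
  simpa using this

lemma levyM_moment {α : ℝ} (hα : 0 < α) (m : ℕ) (u : ℝ) (hu : 0 < u) :
    ∫ t, t ^ m * Real.exp (-u * t) ∂(levyM α) = levyP α m u := by
  induction m generalizing u with
  | zero =>
    rw [levyM_integral hα]
    simpa [levyP, genFactCoeff, risingFactorial] using (levy_laplace_aux hα hu).2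
  | succ m ih =>
    have h1 := ProbabilityTheory.hasDerivAt_integral_pow_mul_exp_real (levyM_interior hα hu) m
    simp only [id] at h1
    have h2 := h1.scomp u (hasDerivAt_neg u)
    have h3 : HasDerivAt (levyP α m) ((-1 : ℝ) • ∫ t, t ^ (m + 1) * Real.exp (-u * t) ∂(levyM α)) u := by
      refine h2.congr_of_eventuallyEq ?_
      filter_upwards [isOpen_Ioi.mem_nhds hu] with v hv
      exact (ih v hv).symm
    have := h3.unique (levyP_deriv α m hu)
    simpa using this

lemma levy_moment {α : ℝ} (hα : 0 < α) (m : ℕ) (u : ℝ) (hu : 0 < u) :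
    ENNReal.ofReal (levyP α m u) =
      ∫⁻ t in Ioi 0, ENNReal.ofReal (levy α t * (t ^ m * Real.exp (-u * t))) := by
  rw [← levyM_moment hα m u hu, levyM_integral hα]
  refine ofReal_integral_eq_lintegral_ofReal ?_ ?_
  · rw [← IntegrableOn, ← levyM_integrable hα]
    simpa using ProbabilityTheory.integrable_pow_mul_exp_of_mem_interior_integrableExpSet
      (levyM_interior hα hu) m
  · filter_upwards [ae_restrict_mem measurableSet_Ioi] with t ht
    have := levy_nonneg hα ht
    have ht' : (0:ℝ) < t := ht
    simp only [Pi.zero_apply]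
    positivity

lemma lint_gamma {a c : ℝ} (ha : 0 < a) (hc : 0 < c) :
    ∫⁻ r in Ioi (0:ℝ), ENNReal.ofReal (r ^ (a - 1) * Real.exp (-(c * r))) =
      ENNReal.ofReal ((1 / c) ^ a * Real.Gamma a) := by
  have key := Real.integral_rpow_mul_exp_neg_mul_Ioi ha hc
  have hG := Real.Gamma_pos_of_pos ha
  have hint : IntegrableOn (fun x ↦ x ^ (a - 1) * Real.exp (-(c * x))) (Ioi 0) :=
    .of_integral_ne_zero (by rw [key]; positivity)
  rw [← key]
  refine (ofReal_integral_eq_lintegral_ofReal hint ?_).symm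
  filter_upwards [ae_restrict_mem measurableSet_Ioi] with t ht
  have ht' : (0:ℝ) < t := ht
  simp only [Pi.zero_apply]
  positivity

lemma kummer (m : ℕ) {t : ℝ} (ht : 0 < t) :
    ENNReal.ofReal (√π) * ∫⁻ y in Ioi (0:ℝ),
      ENNReal.ofReal (y ^ m * Real.exp (-(t * y)) * (1 + y) ^ (-(1 / 2) : ℝ)) =
    ENNReal.ofReal (m.factorial : ℝ) * ∫⁻ r in Ioi (0:ℝ),
      ENNReal.ofReal (Real.exp (-r) * r ^ (-(1 / 2) : ℝ) * ((t + r) ^ (m + 1))⁻¹) := by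
  rw [← lintegral_const_mul' _ _ (by simp), ← lintegral_const_mul' _ _ (by simp)]
  let K : ℝ → ℝ → ENNReal := fun y r =>
    ENNReal.ofReal (y ^ m * r ^ (-(1 / 2) : ℝ) * Real.exp (-(t * y + r + r * y)))
  have hK : Measurable (Function.uncurry K) := by
    unfold K Function.uncurry
    fun_prop
  calc _ = ∫⁻ y in Ioi (0:ℝ), ∫⁻ r in Ioi (0:ℝ), K y r := by
        refine setLIntegral_congr_fun measurableSet_Ioi fun y hy => ?_
        have hy' : (0:ℝ) < y := hy
        have h1 := lint_gamma (a := 1 / 2) (c := 1 + y) (by norm_num) (by positivity)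
        have h2 : ∀ r, K y r = ENNReal.ofReal (y ^ m * Real.exp (-(t * y))) *
            ENNReal.ofReal (r ^ ((1 / 2 : ℝ) - 1) * Real.exp (-((1 + y) * r))) := by
          intro r
          rw [← ENNReal.ofReal_mul (by positivity)]
          unfold K
          congr 1
          rw [show -(t * y + r + r * y) = -(t * y) + -((1 + y) * r) by ring, Real.exp_add]
          norm_num
          ring
        simp only [h2]
        rw [lintegral_const_mul' _ _ (by simp), h1, ← ENNReal.ofReal_mul (by positivity),
          ← ENNReal.ofReal_mul (by positivity)]
        congr 1
        rw [Real.Gamma_one_half_eq, one_div (1 + y), Real.inv_rpow (by positivity),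
          Real.rpow_neg (by positivity)]
        ring
    _ = ∫⁻ r in Ioi (0:ℝ), ∫⁻ y in Ioi (0:ℝ), K y r :=
        lintegral_lintegral_swap hK.aemeasurable
    _ = _ := by
        refine setLIntegral_congr_fun measurableSet_Ioi fun r hr => ?_
        have hr' : (0:ℝ) < r := hr
        have h1 := lint_gamma (a := (m : ℝ) + 1) (c := t + r) (by positivity) (by positivity)
        have h2 : ∀ y, K y r = ENNReal.ofReal (r ^ (-(1 / 2) : ℝ) * Real.exp (-r)) *
            ENNReal.ofReal (y ^ ((m : ℝ) + 1 - 1) * Real.exp (-((t + r) * y))) := by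
          intro y
          rw [← ENNReal.ofReal_mul (by positivity)]
          unfold K
          congr 1
          rw [show -(t * y + r + r * y) = -r + -((t + r) * y) by ring, Real.exp_add,
            add_sub_cancel_right, Real.rpow_natCast]
          ring
        simp only [h2]
        rw [lintegral_const_mul' _ _ (by simp), h1, ← ENNReal.ofReal_mul (by positivity),
          ← ENNReal.ofReal_mul (by positivity)]
        congr 1
        rw [Real.Gamma_nat_eq_factorial, one_div (t + r), Real.inv_rpow (by positivity),
          ← Nat.cast_add_one, Real.rpow_natCast]
        ring

lemma cov1 {c : ℝ} (hc : 0 < c) (G : ℝ → ENNReal) :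
    ∫⁻ h in Ioi (0:ℝ), G h = ∫⁻ t in Ioi (0:ℝ), ENNReal.ofReal c * G (c * t) := by
  have him : (fun t => c * t) '' Ioi (0:ℝ) = Ioi 0 := by
    rw [image_mul_left_Ioi hc, mul_zero]
  have h := lintegral_image_eq_lintegral_abs_deriv_mul (s := Ioi (0:ℝ)) (f := fun t => c * t)
    (f' := fun _ => c) measurableSet_Ioi
    (fun x _ => by simpa using ((hasDerivAt_id x).const_mul c).hasDerivWithinAt)
    (fun x _ y _ hxy => mul_left_cancel₀ hc.ne' hxy) G
  rw [him] at h
  rw [h, abs_of_pos hc]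

lemma cov2 {t : ℝ} (ht : 0 < t) (G : ℝ → ENNReal) :
    ∫⁻ p in Ioo (0:ℝ) 1, G p =
      ∫⁻ r in Ioi (0:ℝ), ENNReal.ofReal (t / (t + r) ^ 2) * G (t / (t + r)) := by
  have him : (fun r => t / (t + r)) '' Ioi (0:ℝ) = Ioo 0 1 := by
    ext p
    constructor
    · rintro ⟨r, hr, rfl⟩
      have hr' : (0:ℝ) < r := hr
      exact ⟨by positivity, by rw [div_lt_one (by positivity)]; linarith⟩
    · rintro ⟨h0, h1⟩
      refine ⟨t * (1 - p) / p, ?_, ?_⟩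
      · have : 0 < 1 - p := by linarith
        exact div_pos (mul_pos ht this) h0
      · simp only
        field_simp
        ring
  have h := lintegral_image_eq_lintegral_abs_deriv_mul (s := Ioi (0:ℝ)) (f := fun r => t / (t + r))
    (f' := fun r => -(t / (t + r) ^ 2)) measurableSet_Ioi
    (fun x hx => by
      have hx' : (0:ℝ) < x := hx
      have h1 := ((hasDerivAt_id x).const_add t).inv (by simp only [id]; positivity)
      have h2 := h1.const_mul t
      refine (h2.congr_deriv ?_).hasDerivWithinAt
      simp only [id]
      field_simp)
    (fun x hx y hy hxy => by
      have hx' : (0:ℝ) < x := hx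
      have hy' : (0:ℝ) < y := hy
      simp only at hxy
      field_simp at hxy
      linarith) G
  rw [him] at h
  rw [h]
  refine setLIntegral_congr_fun measurableSet_Ioi fun r hr => ?_
  have hr' : (0:ℝ) < r := hr
  rw [abs_neg, abs_of_pos (by positivity)]

noncomputable def gR (α : ℝ) (m : ℕ) (h p : ℝ) : ℝ :=
  h ^ (-(1 / 2) : ℝ) * fHalf (h * p) * Real.exp (-h * α ^ 2 + α) *
            p ^ m * (1 - p) ^ (-(1 / 2) : ℝ)

lemma gR_meas (α : ℝ) (m : ℕ) : Measurable (Function.uncurry (gR α m)) := by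
  unfold gR fHalf Function.uncurry
  fun_prop

lemma gR_cov {α : ℝ} (hα : 0 < α) (m : ℕ) {t r : ℝ} (ht : 0 < t) (hr : 0 < r) :
    t / (t + r) ^ 2 * ((α ^ 2 * (t / (t + r)))⁻¹ *
      gR α m ((α ^ 2 * (t / (t + r)))⁻¹ * t) (t / (t + r))) =
    α * Real.exp α * (levy α t * (t ^ m * Real.exp (-t))) *
      (Real.exp (-r) * r ^ (-(1 / 2) : ℝ) * ((t + r) ^ (m + 1))⁻¹) := by
  have hh : (α ^ 2 * (t / (t + r)))⁻¹ * t = (t + r) / α ^ 2 := by field_simp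
  have hw : 0 < t + r := by positivity
  unfold gR
  rw [hh]
  have e1 : (t + r) / α ^ 2 * (t / (t + r)) = t / α ^ 2 := by field_simp
  have e2 : 1 - t / (t + r) = r / (t + r) := by field_simp; ring
  have e3 : ((t + r) / α ^ 2) ^ (-(1 / 2) : ℝ) = α * (√(t + r))⁻¹ := by
    rw [Real.rpow_neg (by positivity), ← Real.sqrt_eq_rpow, Real.sqrt_div hw.le,
      Real.sqrt_sq hα.le, inv_div]
    rfl
  have e4 : (r / (t + r)) ^ (-(1 / 2) : ℝ) = √(t + r) * r ^ (-(1 / 2) : ℝ) := by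
    rw [Real.rpow_neg (by positivity), Real.rpow_neg (by positivity), ← Real.sqrt_eq_rpow,
      ← Real.sqrt_eq_rpow, Real.sqrt_div hr.le, inv_div]
    rfl
  have e5 : fHalf (t / α ^ 2) = α ^ 2 * levy α t := by
    unfold fHalf levy
    have a1 : (t / α ^ 2) ^ (-(3 / 2) : ℝ) = α ^ 3 * t ^ (-(3 / 2) : ℝ) := by
      rw [Real.div_rpow ht.le (by positivity), Real.rpow_neg (x := α ^ 2) (by positivity),
        ← Real.rpow_natCast α 2, ← Real.rpow_mul hα.le]
      norm_num
      rw [mul_comm]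
    have a2 : -1 / (4 * (t / α ^ 2)) = -α ^ 2 / (4 * t) := by field_simp
    rw [a1, a2]
    ring
  have e6 : Real.exp (-((t + r) / α ^ 2) * α ^ 2 + α) =
      Real.exp α * Real.exp (-t) * Real.exp (-r) := by
    rw [← Real.exp_add, ← Real.exp_add]
    congr 1
    field_simp
    ring
  rw [e1, e2, e3, e4, e5, e6, div_pow]
  have hs : 0 < √(t + r) := Real.sqrt_pos.2 hw
  field_simp
  ring

lemma gR_lint {α : ℝ} (hα : 0 < α) (m : ℕ) :
    ∫⁻ h in Ioi (0:ℝ), ∫⁻ p in Ioo (0:ℝ) 1, ENNReal.ofReal (gR α m h p) =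
    ∫⁻ t in Ioi (0:ℝ), ∫⁻ r in Ioi (0:ℝ), ENNReal.ofReal (
      α * Real.exp α * (levy α t * (t ^ m * Real.exp (-t))) *
      (Real.exp (-r) * r ^ (-(1 / 2) : ℝ) * ((t + r) ^ (m + 1))⁻¹)) := by
  have hgm := gR_meas α m
  rw [lintegral_lintegral_swap (by exact hgm.ennreal_ofReal.aemeasurable)]
  have s1 : ∫⁻ p in Ioo (0:ℝ) 1, ∫⁻ h in Ioi (0:ℝ), ENNReal.ofReal (gR α m h p) =
      ∫⁻ p in Ioo (0:ℝ) 1, ∫⁻ t in Ioi (0:ℝ), ENNReal.ofReal ((α ^ 2 * p)⁻¹) *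
        ENNReal.ofReal (gR α m ((α ^ 2 * p)⁻¹ * t) p) := by
    refine setLIntegral_congr_fun measurableSet_Ioo fun p hp => ?_
    have hp' : 0 < p := hp.1
    exact cov1 (c := (α ^ 2 * p)⁻¹) (by positivity) (fun h => ENNReal.ofReal (gR α m h p))
  rw [s1, lintegral_lintegral_swap]
  · refine setLIntegral_congr_fun measurableSet_Ioi fun t ht => ?_
    have ht' : (0:ℝ) < t := ht
    rw [cov2 ht']
    refine setLIntegral_congr_fun measurableSet_Ioi fun r hr => ?_
    have hr' : (0:ℝ) < r := hr
    rw [← ENNReal.ofReal_mul (by positivity), ← ENNReal.ofReal_mul (by positivity),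
      gR_cov hα m ht' hr']
  · refine Measurable.aemeasurable ?_
    have h1 : Measurable (fun q : ℝ × ℝ => gR α m ((α ^ 2 * q.1)⁻¹ * q.2) q.1) := by
      have : Measurable (fun q : ℝ × ℝ => ((α ^ 2 * q.1)⁻¹ * q.2, q.1)) := by fun_prop
      exact hgm.comp this
    unfold Function.uncurry
    fun_prop

noncomputable def T1 (α : ℝ) (m : ℕ) : ENNReal :=
  ∫⁻ y in Ioi (0:ℝ), ENNReal.ofReal (y ^ m * (1 + y) ^ (-(1 / 2) : ℝ) * levyP α m (1 + y))

lemma T1_eq {α : ℝ} (hα : 0 < α) (m : ℕ) :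
    T1 α m = ∫⁻ t in Ioi (0:ℝ), ENNReal.ofReal (levy α t * (t ^ m * Real.exp (-t))) *
      ∫⁻ y in Ioi (0:ℝ),
      ENNReal.ofReal (y ^ m * Real.exp (-(t * y)) * (1 + y) ^ (-(1 / 2) : ℝ)) := by
  have hlm := levy_meas α
  unfold T1
  have s1 : ∫⁻ y in Ioi (0:ℝ),
      ENNReal.ofReal (y ^ m * (1 + y) ^ (-(1 / 2) : ℝ) * levyP α m (1 + y)) =
      ∫⁻ y in Ioi (0:ℝ), ∫⁻ t in Ioi (0:ℝ), ENNReal.ofReal (y ^ m * (1 + y) ^ (-(1 / 2) : ℝ)) *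
        ENNReal.ofReal (levy α t * (t ^ m * Real.exp (-(1 + y) * t))) := by
    refine setLIntegral_congr_fun measurableSet_Ioi fun y hy => ?_
    have hy' : (0:ℝ) < y := hy
    rw [lintegral_const_mul' _ _ (by simp), ← levy_moment hα m (1 + y) (by positivity),
      ENNReal.ofReal_mul (by positivity)]
  rw [s1, lintegral_lintegral_swap]
  · refine setLIntegral_congr_fun measurableSet_Ioi fun t ht => ?_
    have ht' : (0:ℝ) < t := ht
    have hl := levy_nonneg hα ht'
    rw [← lintegral_const_mul' _ _ (by simp)]
    refine setLIntegral_congr_fun measurableSet_Ioi fun y hy => ?_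
    have hy' : (0:ℝ) < y := hy
    rw [← ENNReal.ofReal_mul (by positivity), ← ENNReal.ofReal_mul (by positivity)]
    congr 1
    rw [show -(1 + y) * t = -t + -(t * y) by ring, Real.exp_add]
    ring
  · refine Measurable.aemeasurable ?_
    unfold Function.uncurry
    fun_prop

lemma gR_T1 {α : ℝ} (hα : 0 < α) (m : ℕ) :
    ∫⁻ h in Ioi (0:ℝ), ∫⁻ p in Ioo (0:ℝ) 1, ENNReal.ofReal (gR α m h p) =
    ENNReal.ofReal (α * Real.exp α * √π / m.factorial) * T1 α m := by
  rw [gR_lint hα, T1_eq hα, ← lintegral_const_mul' _ _ (by simp)]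
  refine setLIntegral_congr_fun measurableSet_Ioi fun t ht => ?_
  have ht' : (0:ℝ) < t := ht
  have hl := levy_nonneg hα ht'
  have hk := kummer m ht'
  have hf : (0:ℝ) < m.factorial := by positivity
  have s : ∀ r, ENNReal.ofReal (α * Real.exp α * (levy α t * (t ^ m * Real.exp (-t))) *
      (Real.exp (-r) * r ^ (-(1 / 2) : ℝ) * ((t + r) ^ (m + 1))⁻¹)) =
      ENNReal.ofReal (α * Real.exp α * (levy α t * (t ^ m * Real.exp (-t)))) *
      ENNReal.ofReal (Real.exp (-r) * r ^ (-(1 / 2) : ℝ) * ((t + r) ^ (m + 1))⁻¹) := fun r =>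
    ENNReal.ofReal_mul (by positivity)
  simp only [s]
  rw [lintegral_const_mul' _ _ (by simp)]
  rw [show α * Real.exp α * (levy α t * (t ^ m * Real.exp (-t))) =
    (α * Real.exp α / m.factorial) * (levy α t * (t ^ m * Real.exp (-t))) * m.factorial by
      field_simp, ENNReal.ofReal_mul (q := (m.factorial : ℝ)) (by positivity), mul_assoc, ← hk,
    ENNReal.ofReal_mul (p := α * Real.exp α / m.factorial) (by positivity),
    show α * Real.exp α * √π / m.factorial = (α * Real.exp α / m.factorial) * √π by ring,
    ENNReal.ofReal_mul (p := α * Real.exp α / m.factorial) (by positivity)]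
  ring

noncomputable def vK (α : ℝ) (m k : ℕ) (y : ℝ) : ℝ :=
  y ^ m * (1 + y) ^ (-(1 / 2) : ℝ) *
    (Real.exp (-(α * √(1 + y))) * (α ^ k * (1 + y) ^ ((k : ℝ) / 2 - m)))

lemma vK_integrable {α : ℝ} (hα : 0 < α) (m k : ℕ) : IntegrableOn (vK α m k) (Ioi 0) := by
  have hk : (-1 : ℝ) < (k : ℝ) / 2 - 1 / 2 := by
    have : (0:ℝ) ≤ k := Nat.cast_nonneg k
    linarith
  have h0 := integrableOn_rpow_mul_exp_neg_mul_rpow (p := 1 / 2) (s := (k : ℝ) / 2 - 1 / 2)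
    hk (by norm_num) hα
  have h1 := h0.mono_set (Ioi_subset_Ioi (zero_le_one' ℝ))
  have h2 := ((measurePreserving_add_left volume (1:ℝ)).integrableOn_comp_preimage
    (measurableEmbedding_addLeft 1)).2 h1
  have hpre : (fun x : ℝ => 1 + x) ⁻¹' Ioi 1 = Ioi 0 := by ext x; simp
  rw [hpre] at h2
  refine (Integrable.const_mul h2 (α ^ k)).mono' ?_ ?_
  · refine Measurable.aestronglyMeasurable ?_
    unfold vK
    fun_prop
  · filter_upwards [ae_restrict_mem measurableSet_Ioi] with y hy
    have hy' : (0:ℝ) < y := hy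
    have hy1 : (0:ℝ) < 1 + y := by positivity
    have hnn : 0 ≤ vK α m k y := by unfold vK; positivity
    rw [Real.norm_of_nonneg hnn]
    simp only [Function.comp, vK, ← Real.sqrt_eq_rpow, neg_mul]
    have e : (1 + y) ^ (-(1 / 2) : ℝ) * (1 + y) ^ ((k : ℝ) / 2 - m) * (1 + y) ^ m =
        (1 + y) ^ ((k : ℝ) / 2 - 1 / 2) := by
      rw [← Real.rpow_natCast (1 + y) m, ← Real.rpow_add hy1, ← Real.rpow_add hy1]
      congr 1; ring
    have hle : y ^ m ≤ (1 + y) ^ m := pow_le_pow_left₀ hy'.le (by linarith) m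
    calc _ = y ^ m * ((1 + y) ^ (-(1 / 2) : ℝ) * (1 + y) ^ ((k : ℝ) / 2 - m) *
            (α ^ k * Real.exp (-(α * √(1 + y))))) := by ring
      _ ≤ (1 + y) ^ m * ((1 + y) ^ (-(1 / 2) : ℝ) * (1 + y) ^ ((k : ℝ) / 2 - m) *
            (α ^ k * Real.exp (-(α * √(1 + y))))) := by gcongr
      _ = _ := by rw [← e]; ring

lemma Vhalf_eq {α : ℝ} (m k : ℕ) : Vhalf (m + 1) (k + 1) α * 2 ^ k =
    α * Real.exp α / (2 * m.factorial) * ∫ y in Ioi (0:ℝ), vK α m k y := by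
  have h1 := integral_comp_mul_left_Ioi (vK α m k) 0 (b := 2) (by norm_num)
  simp only [mul_zero, smul_eq_mul] at h1
  have h2 : ∫ y in Ioi (0:ℝ), vK α m k y = 2 * ∫ x in Ioi (0:ℝ), vK α m k (2 * x) := by
    rw [h1]; ring
  unfold Vhalf
  rw [h2, Nat.cast_add_one, Real.Gamma_nat_eq_factorial]
  have hf : (m.factorial : ℝ) ≠ 0 := by positivity
  rw [show (α / √2) ^ (k + 1) / (m.factorial : ℝ) * (∫ x in Ioi (0 : ℝ),
      x ^ (m + 1 - 1) * ((1 / 2 : ℝ) + x) ^ (-((m : ℝ) + 1 - ((k + 1 : ℕ) : ℝ) / 2)) *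
        Real.exp (-α * (√(1 + 2 * x) - 1))) * 2 ^ k =
    (m.factorial : ℝ)⁻¹ * (((α / √2) ^ (k + 1) * 2 ^ k) * (∫ x in Ioi (0 : ℝ),
      x ^ (m + 1 - 1) * ((1 / 2 : ℝ) + x) ^ (-((m : ℝ) + 1 - ((k + 1 : ℕ) : ℝ) / 2)) *
        Real.exp (-α * (√(1 + 2 * x) - 1)))) by ring,
    show α * Real.exp α / (2 * (m.factorial : ℝ)) * (2 * ∫ x in Ioi (0:ℝ), vK α m k (2 * x)) =
      (m.factorial : ℝ)⁻¹ * ((α * Real.exp α) * ∫ x in Ioi (0:ℝ), vK α m k (2 * x)) by field_simp]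
  congr 1
  rw [← integral_const_mul, ← integral_const_mul]
  refine setIntegral_congr_fun measurableSet_Ioi fun x hx => ?_
  have hx' : (0:ℝ) < x := hx
  have hw : 0 < 1 + 2 * x := by positivity
  have e1 : ((1 / 2 : ℝ) + x) ^ (-((m : ℝ) + 1 - ((k + 1 : ℕ) : ℝ) / 2)) =
      (1 + 2 * x) ^ (-(1 / 2) : ℝ) * (1 + 2 * x) ^ ((k : ℝ) / 2 - m) *
        (2 : ℝ) ^ ((m : ℝ) + 1 / 2 - k / 2) := by
    rw [show (1 / 2 : ℝ) + x = (1 + 2 * x) * 2⁻¹ by ring, Real.mul_rpow hw.le (by norm_num),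
      ← Real.rpow_add hw, Real.inv_rpow (by norm_num), ← Real.rpow_neg (by norm_num)]
    congr 2 <;> push_cast <;> ring
  have e2 : (√2)⁻¹ ^ (k + 1) * 2 ^ k * (2 : ℝ) ^ ((m : ℝ) + 1 / 2 - k / 2) = 2 ^ m := by
    rw [Real.sqrt_eq_rpow, ← Real.rpow_neg (by norm_num), ← Real.rpow_natCast (_ ^ _) (k + 1),
      ← Real.rpow_mul (by norm_num), ← Real.rpow_natCast _ k, ← Real.rpow_natCast _ m,
      ← Real.rpow_add (by norm_num), ← Real.rpow_add (by norm_num)]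
    congr 1; push_cast; ring
  have e3 : Real.exp (-α * (√(1 + 2 * x) - 1)) = Real.exp α * Real.exp (-(α * √(1 + 2 * x))) := by
    rw [← Real.exp_add]; congr 1; ring
  simp only [vK, Nat.add_sub_cancel]
  rw [e1, e3, mul_pow, ← e2, div_eq_mul_inv, mul_pow]
  ring

lemma levyP_nonneg {α : ℝ} (hα : 0 < α) (m : ℕ) {u : ℝ} (hu : 0 < u) : 0 ≤ levyP α m u := by
  rw [← levyM_moment hα m u hu, levyM_integral hα]
  refine setIntegral_nonneg measurableSet_Ioi fun t ht => ?_
  have ht' : (0:ℝ) < t := ht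
  have := levy_nonneg hα ht'
  positivity

lemma lhs_eq {α : ℝ} (hα : 0 < α) (m : ℕ) (hm : 1 ≤ m) : T1 α m ≠ ⊤ ∧
    ∑ k ∈ Finset.Icc 1 m, Vhalf (m + 1) (k + 1) α * 2 ^ k * genFactCoeff m k (1 / 2) =
      α * Real.exp α / (2 * m.factorial) * (T1 α m).toReal := by
  have hfun : (fun y => y ^ m * (1 + y) ^ (-(1 / 2) : ℝ) * levyP α m (1 + y)) =
      fun y => ∑ k ∈ Finset.range (m + 1), genFactCoeff m k (1 / 2) * vK α m k y := by
    funext y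
    unfold levyP vK
    rw [Finset.mul_sum, Finset.mul_sum]
    exact Finset.sum_congr rfl fun k _ => by ring
  have hi : ∀ k ∈ Finset.range (m + 1), Integrable (fun y => genFactCoeff m k (1 / 2) * vK α m k y)
      (volume.restrict (Ioi 0)) := fun k _ => (vK_integrable hα m k).const_mul _
  have hint : IntegrableOn (fun y => y ^ m * (1 + y) ^ (-(1 / 2) : ℝ) * levyP α m (1 + y))
      (Ioi 0) := by
    rw [hfun]
    exact integrable_finsetSum _ hi
  have hT : T1 α m = ENNReal.ofReal
      (∫ y in Ioi (0:ℝ), y ^ m * (1 + y) ^ (-(1 / 2) : ℝ) * levyP α m (1 + y)) := by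
    refine (ofReal_integral_eq_lintegral_ofReal hint ?_).symm
    filter_upwards [ae_restrict_mem measurableSet_Ioi] with y hy
    have hy' : (0:ℝ) < y := hy
    have := levyP_nonneg hα m (u := 1 + y) (by positivity)
    simp only [Pi.zero_apply]
    positivity
  refine ⟨by rw [hT]; simp, ?_⟩
  rw [hT, ENNReal.toReal_ofReal, hfun, integral_finsetSum _ hi, Finset.mul_sum,
    Finset.range_eq_Ico, Finset.sum_eq_sum_Ico_succ_bot (by omega), gfc_zero' m hm]
  · simp only [zero_mul, integral_zero, mul_zero, zero_add]
    rw [show Finset.Ico 1 (m + 1) = Finset.Icc 1 m by ext; simp]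
    refine Finset.sum_congr rfl fun k _ => ?_
    rw [Vhalf_eq, integral_const_mul]
    ring
  · refine setIntegral_nonneg measurableSet_Ioi fun y hy => ?_
    have hy' : (0:ℝ) < y := hy
    have := levyP_nonneg hα m (u := 1 + y) (by positivity)
    positivity

lemma gR_nonneg {α : ℝ} (m : ℕ) {h p : ℝ} (hh : 0 < h) (hp : p ∈ Ioo (0:ℝ) 1) :
    0 ≤ gR α m h p := by
  have h1 : 0 < p := hp.1
  have h2 : 0 < 1 - p := by linarith [hp.2]
  unfold gR fHalf
  positivity

lemma rhs_eq {α : ℝ} (hα : 0 < α) (m : ℕ) (hT : T1 α m ≠ ⊤) :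
    ∫ h in Ioi (0:ℝ), ∫ p in Ioo (0:ℝ) 1, gR α m h p =
      α * Real.exp α * √π / m.factorial * (T1 α m).toReal := by
  have hgm := gR_meas α m
  have h1 : ∀ h ∈ Ioi (0:ℝ), ∫ p in Ioo (0:ℝ) 1, gR α m h p =
      (∫⁻ p in Ioo (0:ℝ) 1, ENNReal.ofReal (gR α m h p)).toReal := by
    intro h hh
    refine integral_eq_lintegral_of_nonneg_ae ?_ ?_
    · filter_upwards [ae_restrict_mem measurableSet_Ioo] with p hp
      exact gR_nonneg m hh hp
    · have : Measurable (fun p : ℝ => (h, p)) := by fun_prop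
      exact (hgm.comp this).aestronglyMeasurable
  rw [setIntegral_congr_fun measurableSet_Ioi h1]
  have hm : Measurable (fun h => ∫⁻ p in Ioo (0:ℝ) 1, ENNReal.ofReal (gR α m h p)) :=
    Measurable.lintegral_prod_right' (f := fun q : ℝ × ℝ => ENNReal.ofReal (gR α m q.1 q.2))
      (by exact hgm.ennreal_ofReal)
  have hlt := gR_T1 hα m
  rw [integral_toReal hm.aemeasurable (ae_lt_top hm ?_), hlt, ENNReal.toReal_mul,
    ENNReal.toReal_ofReal (by positivity)]
  rw [hlt]
  exact ENNReal.mul_ne_top (by simp) hT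

/-- Case `ℓ = 0`, `σ = 1/2` of Lemma A.1: the probability that a new token is a
previously unseen symbol under the NGGP with `σ = 1/2`. -/
theorem stmt14 (α : ℝ) (hα : 0 < α) (m : ℕ) (hm : 1 ≤ m) :
    ∑ k ∈ Finset.Icc 1 m, Vhalf (m + 1) (k + 1) α * 2 ^ k * genFactCoeff m k (1 / 2)
      = (1 / (2 * Real.sqrt Real.pi)) *
        ∫ h in Set.Ioi (0 : ℝ), ∫ p in Set.Ioo (0 : ℝ) 1,
          h ^ (-(1 / 2) : ℝ) * fHalf (h * p) * Real.exp (-h * α ^ 2 + α) *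
            p ^ m * (1 - p) ^ (-(1 / 2) : ℝ) := by
  obtain ⟨hT, hl⟩ := lhs_eq hα m hm
  have hr := rhs_eq hα m hT
  unfold gR at hr
  rw [hl, hr]
  have hp : 0 < √π := Real.sqrt_pos.2 Real.pi_pos
  field_simp
end

section
/- Let α > 0 and let 1 ≤ ℓ < m be integers. Then (ℓ − 1/2)·binom(m,ℓ)·(1/2)_{(ℓ−1)}·Σ_{k=1}^{m} V^{1/2}_{m+1,k}(α)·2^{k−1}·C(m−ℓ, k−1; 1/2) = ( (1/2)·(ℓ − 1/2)·binom(m,ℓ)·(1/2)_{(ℓ−1)} / Γ(ℓ + 1/2) )·∫_0^∞ ∫_0^1 h^{−1/2}·f_{1/2}(h·p)·exp(−h·α² + α)·p^{m−ℓ}·(1−p)^{ℓ−1/2} dp dh. -/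
open MeasureTheory

/-! ### Combinatorics of the generalized factorial coefficients -/

lemma gfc_zero_succ (j : ℕ) (s : ℝ) : genFactCoeff 0 (j + 1) s = 0 := by
  unfold genFactCoeff
  have h := Int.alternating_sum_range_choose_of_ne (n := j + 1) (by omega)
  have h' : ∑ i ∈ Finset.range (j + 1 + 1), (-1 : ℝ) ^ i * ((j + 1).choose i : ℝ) = 0 := by
    exact_mod_cast h
  simp [risingFactorial, h']

lemma gfc_zero_zero (s : ℝ) : genFactCoeff 0 0 s = 1 := by
  simp [genFactCoeff, risingFactorial]

lemma gfc_succ_zero (n : ℕ) (s : ℝ) : genFactCoeff (n + 1) 0 s = n * genFactCoeff n 0 s := by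
  simp [genFactCoeff, risingFactorial, mul_comm]

lemma gfc_rec_s15 (n j : ℕ) (s : ℝ) :
    genFactCoeff (n + 1) (j + 1) s
      = (n - (j + 1) * s) * genFactCoeff n (j + 1) s + s * genFactCoeff n j s := by
  unfold genFactCoeff
  have hj : (0 : ℝ) < (j.factorial : ℝ) := by exact_mod_cast Nat.factorial_pos j
  have e1 : ∑ i ∈ Finset.range (j + 1), (-1 : ℝ) ^ i * (j.choose i : ℝ) *
      risingFactorial (-(i : ℝ) * s) n
      = ∑ i ∈ Finset.range (j + 1 + 1), (-1 : ℝ) ^ i * (j.choose i : ℝ) *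
      risingFactorial (-(i : ℝ) * s) n := by
    rw [Finset.sum_range_succ _ (j + 1)]
    simp
  rw [e1]
  simp only [Finset.mul_sum]
  rw [← Finset.sum_add_distrib]
  refine Finset.sum_congr rfl fun i hi => ?_
  have hi' : i ≤ j + 1 := by simpa [Nat.lt_succ_iff] using hi
  have hc : ((j + 1).choose i : ℝ) * ((j + 1 : ℝ) - i) = (j.choose i : ℝ) * (j + 1) := by
    have := Nat.choose_mul_succ_eq j i
    have h2 : ((j.choose i * (j + 1) : ℕ) : ℝ) = (((j + 1).choose i * (j + 1 - i) : ℕ) : ℝ) := by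
      rw [this]
    push_cast [Nat.cast_sub hi'] at h2
    linarith
  simp only [risingFactorial, Nat.factorial_succ]
  push_cast
  generalize risingFactorial (-(i : ℝ) * s) n = R
  field_simp
  have h3 : s * (j + 1 : ℝ) * (j.choose i : ℝ) = s * (((j + 1).choose i : ℝ) * ((j + 1 : ℝ) - i)) := by
    rw [hc]; ring
  linear_combination (-1 : ℝ) * R * h3

lemma gfc_vanish (s : ℝ) (n : ℕ) : ∀ j, n < j → genFactCoeff n j s = 0 := by
  induction n with
  | zero =>
    intro j hj
    obtain ⟨k, rfl⟩ : ∃ k, j = k + 1 := ⟨j - 1, by omega⟩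
    exact gfc_zero_succ k s
  | succ n ih =>
    intro j hj
    obtain ⟨k, rfl⟩ : ∃ k, j = k + 1 := ⟨j - 1, by omega⟩
    rw [gfc_rec_s15, ih _ (by omega), ih _ (by omega)]
    ring

/-- The polynomial `∑_{j<N} C(n,j;1/2) y^j`. -/
noncomputable def gPoly (N n : ℕ) (y : ℝ) : ℝ :=
  ∑ j ∈ Finset.range N, genFactCoeff n j (1 / 2) * y ^ j

/-- Derivative of `gPoly`. -/
noncomputable def gPolyD (N n : ℕ) (y : ℝ) : ℝ :=
  ∑ j ∈ Finset.range N, genFactCoeff n j (1 / 2) * (j * y ^ (j - 1))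

lemma gPoly_hasDeriv (N n : ℕ) (y : ℝ) : HasDerivAt (gPoly N n) (gPolyD N n y) y := by
  unfold gPoly gPolyD
  exact HasDerivAt.fun_sum fun j _ => (hasDerivAt_pow j y).const_mul _

lemma gPoly_zero (N : ℕ) (y : ℝ) : gPoly (N + 1) 0 y = 1 := by
  unfold gPoly
  rw [Finset.sum_range_succ']
  simp [gfc_zero_succ, gfc_zero_zero]

lemma gPoly_succ (N n : ℕ) (hn : n < N) (y : ℝ) :
    gPoly (N + 1) (n + 1) y
      = n * gPoly (N + 1) n y + y / 2 * (gPoly (N + 1) n y - gPolyD (N + 1) n y) := by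
  have h1 : gPoly (N + 1) n y = gPoly N n y := by
    unfold gPoly
    rw [Finset.sum_range_succ, gfc_vanish _ _ _ hn]; simp
  have h2 : gPoly (N + 1) (n + 1) y = n * gPoly (N + 1) n y - y / 2 * gPolyD (N + 1) n y
      + y / 2 * gPoly N n y := by
    unfold gPoly gPolyD
    rw [Finset.sum_range_succ', Finset.sum_range_succ', Finset.sum_range_succ']
    simp only [gfc_rec_s15, gfc_succ_zero, mul_add, Finset.mul_sum]
    simp only [Nat.cast_zero, zero_mul, mul_zero, add_zero]
    rw [add_sub_right_comm, ← Finset.sum_sub_distrib, add_right_comm, ← Finset.sum_add_distrib]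
    congr 1
    · refine Finset.sum_congr rfl fun j _ => ?_
      simp only [Nat.add_sub_cancel]
      push_cast
      ring
    · ring
  rw [h2, ← h1]
  ring

/-! ### Changes of variables and the Laplace transform of `fHalf` -/

open Set in
lemma lint_scale (c : ℝ) (hc : 0 < c) (g : ℝ → ENNReal) :
    ∫⁻ x in Ioi (0 : ℝ), g x = ∫⁻ t in Ioi (0 : ℝ), ENNReal.ofReal c * g (c * t) := by
  have himg : (fun t : ℝ => c * t) '' Ioi 0 = Ioi 0 := by
    ext x
    constructor
    · rintro ⟨t, ht, rfl⟩
      exact mul_pos hc ht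
    · intro hx
      exact ⟨x / c, div_pos hx hc, by field_simp⟩
  have h := lintegral_image_eq_lintegral_abs_deriv_mul (s := Ioi (0 : ℝ)) (f := fun t => c * t)
    (f' := fun _ => c) measurableSet_Ioi
    (fun x _ => by simpa using ((hasDerivAt_id x).const_mul c).hasDerivWithinAt)
    (fun x _ y _ hxy => by simpa [hc.ne'] using hxy) g
  rw [himg, abs_of_pos hc] at h
  exact h

open Set in
lemma lint_inv (b : ℝ) (hb : 0 < b) (g : ℝ → ENNReal) :
    ∫⁻ x in Ioi (0 : ℝ), g x
      = ∫⁻ t in Ioi (0 : ℝ), ENNReal.ofReal (b / t ^ 2) * g (b / t) := by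
  have himg : (fun t : ℝ => b / t) '' Ioi 0 = Ioi 0 := by
    ext x
    constructor
    · rintro ⟨t, ht, rfl⟩
      exact div_pos hb ht
    · intro hx
      have hx' : (0 : ℝ) < x := hx
      exact ⟨b / x, div_pos hb hx, by field_simp⟩
  have h := lintegral_image_eq_lintegral_abs_deriv_mul (s := Ioi (0 : ℝ)) (f := fun t => b / t)
    (f' := fun t => -(b / t ^ 2)) measurableSet_Ioi
    (fun x hx => by
      have hx' : (0 : ℝ) < x := hx
      have := ((hasDerivAt_inv hx'.ne').const_mul b).hasDerivWithinAt (s := Ioi 0)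
      convert! this using 1
      field_simp)
    (fun x hx y hy hxy => by
      have hx' : (0 : ℝ) < x := hx
      have hy' : (0 : ℝ) < y := hy
      field_simp at hxy
      exact hxy.symm) g
  rw [himg] at h
  rw [h]
  refine setLIntegral_congr_fun measurableSet_Ioi fun t ht => ?_
  have ht' : (0 : ℝ) < t := ht
  rw [abs_neg, abs_of_pos (by positivity)]

open Set in
lemma lint_invsq (g : ℝ → ENNReal) :
    ∫⁻ x in Ioi (0 : ℝ), g x
      = ∫⁻ s in Ioi (0 : ℝ), ENNReal.ofReal (1 / (2 * s ^ 3)) * g (1 / (4 * s ^ 2)) := by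
  have himg : (fun s : ℝ => 1 / (4 * s ^ 2)) '' Ioi 0 = Ioi 0 := by
    ext x
    constructor
    · rintro ⟨t, ht, rfl⟩
      have ht' : (0 : ℝ) < t := ht
      simp only [mem_Ioi]
      positivity
    · intro hx
      have hx' : (0 : ℝ) < x := hx
      refine ⟨1 / (2 * Real.sqrt x), by simp only [mem_Ioi]; positivity, ?_⟩
      have := Real.sq_sqrt hx'.le
      simp only
      field_simp
      rw [this]
      norm_num
  have h := lintegral_image_eq_lintegral_abs_deriv_mul (s := Ioi (0 : ℝ))
    (f := fun s => 1 / (4 * s ^ 2))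
    (f' := fun s => -(1 / (2 * s ^ 3))) measurableSet_Ioi
    (fun x hx => by
      have hx' : (0 : ℝ) < x := hx
      have h4 : (4 * x ^ 2 : ℝ) ≠ 0 := by positivity
      have := (((hasDerivAt_pow 2 x).const_mul 4).inv h4).hasDerivWithinAt (s := Ioi 0)
      simp only [one_div]
      convert! this using 1
      push_cast
      field_simp
      norm_num)
    (fun x hx y hy hxy => by
      have hx' : (0 : ℝ) < x := hx
      have hy' : (0 : ℝ) < y := hy
      field_simp at hxy
      exact ((pow_left_inj₀ hy'.le hx'.le two_ne_zero).1 hxy).symm) g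
  rw [himg] at h
  rw [h]
  refine setLIntegral_congr_fun measurableSet_Ioi fun t ht => ?_
  have ht' : (0 : ℝ) < t := ht
  rw [abs_neg, abs_of_pos (by positivity)]

open Set in
lemma lint_schlomilch (b : ℝ) (hb : 0 < b) (g : ℝ → ENNReal) :
    ∫⁻ x, g x
      = ∫⁻ s in Ioi (0 : ℝ), ENNReal.ofReal (1 + b / s ^ 2) * g (s - b / s) := by
  have himg : (fun s : ℝ => s - b / s) '' Ioi 0 = univ := by
    ext x
    simp only [mem_univ, iff_true]
    have hq : 0 < x ^ 2 + 4 * b := by positivity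
    have h2 := Real.sq_sqrt hq.le
    have hlt : |x| < Real.sqrt (x ^ 2 + 4 * b) := by
      apply Real.lt_sqrt_of_sq_lt
      rw [sq_abs]; linarith
    have hs : 0 < x + Real.sqrt (x ^ 2 + 4 * b) := by
      have := neg_abs_le x
      linarith
    refine ⟨(x + Real.sqrt (x ^ 2 + 4 * b)) / 2, by simp only [mem_Ioi]; positivity, ?_⟩
    simp only
    field_simp
    nlinarith
  have h := lintegral_image_eq_lintegral_abs_deriv_mul (s := Ioi (0 : ℝ))
    (f := fun s => s - b / s)
    (f' := fun s => 1 + b / s ^ 2) measurableSet_Ioi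
    (fun x hx => by
      have hx' : (0 : ℝ) < x := hx
      have := ((hasDerivAt_id x).sub ((hasDerivAt_inv hx'.ne').const_mul b)).hasDerivWithinAt
        (s := Ioi 0)
      convert! this using 1
      field_simp
      ring)
    (fun x hx y hy hxy => by
      have hx' : (0 : ℝ) < x := hx
      have hy' : (0 : ℝ) < y := hy
      field_simp at hxy
      have h0 : (x - y) * (x * y + b) = 0 := by linear_combination hxy
      rcases mul_eq_zero.1 h0 with h | h
      · linarith
      · have : 0 < x * y := mul_pos hx' hy'
        linarith) g
  rw [himg, Measure.restrict_univ] at h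
  rw [h]
  refine setLIntegral_congr_fun measurableSet_Ioi fun t ht => ?_
  have ht' : (0 : ℝ) < t := ht
  rw [abs_of_pos (by positivity)]

open Set in
lemma lint_gauss_inv (b : ℝ) (hb : 0 < b) :
    ∫⁻ s in Ioi (0 : ℝ), ENNReal.ofReal (Real.exp (-(s - b / s) ^ 2))
      = ENNReal.ofReal (Real.sqrt Real.pi / 2) := by
  have h1 := lint_inv b hb (fun s => ENNReal.ofReal (Real.exp (-(s - b / s) ^ 2)))
  have h2 := lint_schlomilch b hb (fun u => ENNReal.ofReal (Real.exp (-u ^ 2)))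
  have hg : ∫⁻ u : ℝ, ENNReal.ofReal (Real.exp (-u ^ 2)) = ENNReal.ofReal (Real.sqrt Real.pi) := by
    rw [← ofReal_integral_eq_lintegral_ofReal]
    · have := integral_gaussian 1
      simp only [div_one, neg_mul, one_mul] at this
      rw [this]
    · simpa using integrable_exp_neg_mul_sq (b := 1) one_pos
    · exact Filter.Eventually.of_forall fun u => (Real.exp_pos _).le
  have h3 : ∫⁻ t in Ioi (0 : ℝ), ENNReal.ofReal (b / t ^ 2) *
        ENNReal.ofReal (Real.exp (-(b / t - b / (b / t)) ^ 2))
      = ∫⁻ t in Ioi (0 : ℝ), ENNReal.ofReal (b / t ^ 2) *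
        ENNReal.ofReal (Real.exp (-(t - b / t) ^ 2)) := by
    refine setLIntegral_congr_fun measurableSet_Ioi fun t ht => ?_
    have ht' : (0 : ℝ) < t := ht
    have : b / (b / t) = t := by field_simp
    simp only [this]
    congr 4
    ring
  rw [h3] at h1
  rw [hg] at h2
  have h4 : ∫⁻ s in Ioi (0 : ℝ), ENNReal.ofReal (1 + b / s ^ 2) *
      ENNReal.ofReal (Real.exp (-(s - b / s) ^ 2))
      = ∫⁻ s in Ioi (0 : ℝ), (ENNReal.ofReal (Real.exp (-(s - b / s) ^ 2)) +
        ENNReal.ofReal (b / s ^ 2) * ENNReal.ofReal (Real.exp (-(s - b / s) ^ 2))) := by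
    refine setLIntegral_congr_fun measurableSet_Ioi fun t ht => ?_
    have ht' : (0 : ℝ) < t := ht
    rw [ENNReal.ofReal_add one_pos.le (by positivity), add_mul, ENNReal.ofReal_one, one_mul]
  rw [h4, lintegral_add_left (by fun_prop), ← h1] at h2
  set J := ∫⁻ s in Ioi (0 : ℝ), ENNReal.ofReal (Real.exp (-(s - b / s) ^ 2))
  rw [ENNReal.ofReal_div_of_pos two_pos, h2, ← two_mul]
  rw [ENNReal.eq_div_iff] <;> simp

lemma fHalf_nonneg {t : ℝ} (ht : 0 < t) : 0 ≤ fHalf t := by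
  unfold fHalf; positivity

@[fun_prop]
lemma fHalf_measurable : Measurable fHalf := by
  unfold fHalf; fun_prop

open Set in
lemma laplace_zero (lam : ℝ) (hl : 0 < lam) :
    ∫⁻ t in Ioi (0 : ℝ), ENNReal.ofReal (Real.exp (-lam * t) * fHalf t)
      = ENNReal.ofReal (Real.exp (-Real.sqrt lam)) := by
  have hb : 0 < Real.sqrt lam / 2 := by positivity
  have hsq := Real.sq_sqrt hl.le
  rw [lint_invsq]
  have h1 : ∫⁻ s in Ioi (0 : ℝ), ENNReal.ofReal (1 / (2 * s ^ 3)) *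
        ENNReal.ofReal (Real.exp (-lam * (1 / (4 * s ^ 2))) * fHalf (1 / (4 * s ^ 2)))
      = ∫⁻ s in Ioi (0 : ℝ), ENNReal.ofReal (2 / Real.sqrt Real.pi * Real.exp (-Real.sqrt lam)) *
        ENNReal.ofReal (Real.exp (-(s - (Real.sqrt lam / 2) / s) ^ 2)) := by
    refine setLIntegral_congr_fun measurableSet_Ioi fun s hs => ?_
    have hs' : (0 : ℝ) < s := hs
    rw [← ENNReal.ofReal_mul (by positivity), ← ENNReal.ofReal_mul (by positivity)]
    congr 1
    have e1 : (1 / (4 * s ^ 2) : ℝ) ^ (-(3 / 2) : ℝ) = (2 * s) ^ 3 := by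
      have : (1 / (4 * s ^ 2) : ℝ) = (2 * s) ^ (-2 : ℝ) := by
        rw [Real.rpow_neg (by positivity), one_div]
        norm_num
        ring
      rw [this, ← Real.rpow_mul (by positivity), ← Real.rpow_natCast]
      norm_num
    unfold fHalf
    rw [e1]
    have e2 : Real.exp (-lam * (1 / (4 * s ^ 2))) * Real.exp (-1 / (4 * (1 / (4 * s ^ 2))))
        = Real.exp (-Real.sqrt lam) * Real.exp (-(s - (Real.sqrt lam / 2) / s) ^ 2) := by
      rw [← Real.exp_add, ← Real.exp_add]
      congr 1
      field_simp
      rw [← hsq]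
      rw [Real.sqrt_sq (Real.sqrt_nonneg _)]
      ring
    rw [mul_assoc (2 / Real.sqrt Real.pi), ← e2]
    have hpi : 0 < Real.sqrt Real.pi := Real.sqrt_pos.2 Real.pi_pos
    generalize Real.exp (-lam * (1 / (4 * s ^ 2))) = E1
    generalize Real.exp (-1 / (4 * (1 / (4 * s ^ 2)))) = E2
    field_simp
  rw [h1, lintegral_const_mul _ (by fun_prop), lint_gauss_inv _ hb,
    ← ENNReal.ofReal_mul (by positivity)]
  congr 1
  have hpi : 0 < Real.sqrt Real.pi := Real.sqrt_pos.2 Real.pi_pos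
  field_simp

/-- The positive half-stable law, as a measure. -/
noncomputable def stableMeas : Measure ℝ :=
  (volume.restrict (Set.Ioi (0 : ℝ))).withDensity (fun t => ENNReal.ofReal (fHalf t))

open Set in
lemma stableMeas_integral (g : ℝ → ℝ) :
    ∫ t, g t ∂stableMeas = ∫ t in Ioi (0 : ℝ), g t * fHalf t := by
  unfold stableMeas
  rw [integral_withDensity_eq_integral_toReal_smul (by fun_prop) (by simp)]
  refine setIntegral_congr_fun measurableSet_Ioi fun t ht => ?_
  simp only [smul_eq_mul]
  rw [ENNReal.toReal_ofReal (fHalf_nonneg ht), mul_comm]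

open Set in
lemma stableMeas_integrable (g : ℝ → ℝ) :
    Integrable g stableMeas ↔ IntegrableOn (fun t => g t * fHalf t) (Ioi (0 : ℝ)) := by
  unfold stableMeas
  rw [integrable_withDensity_iff_integrable_smul' (by fun_prop) (by simp)]
  refine integrableOn_congr_fun (fun t ht => ?_) measurableSet_Ioi
  simp only [smul_eq_mul]
  rw [ENNReal.toReal_ofReal (fHalf_nonneg ht), mul_comm]

open Set in
lemma laplace_int_zero (lam : ℝ) (hl : 0 < lam) :
    IntegrableOn (fun t => Real.exp (-lam * t) * fHalf t) (Ioi (0 : ℝ)) := by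
  refine ⟨by fun_prop, ?_⟩
  rw [hasFiniteIntegral_iff_ofReal, laplace_zero lam hl]
  · simp
  · exact (ae_restrict_mem measurableSet_Ioi).mono fun t ht =>
      mul_nonneg (Real.exp_pos _).le (fHalf_nonneg ht)

lemma mem_expSet (u : ℝ) (hu : u < 0) :
    u ∈ interior (ProbabilityTheory.integrableExpSet (fun t : ℝ => t) stableMeas) := by
  have : Set.Iio (0 : ℝ) ⊆ ProbabilityTheory.integrableExpSet (fun t : ℝ => t) stableMeas := by
    intro v hv
    change Integrable _ _
    rw [stableMeas_integrable]
    have := laplace_int_zero (-v) (by simpa using hv)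
    simpa using this
  exact interior_mono this (by rw [interior_Iio]; exact hu)

open Set in
lemma laplace_int (n : ℕ) (lam : ℝ) (hl : 0 < lam) :
    IntegrableOn (fun t => t ^ n * Real.exp (-lam * t) * fHalf t) (Ioi (0 : ℝ)) := by
  rw [← stableMeas_integrable]
  exact ProbabilityTheory.integrable_pow_mul_exp_of_mem_interior_integrableExpSet
    (mem_expSet (-lam) (by linarith)) n

open Set in
lemma laplace_n (N n : ℕ) (hn : n ≤ N) : ∀ lam : ℝ, 0 < lam →
    ∫ t, t ^ n * Real.exp (-lam * t) ∂stableMeas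
      = (lam ^ n)⁻¹ * (Real.exp (-Real.sqrt lam) * gPoly (N + 1) n (Real.sqrt lam)) := by
  induction n with
  | zero =>
    intro lam hl
    rw [stableMeas_integral, gPoly_zero]
    simp only [pow_zero, one_mul, mul_one, inv_one]
    rw [integral_eq_lintegral_of_nonneg_ae, laplace_zero lam hl,
      ENNReal.toReal_ofReal (Real.exp_pos _).le]
    · exact (ae_restrict_mem measurableSet_Ioi).mono fun t ht =>
        mul_nonneg (Real.exp_pos _).le (fHalf_nonneg ht)
    · fun_prop
  | succ n ih =>
    intro lam hl
    have ih' := ih (by omega)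
    have hd := ProbabilityTheory.hasDerivAt_integral_pow_mul_exp_real
      (mem_expSet (-lam) (by linarith)) n
    have hd2 := hd.scomp lam (hasDerivAt_neg lam)
    have hy : 0 < Real.sqrt lam := Real.sqrt_pos.2 hl
    have hsq := Real.sq_sqrt hl.le
    have hs := Real.hasDerivAt_sqrt hl.ne'
    have hP := (gPoly_hasDeriv (N + 1) n (Real.sqrt lam)).comp lam hs
    have hE := hs.neg.exp
    have hpow := (hasDerivAt_pow n lam).inv (pow_ne_zero n hl.ne')
    have hR := hpow.mul (hE.mul hP)
    have hev : (fun x : ℝ => ∫ t, t ^ n * Real.exp (-x * t) ∂stableMeas) =ᶠ[nhds lam]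
        (fun x => (x ^ n)⁻¹ * (Real.exp (-Real.sqrt x) * gPoly (N + 1) n (Real.sqrt x))) := by
      filter_upwards [Ioi_mem_nhds hl] with x hx using ih' x hx
    have hR2 := hR.congr_of_eventuallyEq hev
    have huniq := hd2.unique hR2
    simp only [smul_eq_mul, neg_mul, one_mul] at huniq
    have hfin := neg_eq_iff_eq_neg.1 huniq
    simp only [neg_mul]
    rw [hfin, gPoly_succ N n (by omega)]
    simp only [Pi.inv_apply, Pi.mul_apply, Function.comp_apply]
    generalize gPoly (N + 1) n (Real.sqrt lam) = P
    generalize gPolyD (N + 1) n (Real.sqrt lam) = D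
    generalize Real.exp (-Real.sqrt lam) = E
    generalize Real.sqrt lam = y at *
    subst hsq
    rcases n with _ | n
    · simp
      field_simp
      ring
    · push_cast
      field_simp
      ring

/-! ### The Kummer transformation -/

/-- The (unnormalized) confluent hypergeometric integral. -/
noncomputable def kInt (a a' c : ℝ) : ENNReal :=
  ∫⁻ v in Set.Ioi (0 : ℝ), ENNReal.ofReal (v ^ (a - 1) * (1 + v) ^ (-a') * Real.exp (-c * v))

open Set in
lemma kummer_half (a a' c : ℝ) (ha' : 0 < a') (hc : 0 < c) :
    ∫⁻ v in Ioi (0 : ℝ), ∫⁻ z in Ioi (0 : ℝ),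
        ENNReal.ofReal (v ^ (a - 1) * z ^ (a' - 1) * Real.exp (-c * (v + z + v * z)))
      = ENNReal.ofReal (Real.Gamma a' * c ^ (-a')) * kInt a a' c := by
  unfold kInt
  rw [← lintegral_const_mul _ (by fun_prop)]
  refine setLIntegral_congr_fun measurableSet_Ioi fun v hv => ?_
  have hv' : (0 : ℝ) < v := hv
  have hG := Real.Gamma_pos_of_pos ha'
  have hr : 0 < c * (1 + v) := by positivity
  have hI := Real.integral_rpow_mul_exp_neg_mul_Ioi ha' hr
  have hint : IntegrableOn (fun t : ℝ => t ^ (a' - 1) * Real.exp (-(c * (1 + v) * t))) (Ioi 0) := by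
    refine Integrable.of_integral_ne_zero ?_
    rw [hI]; positivity
  have hL : ∫⁻ z in Ioi (0 : ℝ), ENNReal.ofReal (z ^ (a' - 1) * Real.exp (-(c * (1 + v) * z)))
      = ENNReal.ofReal ((1 / (c * (1 + v))) ^ a' * Real.Gamma a') := by
    rw [← hI, ofReal_integral_eq_lintegral_ofReal hint]
    exact (ae_restrict_mem measurableSet_Ioi).mono fun t ht => by
      have : (0 : ℝ) < t := ht
      simp only [Pi.zero_apply]; positivity
  have hpt : ∀ z ∈ Ioi (0 : ℝ),
      ENNReal.ofReal (v ^ (a - 1) * z ^ (a' - 1) * Real.exp (-c * (v + z + v * z)))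
      = ENNReal.ofReal (v ^ (a - 1) * Real.exp (-c * v)) *
        ENNReal.ofReal (z ^ (a' - 1) * Real.exp (-(c * (1 + v) * z))) := by
    intro z hz
    rw [← ENNReal.ofReal_mul (by positivity)]
    congr 1
    have : -c * (v + z + v * z) = -c * v + -(c * (1 + v) * z) := by ring
    rw [this, Real.exp_add]
    ring
  rw [setLIntegral_congr_fun measurableSet_Ioi hpt, lintegral_const_mul _ (by fun_prop), hL,
    ← ENNReal.ofReal_mul (by positivity), ← ENNReal.ofReal_mul (by positivity)]
  congr 1
  rw [one_div, Real.inv_rpow hr.le, ← Real.rpow_neg hr.le,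
    Real.mul_rpow hc.le (by positivity : (0 : ℝ) ≤ 1 + v)]
  ring

open Set in
lemma kummer_s15 (a a' c : ℝ) (ha : 0 < a) (ha' : 0 < a') (hc : 0 < c) :
    ENNReal.ofReal (Real.Gamma a' * c ^ (-a')) * kInt a a' c
      = ENNReal.ofReal (Real.Gamma a * c ^ (-a)) * kInt a' a c := by
  rw [← kummer_half a a' c ha' hc, ← kummer_half a' a c ha hc,
    lintegral_lintegral_swap (by fun_prop)]
  refine lintegral_congr fun z => lintegral_congr fun v => ?_
  congr 1
  rw [show v + z + v * z = z + v + z * v by ring]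
  ring

open Set in
lemma lint_unit (g : ℝ → ENNReal) :
    ∫⁻ p in Ioo (0 : ℝ) 1, g p
      = ∫⁻ v in Ioi (0 : ℝ), ENNReal.ofReal (1 / (1 + v) ^ 2) * g (1 / (1 + v)) := by
  have himg : (fun v : ℝ => 1 / (1 + v)) '' Ioi 0 = Ioo 0 1 := by
    ext x
    constructor
    · rintro ⟨t, ht, rfl⟩
      have ht' : (0 : ℝ) < t := ht
      refine ⟨by positivity, ?_⟩
      rw [div_lt_one (by positivity)]
      linarith
    · rintro ⟨h0, h1⟩
      refine ⟨1 / x - 1, ?_, by simp⟩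
      simp only [mem_Ioi, sub_pos]
      rw [lt_div_iff₀ h0]
      linarith
  have h := lintegral_image_eq_lintegral_abs_deriv_mul (s := Ioi (0 : ℝ))
    (f := fun v => 1 / (1 + v))
    (f' := fun v => -(1 / (1 + v) ^ 2)) measurableSet_Ioi
    (fun x hx => by
      have hx' : (0 : ℝ) < x := hx
      have h4 : (1 + x : ℝ) ≠ 0 := by positivity
      have := (((hasDerivAt_id x).const_add 1).inv h4).hasDerivWithinAt (s := Ioi 0)
      simp only [one_div]
      convert! this using 1
      simp
      field_simp)
    (fun x hx y hy hxy => by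
      have hx' : (0 : ℝ) < x := hx
      have hy' : (0 : ℝ) < y := hy
      field_simp at hxy
      linarith) g
  rw [himg] at h
  rw [h]
  refine setLIntegral_congr_fun measurableSet_Ioi fun t ht => ?_
  have ht' : (0 : ℝ) < t := ht
  rw [abs_neg, abs_of_pos (by positivity)]

/-- The integrand of the right-hand side. -/
noncomputable def rhsF (α : ℝ) (n l : ℕ) (h p : ℝ) : ℝ :=
  h ^ (-(1 / 2) : ℝ) * fHalf (h * p) * Real.exp (-h * α ^ 2 + α) *
            p ^ n * (1 - p) ^ ((l : ℝ) - 1 / 2)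

open Set in
lemma rhs_lint (α : ℝ) (n l : ℕ) :
    ∫⁻ h in Ioi (0 : ℝ), ∫⁻ p in Ioo (0 : ℝ) 1, ENNReal.ofReal (rhsF α n l h p)
      = ∫⁻ t in Ioi (0 : ℝ), ENNReal.ofReal
          (Real.exp α * t ^ (-(1 / 2) : ℝ) * fHalf t * Real.exp (-α ^ 2 * t)) *
          kInt (l + 1 / 2) ((n + l : ℕ) + 1) (α ^ 2 * t) := by
  have hm : Measurable (fun q : ℝ × ℝ => rhsF α n l q.1 q.2) := by
    unfold rhsF; fun_prop
  have hm1 : ∀ p, Measurable (fun h => rhsF α n l h p) := fun p => by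
    unfold rhsF; fun_prop
  have hm2 : ∀ (u w : ℝ × ℝ → ℝ), Measurable u → Measurable w →
      Measurable (fun q => rhsF α n l (u q) (w q)) := fun u w hu hw => by
    unfold rhsF; fun_prop
  simp_rw [lint_unit]
  rw [lintegral_lintegral_swap]
  swap
  · refine Measurable.aemeasurable ?_
    simp only [Function.uncurry_def]
    refine Measurable.mul (by fun_prop) (ENNReal.measurable_ofReal.comp
      (hm2 _ _ (by fun_prop) (by fun_prop)))
  have h1 : ∀ v ∈ Ioi (0 : ℝ), (∫⁻ h in Ioi (0 : ℝ), ENNReal.ofReal (1 / (1 + v) ^ 2) *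
        ENNReal.ofReal (rhsF α n l h (1 / (1 + v))))
      = ∫⁻ t in Ioi (0 : ℝ), ENNReal.ofReal
          (Real.exp α * t ^ (-(1 / 2) : ℝ) * fHalf t * Real.exp (-α ^ 2 * t)) *
          ENNReal.ofReal (v ^ ((l + 1 / 2 : ℝ) - 1) * (1 + v) ^ (-(((n + l : ℕ) : ℝ) + 1)) *
            Real.exp (-(α ^ 2 * t) * v)) := by
    intro v hv
    have hv' : (0 : ℝ) < v := hv
    have hv1 : (0 : ℝ) < 1 + v := by positivity
    rw [lint_scale (1 + v) hv1]
    refine setLIntegral_congr_fun measurableSet_Ioi fun t ht => ?_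
    have ht' : (0 : ℝ) < t := ht
    have hf := fHalf_nonneg ht'
    rw [← ENNReal.ofReal_mul (by positivity), ← ENNReal.ofReal_mul (by positivity),
      ← ENNReal.ofReal_mul (by positivity)]
    congr 1
    unfold rhsF
    have e1 : (1 + v) * t * (1 / (1 + v)) = t := by field_simp
    have e2 : 1 - 1 / (1 + v) = v / (1 + v) := by field_simp; ring
    have e3 : -((1 + v) * t) * α ^ 2 + α = α + (-α ^ 2 * t + -(α ^ 2 * t) * v) := by ring
    rw [e1, e2, e3, Real.exp_add, Real.exp_add, Real.mul_rpow hv1.le ht'.le,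
      Real.div_rpow hv'.le hv1.le,
      show ((l + 1 / 2 : ℝ) - 1) = l - 1 / 2 by ring]
    have e4 : (1 + v) * (1 / (1 + v) ^ 2 * ((1 + v) ^ (-(1 / 2) : ℝ) * (1 / (1 + v)) ^ n /
        (1 + v) ^ ((l : ℝ) - 1 / 2))) = (1 + v) ^ (-(((n + l : ℕ) : ℝ) + 1)) := by
      have a1 : (1 / (1 + v)) ^ n = (1 + v) ^ (-(n : ℝ)) := by
        rw [Real.rpow_neg hv1.le, Real.rpow_natCast, one_div, inv_pow]
      have a2 : 1 / (1 + v) ^ 2 = (1 + v) ^ (-2 : ℝ) := by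
        rw [Real.rpow_neg hv1.le, one_div]; norm_num
      have a3 : (1 + v) ^ (-(((n + l : ℕ) : ℝ) + 1)) = (1 + v) ^ (1 : ℝ) * ((1 + v) ^ (-2 : ℝ) *
          ((1 + v) ^ (-(1 / 2) : ℝ) * (1 + v) ^ (-(n : ℝ)) / (1 + v) ^ ((l : ℝ) - 1 / 2))) := by
        rw [← Real.rpow_add hv1, ← Real.rpow_sub hv1, ← Real.rpow_add hv1, ← Real.rpow_add hv1]
        congr 1
        push_cast
        ring
      rw [a3, a1, a2, Real.rpow_one]
    rw [← e4]
    ring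
  rw [setLIntegral_congr_fun measurableSet_Ioi h1, lintegral_lintegral_swap]
  swap
  · refine Measurable.aemeasurable ?_
    simp only [Function.uncurry_def]
    fun_prop
  refine lintegral_congr fun t => ?_
  rw [lintegral_const_mul _ (by fun_prop)]
  rfl

/-- The integrand of the left-hand side. -/
noncomputable def lhsF (α : ℝ) (N n m : ℕ) (x : ℝ) : ℝ :=
  x ^ m * ((1 / 2 + x) ^ (m + 1))⁻¹ * (α * Real.sqrt (1 + 2 * x)) *
    (Real.exp (-(α * Real.sqrt (1 + 2 * x))) * gPoly (N + 1) n (α * Real.sqrt (1 + 2 * x)))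

open Set in
lemma lhsF_eq (α : ℝ) (hα : 0 < α) (N n m : ℕ) (hn : n ≤ N) (x : ℝ) (hx : 0 < x) :
    lhsF α N n m x = ∫ t in Ioi (0 : ℝ), x ^ m * ((1 / 2 + x) ^ (m + 1))⁻¹ *
      (α * Real.sqrt (1 + 2 * x)) * (α ^ 2 * (1 + 2 * x)) ^ n *
      (t ^ n * Real.exp (-(α ^ 2 * (1 + 2 * x)) * t) * fHalf t) := by
  have hl : 0 < α ^ 2 * (1 + 2 * x) := by positivity
  have h := laplace_n N n hn _ hl
  rw [stableMeas_integral] at h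
  have hs : Real.sqrt (α ^ 2 * (1 + 2 * x)) = α * Real.sqrt (1 + 2 * x) := by
    rw [Real.sqrt_mul (by positivity), Real.sqrt_sq hα.le]
  rw [integral_const_mul, h, hs]
  unfold lhsF
  field_simp

open Set in
lemma lhsF_nonneg (α : ℝ) (hα : 0 < α) (N n m : ℕ) (hn : n ≤ N) (x : ℝ) (hx : 0 < x) :
    0 ≤ lhsF α N n m x := by
  rw [lhsF_eq α hα N n m hn x hx]
  refine setIntegral_nonneg measurableSet_Ioi fun t ht => ?_
  have ht' : (0 : ℝ) < t := ht
  have hf := fHalf_nonneg ht'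
  positivity

open Set in
lemma lhs_lint (α : ℝ) (hα : 0 < α) (N n l : ℕ) (hn : n ≤ N) :
    ∫⁻ x in Ioi (0 : ℝ), ENNReal.ofReal (lhsF α N n (n + l) x)
      = ∫⁻ t in Ioi (0 : ℝ), ENNReal.ofReal
          (α ^ (2 * n + 1) * t ^ n * fHalf t * Real.exp (-α ^ 2 * t)) *
          kInt ((n + l : ℕ) + 1) (l + 1 / 2) (α ^ 2 * t) := by
  have h0 : ∀ x ∈ Ioi (0 : ℝ), ENNReal.ofReal (lhsF α N n (n + l) x)
      = ∫⁻ t in Ioi (0 : ℝ), ENNReal.ofReal (x ^ (n + l) * ((1 / 2 + x) ^ (n + l + 1))⁻¹ *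
      (α * Real.sqrt (1 + 2 * x)) * (α ^ 2 * (1 + 2 * x)) ^ n *
      (t ^ n * Real.exp (-(α ^ 2 * (1 + 2 * x)) * t) * fHalf t)) := by
    intro x hx
    have hx' : (0 : ℝ) < x := hx
    have hl : 0 < α ^ 2 * (1 + 2 * x) := by positivity
    rw [lhsF_eq α hα N n (n + l) hn x hx, ofReal_integral_eq_lintegral_ofReal]
    · exact (laplace_int n _ hl).const_mul _
    · refine (ae_restrict_mem measurableSet_Ioi).mono fun t ht => ?_
      have ht' : (0 : ℝ) < t := ht
      have hf := fHalf_nonneg ht'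
      simp only [Pi.zero_apply]
      positivity
  rw [setLIntegral_congr_fun measurableSet_Ioi h0, lint_scale (1 / 2) (by norm_num)]
  have h1 : ∀ v ∈ Ioi (0 : ℝ), (ENNReal.ofReal (1 / 2) * ∫⁻ t in Ioi (0 : ℝ),
      ENNReal.ofReal ((1 / 2 * v) ^ (n + l) * ((1 / 2 + 1 / 2 * v) ^ (n + l + 1))⁻¹ *
      (α * Real.sqrt (1 + 2 * (1 / 2 * v))) * (α ^ 2 * (1 + 2 * (1 / 2 * v))) ^ n *
      (t ^ n * Real.exp (-(α ^ 2 * (1 + 2 * (1 / 2 * v))) * t) * fHalf t)))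
      = ∫⁻ t in Ioi (0 : ℝ), ENNReal.ofReal
          (α ^ (2 * n + 1) * t ^ n * fHalf t * Real.exp (-α ^ 2 * t)) *
          ENNReal.ofReal (v ^ ((((n + l : ℕ) : ℝ) + 1) - 1) * (1 + v) ^ (-((l : ℝ) + 1 / 2)) *
            Real.exp (-(α ^ 2 * t) * v)) := by
    intro v hv
    have hv' : (0 : ℝ) < v := hv
    have hv1 : (0 : ℝ) < 1 + v := by positivity
    rw [← lintegral_const_mul _ (by fun_prop)]
    refine setLIntegral_congr_fun measurableSet_Ioi fun t ht => ?_
    have ht' : (0 : ℝ) < t := ht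
    have hf := fHalf_nonneg ht'
    rw [← ENNReal.ofReal_mul (by positivity), ← ENNReal.ofReal_mul (by positivity)]
    congr 1
    have e1 : 1 + 2 * (1 / 2 * v) = 1 + v := by ring
    have e2 : (1 / 2 + 1 / 2 * v) = (1 + v) / 2 := by ring
    have e3 : -(α ^ 2 * (1 + v)) * t = -α ^ 2 * t + -(α ^ 2 * t) * v := by ring
    have e4 : (1 + v) ^ (-((l : ℝ) + 1 / 2)) =
        ((1 + v) ^ (n + l + 1))⁻¹ * Real.sqrt (1 + v) * (1 + v) ^ n := by
      rw [Real.sqrt_eq_rpow, ← Real.rpow_natCast, ← Real.rpow_natCast, ← Real.rpow_neg hv1.le,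
        ← Real.rpow_add hv1, ← Real.rpow_add hv1]
      congr 1
      push_cast
      ring
    rw [e1, e2, e3, e4, Real.exp_add, add_sub_cancel_right, Real.rpow_natCast]
    generalize Real.sqrt (1 + v) = S
    generalize Real.exp (-α ^ 2 * t) = E1
    generalize Real.exp (-(α ^ 2 * t) * v) = E2
    generalize fHalf t = f
    rw [div_pow, mul_pow, mul_pow, one_div, inv_pow]
    field_simp
    ring
  rw [setLIntegral_congr_fun measurableSet_Ioi h1, lintegral_lintegral_swap]
  swap
  · refine Measurable.aemeasurable ?_
    simp only [Function.uncurry_def]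
    fun_prop
  refine lintegral_congr fun t => ?_
  rw [lintegral_const_mul _ (by fun_prop)]
  rfl

open Set in
lemma lint_main (α : ℝ) (hα : 0 < α) (N n l : ℕ) (hn : n ≤ N) :
    ENNReal.ofReal (Real.exp α / Real.Gamma ((n + l : ℕ) + 1)) *
      ∫⁻ x in Ioi (0 : ℝ), ENNReal.ofReal (lhsF α N n (n + l) x)
    = ENNReal.ofReal (1 / Real.Gamma (l + 1 / 2)) *
      ∫⁻ h in Ioi (0 : ℝ), ∫⁻ p in Ioo (0 : ℝ) 1, ENNReal.ofReal (rhsF α n l h p) := by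
  rw [lhs_lint α hα N n l hn, rhs_lint α n l, ← lintegral_const_mul' _ _ (by simp),
    ← lintegral_const_mul' _ _ (by simp)]
  refine setLIntegral_congr_fun measurableSet_Ioi fun t ht => ?_
  have ht' : (0 : ℝ) < t := ht
  have hf := fHalf_nonneg ht'
  have ha : (0 : ℝ) < ((n + l : ℕ) : ℝ) + 1 := by positivity
  have ha' : (0 : ℝ) < (l : ℝ) + 1 / 2 := by positivity
  have hc : 0 < α ^ 2 * t := by positivity
  have hk := kummer_s15 _ _ _ ha ha' hc
  have hG := Real.Gamma_pos_of_pos ha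
  have hG' := Real.Gamma_pos_of_pos ha'
  set a : ℝ := ((n + l : ℕ) : ℝ) + 1 with hadef
  set a' : ℝ := (l : ℝ) + 1 / 2 with hadef'
  have hk2 := congrArg (fun z => ENNReal.ofReal (Real.exp α * fHalf t * Real.exp (-α ^ 2 * t) *
    t ^ (-(1 / 2) : ℝ) * (α ^ 2 * t) ^ a / (Real.Gamma a * Real.Gamma a')) * z) hk
  simp only [← mul_assoc] at hk2
  rw [← ENNReal.ofReal_mul (by positivity), ← ENNReal.ofReal_mul (by positivity)] at hk2
  rw [← mul_assoc, ← mul_assoc, ← ENNReal.ofReal_mul (by positivity),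
    ← ENNReal.ofReal_mul (by positivity)]
  convert! hk2 using 3
  · have e1 : t ^ (-(1 / 2) : ℝ) * ((α ^ 2 * t) ^ a * (α ^ 2 * t) ^ (-a')) =
        α ^ (2 * n + 1) * t ^ n := by
      rw [← Real.rpow_add hc, Real.mul_rpow (by positivity) ht'.le, ← Real.rpow_natCast α 2,
        ← Real.rpow_mul hα.le, mul_left_comm, ← Real.rpow_add ht', ← Real.rpow_natCast,
        ← Real.rpow_natCast]
      congr 2
      · rw [hadef, hadef']; push_cast; ring
      · rw [hadef, hadef']; push_cast; ring
    have e2 : Real.exp α / Real.Gamma a * (α ^ (2 * n + 1) * t ^ n * fHalf t *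
        Real.exp (-α ^ 2 * t)) = Real.exp α / Real.Gamma a * ((t ^ (-(1 / 2) : ℝ) *
        ((α ^ 2 * t) ^ a * (α ^ 2 * t) ^ (-a'))) * fHalf t * Real.exp (-α ^ 2 * t)) := by
      rw [e1]
    rw [e2]
    field_simp
  · rw [Real.rpow_neg hc.le]
    field_simp

/-! ### From Bochner integrals to Lebesgue integrals -/

lemma lhsF_measurable (α : ℝ) (N n m : ℕ) : Measurable (lhsF α N n m) := by
  unfold lhsF gPoly
  fun_prop

lemma fHalf_le {t : ℝ} (ht : 0 < t) : fHalf t ≤ 1 / (2 * Real.sqrt Real.pi) * (32 * Real.sqrt t) := by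
  have hpi : 0 < Real.sqrt Real.pi := Real.sqrt_pos.2 Real.pi_pos
  unfold fHalf
  rw [mul_assoc]
  refine mul_le_mul_of_nonneg_left ?_ (by positivity)
  have h1 := Real.pow_div_factorial_le_exp (x := 1 / (4 * t)) (by positivity) 2
  have h2 : Real.exp (-1 / (4 * t)) ≤ 32 * t ^ 2 := by
    rw [show -1 / (4 * t) = -(1 / (4 * t)) by ring, Real.exp_neg]
    refine inv_le_of_inv_le₀ (by positivity) (le_trans (le_of_eq ?_) h1)
    simp [Nat.factorial]
    field_simp
    norm_num
  calc t ^ (-(3 / 2) : ℝ) * Real.exp (-1 / (4 * t))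
      ≤ t ^ (-(3 / 2) : ℝ) * (32 * t ^ 2) := by gcongr
    _ = 32 * (t ^ (-(3 / 2) : ℝ) * t ^ (2 : ℝ)) := by norm_num; ring
    _ = 32 * Real.sqrt t := by
      rw [← Real.rpow_add ht, Real.sqrt_eq_rpow]; norm_num

open Set in
lemma rhs_int (α : ℝ) (n l : ℕ) (hl : 1 ≤ l) :
    ∫ h in Ioi (0 : ℝ), ∫ p in Ioo (0 : ℝ) 1, rhsF α n l h p
      = (∫⁻ h in Ioi (0 : ℝ), ∫⁻ p in Ioo (0 : ℝ) 1, ENNReal.ofReal (rhsF α n l h p)).toReal := by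
  have hm : Measurable (fun q : ℝ × ℝ => rhsF α n l q.1 q.2) := by
    unfold rhsF; fun_prop
  have hm1 : ∀ h, Measurable (fun p => rhsF α n l h p) := fun p => by
    unfold rhsF; fun_prop
  have hl' : (1 : ℝ) ≤ l := by exact_mod_cast hl
  have hnn : ∀ h ∈ Ioi (0 : ℝ), ∀ p ∈ Ioo (0 : ℝ) 1, 0 ≤ rhsF α n l h p := by
    intro h hh p hp
    have h1 : (0 : ℝ) < h := hh
    have h2 := hp.1
    have h3 : 0 < 1 - p := by linarith [hp.2]
    have hf := fHalf_nonneg (mul_pos h1 h2)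
    unfold rhsF
    positivity
  have hint : ∀ h ∈ Ioi (0 : ℝ), IntegrableOn (fun p => rhsF α n l h p) (Ioo 0 1) := by
    intro h hh
    have h1 : (0 : ℝ) < h := hh
    refine Measure.integrableOn_of_bounded (M := h ^ (-(1 / 2) : ℝ) *
      (1 / (2 * Real.sqrt Real.pi) * (32 * Real.sqrt h)) * Real.exp (-h * α ^ 2 + α) * 1 * 1)
      (by simp) (hm1 h).aestronglyMeasurable ?_
    refine (ae_restrict_mem measurableSet_Ioo).mono fun p hp => ?_
    have h2 := hp.1
    have h3 : 0 < 1 - p := by linarith [hp.2]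
    have hf := fHalf_nonneg (mul_pos h1 h2)
    rw [Real.norm_of_nonneg (hnn h hh p hp)]
    unfold rhsF
    have hb : fHalf (h * p) ≤ 1 / (2 * Real.sqrt Real.pi) * (32 * Real.sqrt h) := by
      refine (fHalf_le (mul_pos h1 h2)).trans ?_
      have : Real.sqrt (h * p) ≤ Real.sqrt h := Real.sqrt_le_sqrt (by nlinarith [hp.2])
      gcongr
    have hb2 : p ^ n ≤ 1 := pow_le_one₀ h2.le hp.2.le
    have hb3 : (1 - p) ^ ((l : ℝ) - 1 / 2) ≤ 1 :=
      Real.rpow_le_one h3.le (by linarith) (by linarith)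
    gcongr
  rw [integral_eq_lintegral_of_nonneg_ae]
  · congr 1
    refine setLIntegral_congr_fun measurableSet_Ioi fun h hh => ?_
    rw [ofReal_integral_eq_lintegral_ofReal (hint h hh)]
    exact (ae_restrict_mem measurableSet_Ioo).mono fun p hp => hnn h hh p hp
  · exact (ae_restrict_mem measurableSet_Ioi).mono fun h hh =>
      setIntegral_nonneg measurableSet_Ioo (hnn h hh)
  · exact (hm.stronglyMeasurable.integral_prod_right
      (f := fun h p => rhsF α n l h p)).aestronglyMeasurable

/-- The summand of the left-hand side, after normalization. -/
noncomputable def lhsT (α : ℝ) (m j : ℕ) (x : ℝ) : ℝ :=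
  x ^ m * ((1 / 2 + x) ^ (m + 1))⁻¹ * (α * Real.sqrt (1 + 2 * x)) ^ (j + 1) *
    Real.exp (-(α * Real.sqrt (1 + 2 * x)))

open Set in
lemma lhsT_int (α : ℝ) (hα : 0 < α) (m j : ℕ) : IntegrableOn (lhsT α m j) (Ioi (0 : ℝ)) := by
  have hb : IntegrableOn (fun x : ℝ => ((j + 3).factorial / (2 * α ^ 2) : ℝ) *
      (x + 1 / 2) ^ (-2 : ℝ)) (Ioi 0) :=
    (integrableOn_add_rpow_Ioi_of_lt (by norm_num) (by norm_num)).const_mul _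
  refine Integrable.mono' hb ?_ ?_
  · refine Measurable.aestronglyMeasurable ?_
    unfold lhsT; fun_prop
  refine (ae_restrict_mem measurableSet_Ioi).mono fun x hx => ?_
  have hx' : (0 : ℝ) < x := hx
  rw [Real.norm_of_nonneg (by unfold lhsT; positivity)]
  unfold lhsT
  have hs : (0 : ℝ) < 1 / 2 + x := by positivity
  have hq := Real.sq_sqrt (by positivity : (0 : ℝ) ≤ 1 + 2 * x)
  have hq0 : 0 < Real.sqrt (1 + 2 * x) := Real.sqrt_pos.2 (by positivity)
  set y := α * Real.sqrt (1 + 2 * x) with hy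
  have hy0 : 0 < y := by positivity
  have hy2 : y ^ 2 = 2 * α ^ 2 * (1 / 2 + x) := by rw [hy, mul_pow, hq]; ring
  have h1 := Real.pow_div_factorial_le_exp (x := y) hy0.le (j + 3)
  have hfac : (0 : ℝ) < (j + 3).factorial := by exact_mod_cast Nat.factorial_pos _
  have h2 : y ^ (j + 1) * Real.exp (-y) ≤ (j + 3).factorial / y ^ 2 := by
    rw [Real.exp_neg, ← div_eq_mul_inv, div_le_div_iff₀ (Real.exp_pos _) (by positivity),
      ← pow_add]
    rw [div_le_iff₀ hfac] at h1
    rw [show j + 1 + 2 = j + 3 by ring]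
    linarith
  have h3 : x ^ m * ((1 / 2 + x) ^ (m + 1))⁻¹ ≤ (1 / 2 + x)⁻¹ := by
    calc x ^ m * ((1 / 2 + x) ^ (m + 1))⁻¹ ≤ (1 / 2 + x) ^ m * ((1 / 2 + x) ^ (m + 1))⁻¹ := by
          gcongr; linarith
      _ = (1 / 2 + x)⁻¹ := by rw [pow_succ]; field_simp
  calc x ^ m * ((1 / 2 + x) ^ (m + 1))⁻¹ * y ^ (j + 1) * Real.exp (-y)
      = (x ^ m * ((1 / 2 + x) ^ (m + 1))⁻¹) * (y ^ (j + 1) * Real.exp (-y)) := by ring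
    _ ≤ (1 / 2 + x)⁻¹ * ((j + 3).factorial / y ^ 2) := by gcongr
    _ = ((j + 3).factorial / (2 * α ^ 2) : ℝ) * (x + 1 / 2) ^ (-2 : ℝ) := by
      rw [hy2, add_comm x, Real.rpow_neg hs.le, Real.rpow_two]
      field_simp

open Set in
lemma vhalf_eq (α : ℝ) (m j : ℕ) :
    Vhalf (m + 1) (j + 1) α * 2 ^ j = Real.exp α / (2 * Real.Gamma ((m : ℝ) + 1)) *
      ∫ x in Ioi (0 : ℝ), lhsT α m j x := by
  unfold Vhalf
  rw [← integral_const_mul, ← integral_const_mul, ← integral_mul_const]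
  refine setIntegral_congr_fun measurableSet_Ioi fun x hx => ?_
  have hx' : (0 : ℝ) < x := hx
  have hs : (0 : ℝ) < 1 / 2 + x := by positivity
  unfold lhsT
  have hG := Real.Gamma_pos_of_pos (by positivity : (0 : ℝ) < (m : ℝ) + 1)
  have e1 : (1 / 2 + x) ^ (-((((m + 1 : ℕ) : ℝ)) - ((j + 1 : ℕ) : ℝ) / 2))
      = ((1 / 2 + x) ^ (m + 1))⁻¹ * (Real.sqrt (1 / 2 + x)) ^ (j + 1) := by
    rw [Real.sqrt_eq_rpow, ← Real.rpow_natCast, ← Real.rpow_natCast, ← Real.rpow_mul hs.le,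
      ← Real.rpow_neg hs.le, ← Real.rpow_add hs]
    congr 1
    ring
  have e2 : Real.sqrt (1 + 2 * x) = Real.sqrt 2 * Real.sqrt (1 / 2 + x) := by
    rw [← Real.sqrt_mul (by norm_num)]
    congr 1
    ring
  have e3 : Real.exp (-α * (Real.sqrt (1 + 2 * x) - 1))
      = Real.exp α * Real.exp (-(α * Real.sqrt (1 + 2 * x))) := by
    rw [← Real.exp_add]
    congr 1
    ring
  have h2 : (0 : ℝ) < Real.sqrt 2 := Real.sqrt_pos.2 two_pos
  have hsq : Real.sqrt 2 ^ 2 = 2 := Real.sq_sqrt two_pos.le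
  have e4 : (α / Real.sqrt 2) ^ (j + 1) * 2 ^ (j + 1) = (α * Real.sqrt 2) ^ (j + 1) := by
    rw [← mul_pow]
    congr 1
    field_simp
    rw [hsq]
  simp only [Nat.add_sub_cancel]
  rw [e1, e3]
  generalize Real.exp (-(α * Real.sqrt (1 + 2 * x))) = E
  rw [e2, ← mul_assoc α, mul_pow (α * Real.sqrt 2), ← e4]
  push_cast
  rw [pow_succ 2 j]
  field_simp

open Set in
lemma sum_eq (α : ℝ) (hα : 0 < α) (N n : ℕ) :
    ∑ k ∈ Finset.Icc 1 (N + 1), Vhalf (N + 1 + 1) k α * 2 ^ (k - 1) *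
        genFactCoeff n (k - 1) (1 / 2)
      = Real.exp α / (2 * Real.Gamma (((N + 1 : ℕ) : ℝ) + 1)) *
        ∫ x in Ioi (0 : ℝ), lhsF α N n (N + 1) x := by
  have h0 : ∑ k ∈ Finset.Icc 1 (N + 1), Vhalf (N + 1 + 1) k α * 2 ^ (k - 1) *
        genFactCoeff n (k - 1) (1 / 2)
      = ∑ j ∈ Finset.range (N + 1), Vhalf (N + 1 + 1) (j + 1) α * 2 ^ j *
        genFactCoeff n j (1 / 2) := by
    refine Finset.sum_nbij' (fun k => k - 1) (fun j => j + 1) ?_ ?_ ?_ ?_ ?_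
    · intro k hk; simp only [Finset.mem_Icc, Finset.mem_range] at *; omega
    · intro k hk; simp only [Finset.mem_Icc, Finset.mem_range] at *; omega
    · intro k hk; simp only [Finset.mem_Icc] at *; omega
    · intro k hk; simp
    · intro k hk
      simp only [Finset.mem_Icc] at hk
      rw [Nat.sub_add_cancel hk.1]
  rw [h0]
  have h1 : ∀ x, lhsF α N n (N + 1) x
      = ∑ j ∈ Finset.range (N + 1), lhsT α (N + 1) j x * genFactCoeff n j (1 / 2) := by
    intro x
    unfold lhsF gPoly lhsT
    rw [Finset.mul_sum, Finset.mul_sum]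
    refine Finset.sum_congr rfl fun j _ => ?_
    ring
  simp_rw [h1]
  rw [integral_finsetSum _ fun j _ => (lhsT_int α hα (N + 1) j).mul_const _, Finset.mul_sum]
  refine Finset.sum_congr rfl fun j _ => ?_
  rw [vhalf_eq, integral_mul_const]
  ring

/-- Case `0 < ℓ < m`, `σ = 1/2` of Lemma A.1: the probability that the next token
equals a symbol currently seen `ℓ` times under the NGGP with `σ = 1/2`. -/
theorem stmt15 (α : ℝ) (hα : 0 < α) (m ℓ : ℕ) (hℓ : 1 ≤ ℓ) (hℓm : ℓ < m) :
    ((ℓ : ℝ) - 1 / 2) * (m.choose ℓ : ℝ) * risingFactorial (1 / 2) (ℓ - 1) *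
        ∑ k ∈ Finset.Icc 1 m, Vhalf (m + 1) k α * 2 ^ (k - 1) * genFactCoeff (m - ℓ) (k - 1) (1 / 2)
      = ((1 / 2) * ((ℓ : ℝ) - 1 / 2) * (m.choose ℓ : ℝ) * risingFactorial (1 / 2) (ℓ - 1) /
            Real.Gamma ((ℓ : ℝ) + 1 / 2)) *
        ∫ h in Set.Ioi (0 : ℝ), ∫ p in Set.Ioo (0 : ℝ) 1,
          h ^ (-(1 / 2) : ℝ) * fHalf (h * p) * Real.exp (-h * α ^ 2 + α) *
            p ^ (m - ℓ) * (1 - p) ^ ((ℓ : ℝ) - 1 / 2) := by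
  obtain ⟨N, rfl⟩ : ∃ N, m = N + 1 := ⟨m - 1, by omega⟩
  obtain ⟨n, hn⟩ : ∃ n, N + 1 = n + ℓ := ⟨N + 1 - ℓ, by omega⟩
  have hnl : N + 1 - ℓ = n := by omega
  have hnN : n ≤ N := by omega
  have hL := sum_eq α hα N n
  have hM := congrArg ENNReal.toReal (lint_main α hα N n ℓ hnN)
  have hG : 0 < Real.Gamma (((n + ℓ : ℕ) : ℝ) + 1) := Real.Gamma_pos_of_pos (by positivity)
  have hG' : 0 < Real.Gamma ((ℓ : ℝ) + 1 / 2) := Real.Gamma_pos_of_pos (by positivity)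
  rw [ENNReal.toReal_mul, ENNReal.toReal_mul, ENNReal.toReal_ofReal (by positivity),
    ENNReal.toReal_ofReal (by positivity), ← rhs_int α n ℓ hℓ] at hM
  have hI : ∫ x in Set.Ioi (0 : ℝ), lhsF α N n (n + ℓ) x
      = (∫⁻ x in Set.Ioi (0 : ℝ), ENNReal.ofReal (lhsF α N n (n + ℓ) x)).toReal := by
    refine integral_eq_lintegral_of_nonneg_ae ?_ ?_
    · exact (ae_restrict_mem measurableSet_Ioi).mono fun x hx =>
        lhsF_nonneg α hα N n _ hnN x hx
    · exact (lhsF_measurable α N n _).aestronglyMeasurable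
  rw [← hI] at hM
  rw [hnl, hL]
  rw [← hn] at hM hG
  unfold rhsF at hM
  have hM2 : Real.exp α / (2 * Real.Gamma (((N + 1 : ℕ) : ℝ) + 1)) *
      ∫ x in Set.Ioi (0 : ℝ), lhsF α N n (N + 1) x
      = 1 / 2 * (Real.exp α / Real.Gamma (((N + 1 : ℕ) : ℝ) + 1) *
      ∫ x in Set.Ioi (0 : ℝ), lhsF α N n (N + 1) x) := by
    field_simp
  rw [hM2, hM]
  ring
end

section
/- Let α > 0 and let m ≥ 1 be an integer. Then α·2^{m}·∫_0^∞ x^{m}·(1 + 2x)^{−(m + 1/2)}·exp(−α·(√(1+2x) − 1)) dx = ∫_0^∞ ∫_0^1 exp(−(x/y)·α² + α)·( Γ(m+1)/(Γ(1/2)·Γ(m + 1/2)) )·y^{−1/2}·(1−y)^{m−1/2}·(1/4)·x^{−2}·exp(−1/(4x)) dy dx. Equivalently, the probability p_{f_v}(m; m, α, 1/2) equals ((1/2)_{(m)}/Γ(m+1))·E[exp(−(X/Y)·α² + α)], where Y is Beta(1/2, m + 1/2) distributed and X is an independent random variable with density (Γ(3/2)/Γ(2))·x^{−1/2}·f_{1/2}(x)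 = (1/4)·x^{−2}·exp(−1/(4x)) on (0,∞). -/
open MeasureTheory

lemma aux_cv (f f' g h : ℝ → ℝ) (s t : Set ℝ) (hs : MeasurableSet s) (hst : f '' s = t)
    (hf : ∀ x ∈ s, HasDerivAt f (f' x) x) (hinj : Set.InjOn f s)
    (hgh : ∀ x ∈ s, |f' x| * g (f x) = h x) :
    ∫⁻ x in t, ENNReal.ofReal (g x) = ∫⁻ x in s, ENNReal.ofReal (h x) := by
  rw [← hst, lintegral_image_eq_lintegral_abs_deriv_mul hs
    (fun x hx => (hf x hx).hasDerivWithinAt) hinj]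
  refine setLIntegral_congr_fun hs (fun x hx => ?_)
  try simp only
  rw [← ENNReal.ofReal_mul (abs_nonneg _), hgh x hx]

lemma aux_beta_s16 (a : ℝ) (ha : 0 < a) (ha1 : a < 1) (m : ℕ) (D : ℝ) (hD : 0 ≤ D) :
    ∫⁻ y in Set.Ioo a 1, ENNReal.ofReal (D *
      ((Real.Gamma ((m : ℝ) + 1) / (Real.Gamma (1 / 2) * Real.Gamma ((m : ℝ) + 1 / 2))) *
        (1 - y) ^ ((m : ℝ) - 1 / 2) * (y - a) ^ (-(1 / 2) : ℝ))) =
    ENNReal.ofReal (D * (1 - a) ^ m) := by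
  have h1a : 0 < 1 - a := by linarith
  have hone := ProbabilityTheory.lintegral_betaPDF_eq_one (α := 1/2) (β := (m:ℝ) + 1/2)
    (by norm_num) (by positivity)
  rw [ProbabilityTheory.lintegral_betaPDF] at hone
  rw [aux_cv (fun w => a + (1 - a) * w) (fun _ => 1 - a) _
    (fun w => (D * (1 - a) ^ m) * (1 / ProbabilityTheory.beta (1/2) ((m:ℝ) + 1/2) * w ^ ((1/2 : ℝ) - 1) *
      (1 - w) ^ ((m:ℝ) + 1/2 - 1))) (Set.Ioo 0 1) _ measurableSet_Ioo]
  · simp_rw [ENNReal.ofReal_mul (show 0 ≤ D * (1 - a) ^ m by positivity)]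
    rw [lintegral_const_mul _ (by fun_prop), hone, mul_one]
  · ext y
    constructor
    · rintro ⟨w, ⟨h0, h1⟩, rfl⟩
      constructor <;> simp only <;> nlinarith
    · rintro ⟨h0, h1⟩
      refine ⟨(y - a) / (1 - a), ⟨by apply div_pos <;> linarith, by rw [div_lt_one h1a]; linarith⟩, ?_⟩
      try simp only
      field_simp
      ring
  · intro x _
    simpa using ((hasDerivAt_id x).const_mul (1 - a)).const_add a
  · intro x _ y _ h
    simpa [h1a.ne'] using h
  · rintro w ⟨h0, h1⟩
    have e1 : 1 - (a + (1 - a) * w) = (1 - a) * (1 - w) := by ring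
    have e2 : a + (1 - a) * w - a = (1 - a) * w := by ring
    try simp only
    rw [e1, e2, Real.mul_rpow h1a.le (by linarith), Real.mul_rpow h1a.le h0.le, abs_of_pos h1a]
    have e3 : (1 - a) * (1 - a) ^ ((m:ℝ) - 1/2) * (1 - a) ^ (-(1/2) : ℝ) = (1 - a) ^ m := by
      nth_rewrite 1 [← Real.rpow_one (1 - a)]
      rw [← Real.rpow_add h1a, ← Real.rpow_add h1a, ← Real.rpow_natCast]
      congr 1; ring
    rw [← e3, ProbabilityTheory.beta, show (1/2 : ℝ) - 1 = -(1/2) by norm_num,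
      show (m:ℝ) + 1/2 - 1 = m - 1/2 by ring, show (1/2:ℝ) + (m + 1/2) = m + 1 by ring, one_div_div]
    ring

lemma aux_K (z : ℝ) (hz : 0 < z) (D : ℝ) (hD : 0 ≤ D) :
    ∫⁻ x in Set.Ioi (0:ℝ), ENNReal.ofReal (D *
      (Real.exp (-(z ^ 2 * x)) * ((1 / 4) * x ^ (-(2 : ℝ)) * Real.exp (-1 / (4 * x))))) =
    ∫⁻ t in Set.Ioi (1:ℝ), ENNReal.ofReal (D * (z * (t / Real.sqrt (t ^ 2 - 1)) * Real.exp (-(z * t)))) := by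
  set q : ℝ → ℝ := fun u => D * (z / 2 * Real.exp (-u) * Real.exp (-(z * Real.cosh u))) with hq
  have hqm : Measurable q := by fun_prop
  have hqn : ∀ u, 0 ≤ q u := fun u => by positivity
  rw [aux_cv (fun u => Real.exp u / (2 * z)) (fun u => Real.exp u / (2 * z)) _ q
    Set.univ _ MeasurableSet.univ]
  · have e1 : ∫⁻ u in Set.univ, ENNReal.ofReal (q u) =
        (∫⁻ u in Set.Ioi (0:ℝ), ENNReal.ofReal (q u)) +
          (∫⁻ u in Set.Iio (0:ℝ), ENNReal.ofReal (q u)) := by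
      rw [Measure.restrict_univ, ← lintegral_add_compl _ (measurableSet_Ioi (a := (0:ℝ))), Set.compl_Ioi,
        setLIntegral_congr (Iio_ae_eq_Iic (a := (0:ℝ)))]
    have e2 : ∫⁻ u in Set.Iio (0:ℝ), ENNReal.ofReal (q u) =
        ∫⁻ u in Set.Ioi (0:ℝ), ENNReal.ofReal (q (-u)) := by
      apply aux_cv (fun u => -u) (fun _ => -1) _ _ _ _ measurableSet_Ioi
      · simp
      · intro x _; exact hasDerivAt_neg x
      · intro x _ y _ h; simpa using h
      · intro x _; simp
    rw [e1, e2, ← lintegral_add_left hqm.ennreal_ofReal]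
    symm
    rw [aux_cv Real.cosh Real.sinh _ (fun u => q u + q (-u)) (Set.Ioi 0) _ measurableSet_Ioi]
    · refine lintegral_congr fun u => ?_
      exact ENNReal.ofReal_add (hqn _) (hqn _)
    · ext t
      constructor
      · rintro ⟨u, hu, rfl⟩
        exact Real.one_lt_cosh.2 (ne_of_gt hu)
      · intro ht
        exact ⟨Real.arcosh t, Real.arcosh_pos ht, Real.cosh_arcosh (le_of_lt ht)⟩
    · intro x _; exact Real.hasDerivAt_cosh x
    · exact Real.cosh_injOn.mono Set.Ioi_subset_Ici_self
    · intro u hu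
      have hs : 0 < Real.sinh u := Real.sinh_pos_iff.2 hu
      have : Real.sqrt (Real.cosh u ^ 2 - 1) = Real.sinh u := by
        rw [Real.cosh_sq, add_sub_cancel_right, Real.sqrt_sq hs.le]
      simp only [hq]
      rw [this, abs_of_pos hs, Real.cosh_neg, neg_neg]
      have h2 : Real.exp (-u) + Real.exp u = 2 * Real.cosh u := by rw [Real.cosh_eq]; ring
      field_simp
      linear_combination (-D) * h2
  · ext x
    constructor
    · rintro ⟨u, _, rfl⟩
      show 0 < Real.exp u / (2 * z)
      positivity
    · intro hx
      have hx : 0 < x := hx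
      refine ⟨Real.log (2 * z * x), trivial, ?_⟩
      try simp only
      rw [Real.exp_log (by positivity)]
      field_simp
  · intro x _
    exact (Real.hasDerivAt_exp x).div_const _
  · intro x _ y _ h
    simp only at h
    rw [div_left_inj' (by positivity)] at h
    exact Real.exp_injective h
  · intro u _
    simp only [hq]
    have hE := Real.exp_pos u
    rw [abs_of_pos (by positivity), Real.rpow_neg (by positivity), Real.rpow_ofNat]
    have h3 : Real.exp (-(z * Real.cosh u)) =
      Real.exp (-(z ^ 2 * (Real.exp u / (2 * z)))) * Real.exp (-1 / (4 * (Real.exp u / (2 * z)))) := by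
      rw [← Real.exp_add, Real.cosh_eq, Real.exp_neg u]
      congr 1
      field_simp
      ring
    rw [h3, Real.exp_neg u]
    field_simp
    ring

lemma aux_scale (α : ℝ) (hα : 0 < α) (y : ℝ) (hy : 0 < y) (D : ℝ) (hD : 0 ≤ D) :
    ∫⁻ x in Set.Ioi (0:ℝ), ENNReal.ofReal (D * y ^ (-(1 / 2) : ℝ) *
      (Real.exp (-(x / y) * α ^ 2) * ((1 / 4) * x ^ (-(2 : ℝ)) * Real.exp (-1 / (4 * x))))) =
    ∫⁻ s in Set.Ioi (1 / Real.sqrt y), ENNReal.ofReal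
      (D * (α * Real.exp (-(α * s)) * (y - 1 / s ^ 2) ^ (-(1 / 2) : ℝ))) := by
  have hsy : 0 < Real.sqrt y := Real.sqrt_pos.2 hy
  have hyy : Real.sqrt y ^ 2 = y := Real.sq_sqrt hy.le
  have hexp : ∀ x, -(x / y) * α ^ 2 = -((α / Real.sqrt y) ^ 2 * x) := fun x => by
    rw [div_pow, hyy]; ring
  simp_rw [hexp]
  rw [aux_K (α / Real.sqrt y) (by positivity) _ (by positivity)]
  apply aux_cv (fun s => Real.sqrt y * s) (fun _ => Real.sqrt y) _ _ _ _ measurableSet_Ioi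
  · ext t
    constructor
    · rintro ⟨s, hs, rfl⟩
      have hs : 1 / Real.sqrt y < s := hs
      rw [div_lt_iff₀ hsy] at hs
      show 1 < Real.sqrt y * s
      linarith
    · intro ht
      refine ⟨t / Real.sqrt y, ?_, by simp only; field_simp⟩
      show 1 / Real.sqrt y < _
      exact div_lt_div_of_pos_right ht hsy
  · intro x _
    simpa using (hasDerivAt_id x).const_mul (Real.sqrt y)
  · intro a _ b _ h
    simpa [hsy.ne'] using h
  · intro s hs
    have hs : 1 / Real.sqrt y < s := hs
    have hs0 : 0 < s := lt_trans (by positivity) hs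
    rw [div_lt_iff₀ hsy] at hs
    have h1 : 1 < s ^ 2 * y := by
      rw [← hyy, ← mul_pow]; nlinarith
    have hb : 0 < y - 1 / s ^ 2 := by
      rw [sub_pos, div_lt_iff₀ (by positivity)]; linarith
    have e : Real.sqrt ((Real.sqrt y * s) ^ 2 - 1) = s * Real.sqrt (y - 1 / s ^ 2) := by
      rw [mul_pow, hyy, show y * s ^ 2 - 1 = s ^ 2 * (y - 1 / s ^ 2) by field_simp,
        Real.sqrt_mul (by positivity), Real.sqrt_sq hs0.le]
    try simp only
    rw [e, abs_of_pos hsy, Real.rpow_neg hy.le, Real.rpow_neg hb.le, ← Real.sqrt_eq_rpow,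
      ← Real.sqrt_eq_rpow, show α / Real.sqrt y * (Real.sqrt y * s) = α * s by field_simp]
    have := Real.sqrt_pos.2 hb
    field_simp

lemma aux_swap (G : ℝ → ℝ → ENNReal) (hG : Measurable (Function.uncurry G)) :
    ∫⁻ y in Set.Ioo (0:ℝ) 1, ∫⁻ s in Set.Ioi (1 / Real.sqrt y), G y s =
    ∫⁻ s in Set.Ioi (1:ℝ), ∫⁻ y in Set.Ioo (1 / s ^ 2) 1, G y s := by
  set T : Set (ℝ × ℝ) := {p | 0 < p.1 ∧ p.1 < 1 ∧ 0 < p.2 ∧ 1 < p.2 ^ 2 * p.1} with hT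
  have hTm : MeasurableSet T := by
    have h1 : MeasurableSet {p : ℝ × ℝ | 0 < p.1} := measurableSet_lt (by fun_prop) (by fun_prop)
    have h2 : MeasurableSet {p : ℝ × ℝ | p.1 < 1} := measurableSet_lt (by fun_prop) (by fun_prop)
    have h3 : MeasurableSet {p : ℝ × ℝ | 0 < p.2} := measurableSet_lt (by fun_prop) (by fun_prop)
    have h4 : MeasurableSet {p : ℝ × ℝ | 1 < p.2 ^ 2 * p.1} :=
      measurableSet_lt (by fun_prop) (by fun_prop)
    exact h1.inter (h2.inter (h3.inter h4))
  have hm : Measurable (T.indicator (Function.uncurry G)) := hG.indicator hTm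
  have hsw := lintegral_lintegral_swap (μ := (volume : Measure ℝ)) (ν := (volume : Measure ℝ))
    (f := fun y s => T.indicator (Function.uncurry G) (y, s)) hm.aemeasurable
  convert hsw using 1
  · rw [← lintegral_indicator measurableSet_Ioo]
    refine lintegral_congr fun y => ?_
    by_cases hy : y ∈ Set.Ioo (0:ℝ) 1
    · rw [Set.indicator_of_mem hy, ← lintegral_indicator measurableSet_Ioi]
      refine lintegral_congr fun s => ?_
      have hsy : 0 < Real.sqrt y := Real.sqrt_pos.2 hy.1
      have hyy : Real.sqrt y ^ 2 = y := Real.sq_sqrt hy.1.le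
      have hiff : s ∈ Set.Ioi (1 / Real.sqrt y) ↔ (y, s) ∈ T := by
        simp only [Set.mem_Ioi, hT, Set.mem_ofPred_eq, hy.1, hy.2, true_and]
        rw [div_lt_iff₀ hsy]
        constructor
        · intro h
          refine ⟨by by_contra hh; nlinarith, ?_⟩
          rw [← hyy, ← mul_pow]; nlinarith
        · rintro ⟨h0, h⟩
          rw [← hyy, ← mul_pow] at h
          have : 0 < s * Real.sqrt y := by positivity
          nlinarith
      by_cases hs : (y, s) ∈ T
      · rw [Set.indicator_of_mem hs, Set.indicator_of_mem (hiff.2 hs)]; rfl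
      · rw [Set.indicator_of_notMem hs, Set.indicator_of_notMem (mt hiff.1 hs)]
    · rw [Set.indicator_of_notMem hy]
      symm
      rw [lintegral_eq_zero_iff' (by fun_prop)]
      refine Filter.Eventually.of_forall fun s => ?_
      exact Set.indicator_of_notMem (fun h => hy ⟨h.1, h.2.1⟩) _
  · rw [← lintegral_indicator measurableSet_Ioi]
    refine lintegral_congr fun s => ?_
    by_cases hs : s ∈ Set.Ioi (1:ℝ)
    · rw [Set.indicator_of_mem hs, ← lintegral_indicator measurableSet_Ioo]
      refine lintegral_congr fun y => ?_
      have hs1 : 1 < s := hs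
      have hiff : y ∈ Set.Ioo (1 / s ^ 2) 1 ↔ (y, s) ∈ T := by
        simp only [Set.mem_Ioo, hT, Set.mem_ofPred_eq]
        rw [div_lt_iff₀ (by positivity)]
        constructor
        · rintro ⟨h, h1⟩
          refine ⟨by by_contra hh; nlinarith [sq_nonneg s], h1, by linarith, by linarith⟩
        · rintro ⟨h0, h1, _, h⟩
          exact ⟨by linarith, h1⟩
      by_cases hy : (y, s) ∈ T
      · rw [Set.indicator_of_mem hy, Set.indicator_of_mem (hiff.2 hy)]; rfl
      · rw [Set.indicator_of_notMem hy, Set.indicator_of_notMem (mt hiff.1 hy)]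
    · rw [Set.indicator_of_notMem hs]
      symm
      rw [lintegral_eq_zero_iff' (by fun_prop)]
      refine Filter.Eventually.of_forall fun y => ?_
      refine Set.indicator_of_notMem (fun h => hs ?_) _
      obtain ⟨h0, h1, h2, h3⟩ := h
      show 1 < s
      simp only at h0 h1 h2 h3
      by_contra hh
      nlinarith [mul_pos h2 h0, sq_nonneg s]

lemma aux_lhs (α : ℝ) (m : ℕ) :
    ∫⁻ x in Set.Ioi (0 : ℝ), ENNReal.ofReal (α * 2 ^ m * (
          x ^ m * (1 + 2 * x) ^ (-((m : ℝ) + 1 / 2)) *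
            Real.exp (-α * (Real.sqrt (1 + 2 * x) - 1)))) =
    ∫⁻ s in Set.Ioi (1 : ℝ), ENNReal.ofReal
      (Real.exp α * (α * Real.exp (-(α * s))) * (1 - 1 / s ^ 2) ^ m) := by
  apply aux_cv (fun s => (s ^ 2 - 1) / 2) (fun s => s) _ _ _ _ measurableSet_Ioi
  · ext x
    constructor
    · rintro ⟨s, hs, rfl⟩
      have hs : 1 < s := hs
      show 0 < (s ^ 2 - 1) / 2
      nlinarith
    · intro hx
      have hx : 0 < x := hx
      refine ⟨Real.sqrt (1 + 2 * x), ?_, ?_⟩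
      · rw [Set.mem_Ioi, Real.lt_sqrt (by norm_num)]; linarith
      · try simp only
        rw [Real.sq_sqrt (by linarith)]; ring
  · intro s _
    have h0 : HasDerivAt (fun s : ℝ => (s ^ 2 - 1) / 2) (((2:ℕ) * s ^ (2 - 1)) / 2) s :=
      ((hasDerivAt_pow 2 s).sub_const 1).div_const 2
    have h1 : (((2:ℕ):ℝ) * s ^ (2 - 1)) / 2 = s := by norm_num
    rw [h1] at h0
    exact h0
  · intro a ha b hb h
    have ha : 1 < a := ha
    have hb : 1 < b := hb
    have h : (a ^ 2 - 1) / 2 = (b ^ 2 - 1) / 2 := h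
    nlinarith
  · intro s hs
    have hs : 1 < s := hs
    have hs0 : 0 < s := by linarith
    have e : 1 + 2 * ((s ^ 2 - 1) / 2) = s ^ 2 := by ring
    try simp only
    rw [e, Real.sqrt_sq hs0.le, abs_of_pos hs0, Real.rpow_neg (by positivity),
      ← Real.rpow_natCast_mul hs0.le]
    have e2 : ((2:ℕ):ℝ) * ((m:ℝ) + 1/2) = ((2 * m + 1 : ℕ) : ℝ) := by push_cast; ring
    rw [e2, Real.rpow_natCast, show -α * (s - 1) = α + -(α * s) by ring, Real.exp_add,
      show 1 - 1 / s ^ 2 = (s ^ 2 - 1) / s ^ 2 by field_simp, div_pow, div_pow, ← pow_mul, pow_succ]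
    field_simp
    ring

theorem stmt16 (α : ℝ) (hα : 0 < α) (m : ℕ) (hm : 1 ≤ m) :
    α * 2 ^ m *
        ∫ x in Set.Ioi (0 : ℝ),
          x ^ m * (1 + 2 * x) ^ (-((m : ℝ) + 1 / 2)) *
            Real.exp (-α * (Real.sqrt (1 + 2 * x) - 1))
      = ∫ x in Set.Ioi (0 : ℝ), ∫ y in Set.Ioo (0 : ℝ) 1,
          Real.exp (-(x / y) * α ^ 2 + α) *
            (Real.Gamma ((m : ℝ) + 1) / (Real.Gamma (1 / 2) * Real.Gamma ((m : ℝ) + 1 / 2))) *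
              y ^ (-(1 / 2) : ℝ) * (1 - y) ^ ((m : ℝ) - 1 / 2) *
            ((1 / 4) * x ^ (-(2 : ℝ)) * Real.exp (-1 / (4 * x))) := by
  set C : ℝ := Real.Gamma ((m : ℝ) + 1) / (Real.Gamma (1 / 2) * Real.Gamma ((m : ℝ) + 1 / 2)) with hC
  have hCpos : 0 < C := div_pos (Real.Gamma_pos_of_pos (by positivity))
    (mul_pos (Real.Gamma_pos_of_pos (by norm_num)) (Real.Gamma_pos_of_pos (by positivity)))
  have hCb : C = 1 / ProbabilityTheory.beta (1/2) ((m:ℝ) + 1/2) := by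
    rw [hC, ProbabilityTheory.beta, one_div_div, show (1/2:ℝ) + (m + 1/2) = m + 1 by ring]
  set F : ℝ → ℝ → ℝ := fun x y => Real.exp (-(x / y) * α ^ 2 + α) * C *
              y ^ (-(1 / 2) : ℝ) * (1 - y) ^ ((m : ℝ) - 1 / 2) *
            ((1 / 4) * x ^ (-(2 : ℝ)) * Real.exp (-1 / (4 * x))) with hF
  have hFm : Measurable (Function.uncurry F) := by
    simp only [hF, Function.uncurry_def]; fun_prop
  have hFn : ∀ x ∈ Set.Ioi (0:ℝ), ∀ y ∈ Set.Ioo (0:ℝ) 1, 0 ≤ F x y := by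
    intro x hx y hy
    have hx : 0 < x := hx
    have hy0 := hy.1
    have hy1 : 0 ≤ 1 - y := by linarith [hy.2]
    simp only [hF]
    positivity
  have hbeta : Integrable (fun y : ℝ => C * y ^ (-(1 / 2) : ℝ) * (1 - y) ^ ((m : ℝ) - 1 / 2))
      (volume.restrict (Set.Ioo 0 1)) := by
    have hone := ProbabilityTheory.lintegral_betaPDF_eq_one (α := 1/2) (β := (m:ℝ) + 1/2)
      (by norm_num) (by positivity)
    rw [ProbabilityTheory.lintegral_betaPDF, ← hCb, show (1/2 : ℝ) - 1 = -(1/2) by norm_num,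
      show (m:ℝ) + 1/2 - 1 = m - 1/2 by ring] at hone
    refine (lintegral_ofReal_ne_top_iff_integrable (by fun_prop) ?_).1 (by rw [hone]; simp)
    refine ae_restrict_of_forall_mem measurableSet_Ioo fun y hy => ?_
    have hy0 := hy.1
    have hy1 : 0 ≤ 1 - y := by linarith [hy.2]
    show 0 ≤ C * y ^ (-(1 / 2) : ℝ) * (1 - y) ^ ((m : ℝ) - 1 / 2)
    positivity
  have hFi : ∀ x ∈ Set.Ioi (0:ℝ), Integrable (F x) (volume.restrict (Set.Ioo 0 1)) := by
    intro x hx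
    have hx : 0 < x := hx
    refine Integrable.mono' (hbeta.const_mul
      (Real.exp α * ((1 / 4) * x ^ (-(2 : ℝ)) * Real.exp (-1 / (4 * x)))))
      (by simp only [hF]; exact Measurable.aestronglyMeasurable (by fun_prop)) ?_
    refine ae_restrict_of_forall_mem measurableSet_Ioo fun y hy => ?_
    rw [Real.norm_of_nonneg (hFn x hx y hy)]
    have hy0 := hy.1
    have hy1 : 0 ≤ 1 - y := by linarith [hy.2]
    have hle : Real.exp (-(x / y) * α ^ 2 + α) ≤ Real.exp α := by
      apply Real.exp_le_exp.2
      have : 0 ≤ x / y * α ^ 2 := by positivity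
      linarith
    have := mul_le_mul_of_nonneg_right hle
      (show 0 ≤ (C * y ^ (-(1 / 2) : ℝ) * (1 - y) ^ ((m : ℝ) - 1 / 2)) *
        ((1 / 4) * x ^ (-(2 : ℝ)) * Real.exp (-1 / (4 * x))) by positivity)
    simp only [hF]
    linarith
  rw [← integral_const_mul, integral_eq_lintegral_of_nonneg_ae, integral_eq_lintegral_of_nonneg_ae]
  · congr 1
    rw [aux_lhs]
    have r1 : ∫⁻ x in Set.Ioi (0:ℝ), ENNReal.ofReal (∫ y in Set.Ioo (0:ℝ) 1, F x y) =
        ∫⁻ x in Set.Ioi (0:ℝ), ∫⁻ y in Set.Ioo (0:ℝ) 1, ENNReal.ofReal (F x y) := by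
      refine setLIntegral_congr_fun measurableSet_Ioi fun x hx => ?_
      exact ofReal_integral_eq_lintegral_ofReal (hFi x hx)
        (ae_restrict_of_forall_mem measurableSet_Ioo (hFn x hx))
    rw [r1, lintegral_lintegral_swap (by exact hFm.ennreal_ofReal.aemeasurable)]
    have r2 : ∫⁻ y in Set.Ioo (0:ℝ) 1, ∫⁻ x in Set.Ioi (0:ℝ), ENNReal.ofReal (F x y) =
        ∫⁻ y in Set.Ioo (0:ℝ) 1, ∫⁻ s in Set.Ioi (1 / Real.sqrt y), ENNReal.ofReal
          ((Real.exp α * C * (1 - y) ^ ((m : ℝ) - 1 / 2)) *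
            (α * Real.exp (-(α * s)) * (y - 1 / s ^ 2) ^ (-(1 / 2) : ℝ))) := by
      refine setLIntegral_congr_fun measurableSet_Ioo fun y hy => ?_
      have hy1 : 0 ≤ 1 - y := by linarith [hy.2]
      try simp only
      rw [← aux_scale α hα y hy.1 _ (by positivity)]
      refine lintegral_congr fun x => ?_
      congr 1
      simp only [hF]
      rw [Real.exp_add]
      ring
    rw [r2, aux_swap _ (by simp only [Function.uncurry_def]; fun_prop)]
    refine setLIntegral_congr_fun measurableSet_Ioi fun s hs => ?_
    have hs : 1 < s := hs
    try simp only
    rw [← aux_beta_s16 (1 / s ^ 2) (by positivity)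
      (by rw [div_lt_one (by positivity)]; nlinarith) m _ (by positivity)]
    refine lintegral_congr fun y => ?_
    congr 1
    rw [← hC]
    ring
  · refine ae_restrict_of_forall_mem measurableSet_Ioi fun x hx => ?_
    exact setIntegral_nonneg measurableSet_Ioo (hFn x hx)
  · exact (hFm.stronglyMeasurable.integral_prod_right).aestronglyMeasurable
  · refine ae_restrict_of_forall_mem measurableSet_Ioi fun x hx => ?_
    have hx : 0 < x := hx
    show 0 ≤ α * 2 ^ m * (x ^ m * (1 + 2 * x) ^ (-((m : ℝ) + 1 / 2)) *
            Real.exp (-α * (Real.sqrt (1 + 2 * x) - 1)))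
    positivity
  · exact Measurable.aestronglyMeasurable (by fun_prop)
end

section
/- Let α > 0, let 1 ≤ k ≤ m be integers, and let (n₁, …, n_k) be positive integers with n₁ + ⋯ + n_k = m. Then lim_{σ→0⁺} [ ((α·2^{σ−1})^k / Γ(m)) · ∫_0^∞ x^{m−1}·(1/2 + x)^{−(m − kσ)}·exp( −(α·2^{σ−1}/σ)·[ (1/2 + x)^σ − 2^{−σ} ] ) dx ] · ∏_{i=1}^{k} (1−σ)_{(n_i−1)} = ( (α/2)^k / (α/2)_{(m)} ) · ∏_{i=1}^{k} (n_i − 1)!. -/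
open MeasureTheory

lemma rf_cont (n : ℕ) : Continuous (fun x => risingFactorial x n) := by
  induction n with
  | zero => simpa [risingFactorial] using continuous_const
  | succ n ih => simp only [risingFactorial]; fun_prop

lemma rf_pos {a : ℝ} (ha : 0 < a) (n : ℕ) : 0 < risingFactorial a n := by
  induction n with
  | zero => simp [risingFactorial]
  | succ n ih => simp only [risingFactorial]; positivity

lemma rf_one (n : ℕ) : risingFactorial 1 n = (n.factorial : ℝ) := by
  induction n with
  | zero => simp [risingFactorial]
  | succ n ih => simp only [risingFactorial, ih, Nat.factorial_succ]; push_cast; ring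

/-- the beta-type integrand -/
noncomputable def Jfun (a : ℝ) (m : ℕ) (x : ℝ) : ℝ :=
  (x / (x + 1 / 2)) ^ m * (x + 1 / 2) ^ (-1 - a)

lemma base_int {a : ℝ} (ha : 0 < a) :
    IntegrableOn (fun x : ℝ => (x + 1 / 2) ^ (-1 - a)) (Set.Ioi 0) :=
  integrableOn_add_rpow_Ioi_of_lt (by linarith) (by norm_num)

lemma J_int {a : ℝ} (ha : 0 < a) (m : ℕ) : IntegrableOn (Jfun a m) (Set.Ioi 0) := by
  refine Integrable.mono' (base_int ha) ?_ ?_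
  · unfold Jfun
    exact Measurable.aestronglyMeasurable (by fun_prop)
  · filter_upwards [ae_restrict_mem measurableSet_Ioi] with x hx
    have hx : 0 < x := hx
    have h1 : x / (x + 1 / 2) ≤ 1 := by rw [div_le_one (by positivity)]; linarith
    have h2 : (0:ℝ) ≤ (x + 1 / 2) ^ (-1 - a) := by positivity
    have h3 : (x / (x + 1 / 2)) ^ m ≤ 1 := pow_le_one₀ (by positivity) h1
    unfold Jfun
    rw [Real.norm_of_nonneg (by positivity)]
    exact mul_le_of_le_one_left h2 h3

lemma tendsto_base {a : ℝ} (ha : 0 < a) :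
    Filter.Tendsto (fun x : ℝ => (x + 1 / 2) ^ (-a)) Filter.atTop (nhds 0) :=
  (tendsto_rpow_neg_atTop ha).comp (Filter.tendsto_atTop_add_const_right _ _ Filter.tendsto_id)

lemma J_deriv (a : ℝ) (m : ℕ) {x : ℝ} (hx : 0 ≤ x) :
    HasDerivAt (fun x : ℝ => (x / (x + 1 / 2)) ^ m * (x + 1 / 2) ^ (-a))
      (m * Jfun a (m - 1) x - (m + a) * Jfun a m x) x := by
  have hy : 0 < x + 1 / 2 := by positivity
  have h0 : HasDerivAt (fun x : ℝ => x + 1 / 2) 1 x := (hasDerivAt_id x).add_const _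
  have h1 := ((hasDerivAt_id x).div h0 hy.ne').pow m
  have h2 := h0.rpow_const (p := -a) (Or.inl hy.ne')
  refine (h1.mul h2).congr_deriv ?_
  unfold Jfun
  have e1 : (x + 1 / 2) ^ (-a) = (x + 1 / 2) ^ (-1 - a) * (x + 1 / 2) := by
    rw [← Real.rpow_add_one hy.ne']; ring_nf
  have e2 : -a - 1 = -1 - a := by ring
  simp only [id, Pi.div_apply, Pi.pow_apply]
  rw [e1, e2]
  rcases m with _ | m
  · simp
  · simp only [Nat.add_sub_cancel]
    push_cast
    rw [pow_succ (x / (x + 1 / 2)) m]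
    generalize (x + 1 / 2) ^ (-1 - a) = E
    generalize hq : (x / (x + 1 / 2)) ^ m = q
    field_simp
    ring

lemma J_zero {a : ℝ} (ha : 0 < a) : ∫ x in Set.Ioi (0:ℝ), Jfun a 0 x = 2 ^ a / a := by
  have := integral_Ioi_of_hasDerivAt_of_tendsto' (a := 0) (fun x hx => J_deriv a 0 (x := x) hx)
    (by simpa [IntegrableOn] using (J_int ha 0).const_mul (-a)) (by simpa using tendsto_base ha)
  simp [integral_const_mul, integral_neg] at this
  rw [Real.rpow_neg (by norm_num), Real.inv_rpow (by norm_num), inv_inv] at this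
  rw [eq_div_iff ha.ne']; linarith

lemma J_succ {a : ℝ} (ha : 0 < a) (m : ℕ) :
    (m + 1 + a) * ∫ x in Set.Ioi (0:ℝ), Jfun a (m + 1) x
      = (m + 1) * ∫ x in Set.Ioi (0:ℝ), Jfun a m x := by
  have i1 := (J_int ha m).const_mul ((m:ℝ) + 1)
  have i2 := (J_int ha (m+1)).const_mul ((m:ℝ) + 1 + a)
  have ht : Filter.Tendsto (fun x : ℝ => (x / (x + 1 / 2)) ^ (m+1) * (x + 1 / 2) ^ (-a))
      Filter.atTop (nhds 0) := by
    refine squeeze_zero' ?_ ?_ (tendsto_base ha)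
    · filter_upwards [Filter.eventually_gt_atTop 0] with x hx; positivity
    · filter_upwards [Filter.eventually_gt_atTop 0] with x hx
      refine mul_le_of_le_one_left (by positivity) (pow_le_one₀ (by positivity) ?_)
      rw [div_le_one (by positivity)]; linarith
  have := integral_Ioi_of_hasDerivAt_of_tendsto' (a := 0)
    (fun x hx => J_deriv a (m+1) (x := x) hx)
    (by push_cast; exact i1.sub i2) ht
  simp only [Nat.add_sub_cancel] at this
  push_cast at this
  rw [integral_sub i1 i2, integral_const_mul, integral_const_mul] at this
  simp at this
  linarith

lemma J_val {a : ℝ} (ha : 0 < a) (m : ℕ) :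
    ∫ x in Set.Ioi (0:ℝ), Jfun a m x = 2 ^ a * m.factorial / risingFactorial a (m + 1) := by
  induction m with
  | zero => rw [J_zero ha]; simp [risingFactorial]
  | succ m ih =>
    have h := J_succ ha m
    rw [ih] at h
    have hp := rf_pos ha (m+1)
    have hm : (0:ℝ) < m + 1 + a := by positivity
    rw [risingFactorial, Nat.factorial_succ]
    rw [← mul_right_inj' hm.ne', h]
    push_cast
    field_simp
    ring

lemma expo_eq (α σ : ℝ) {y : ℝ} (hy : 0 < y) :
    -(α * (2 : ℝ) ^ (σ - 1) / σ) * (y ^ σ - (2 : ℝ) ^ (-σ))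
      = -(α / 2) * (((2 * y) ^ σ - 1) / σ) := by
  rw [Real.mul_rpow (by norm_num) hy.le, Real.rpow_sub (by norm_num), Real.rpow_neg (by norm_num)]
  have : (0:ℝ) < 2 ^ σ := by positivity
  rw [Real.rpow_one]
  field_simp

lemma slope_lim {c : ℝ} (hc : 0 < c) :
    Filter.Tendsto (fun σ : ℝ => (c ^ σ - 1) / σ) (nhdsWithin 0 (Set.Ioi 0))
      (nhds (Real.log c)) := by
  have h := (Real.hasStrictDerivAt_const_rpow hc 0).hasDerivAt
  have h2 := h.tendsto_slope_zero_right
  simp at h2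
  refine h2.congr fun σ => ?_
  rw [div_eq_inv_mul]

lemma slope_le {c σ : ℝ} (hc : 0 < c) (hσ : 0 < σ) : Real.log c ≤ (c ^ σ - 1) / σ := by
  rw [le_div_iff₀ hσ, Real.rpow_def_of_pos hc]
  linarith [Real.add_one_le_exp (Real.log c * σ)]

lemma int_lim (α : ℝ) (hα : 0 < α) (m k : ℕ) :
    Filter.Tendsto
      (fun σ : ℝ => ∫ x in Set.Ioi (0 : ℝ),
              x ^ m * ((1 / 2 : ℝ) + x) ^ (-(((m + 1 : ℕ) : ℝ) - k * σ)) *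
                Real.exp (-(α * (2 : ℝ) ^ (σ - 1) / σ) *
                  (((1 / 2 : ℝ) + x) ^ σ - (2 : ℝ) ^ (-σ))))
      (nhdsWithin 0 (Set.Ioi 0))
      (nhds (∫ x in Set.Ioi (0 : ℝ), 2 ^ (-(α / 2)) * Jfun (α / 2) m x)) := by
  have key : ∀ x : ℝ, 0 < x → ∀ s : ℝ,
      x ^ m * ((1 / 2 : ℝ) + x) ^ (-(((m + 1 : ℕ) : ℝ) - s))
        = (x / (x + 1 / 2)) ^ m * (x + 1 / 2) ^ (-1 + s) := by
    intro x hx s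
    have hy : 0 < x + 1 / 2 := by positivity
    rw [add_comm (1/2) x, div_pow, show -(((m + 1 : ℕ) : ℝ) - s) = (-1 + s) - (m : ℕ) by
      push_cast; ring, Real.rpow_sub_natCast hy.ne']
    ring
  refine tendsto_integral_filter_of_dominated_convergence
    (fun x => (x + 1 / 2) ^ (-1 - α / 4)) ?_ ?_ (base_int (by positivity)) ?_
  · exact Filter.Eventually.of_forall fun σ => Measurable.aestronglyMeasurable (by fun_prop)
  · have hδ : (0:ℝ) < α / (4 * (k + 1)) := by positivity
    filter_upwards [Ioo_mem_nhdsGT hδ] with σ hσ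
    have hσ0 : 0 < σ := hσ.1
    have hkσ : k * σ ≤ α / 4 := by
      have := hσ.2
      rw [lt_div_iff₀ (by positivity)] at this
      nlinarith
    filter_upwards [ae_restrict_mem measurableSet_Ioi] with x hx
    have hx : 0 < x := hx
    have hy : 0 < x + 1 / 2 := by positivity
    rw [key x hx, add_comm (1/2) x, expo_eq α σ hy]
    rw [Real.norm_of_nonneg (by positivity)]
    have hc : 1 ≤ 2 * (x + 1 / 2) := by linarith
    have h1 : Real.exp (-(α / 2) * (((2 * (x + 1 / 2)) ^ σ - 1) / σ))
        ≤ (2 * (x + 1 / 2)) ^ (-(α / 2)) := by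
      rw [Real.rpow_def_of_pos (y := -(α / 2)) (by positivity), Real.exp_le_exp, mul_comm (Real.log _)]
      have := slope_le (c := 2 * (x + 1 / 2)) (by positivity) hσ0
      nlinarith
    have h3 : (x / (x + 1 / 2)) ^ m ≤ 1 := by
      refine pow_le_one₀ (by positivity) ?_
      rw [div_le_one (by positivity)]; linarith
    have h4 : (x + 1 / 2) ^ (k * σ) * (2 * (x + 1 / 2)) ^ (-(α / 2)) ≤ (x + 1 / 2) ^ (- (α / 4)) := by
      calc _ ≤ (2 * (x + 1 / 2)) ^ (k * σ) * (2 * (x + 1 / 2)) ^ (-(α / 2)) := by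
            gcongr; linarith
        _ = (2 * (x + 1 / 2)) ^ (k * σ + -(α / 2)) := by rw [Real.rpow_add (by positivity)]
        _ ≤ (2 * (x + 1 / 2)) ^ (-(α / 4)) := Real.rpow_le_rpow_of_exponent_le hc (by linarith)
        _ ≤ _ := Real.rpow_le_rpow_of_nonpos hy (by linarith) (by linarith)
    calc _ ≤ 1 * (x + 1 / 2) ^ (-1 + k * σ) * (2 * (x + 1 / 2)) ^ (-(α / 2)) := by gcongr
      _ = (x + 1 / 2) ^ (-1 : ℝ) * ((x + 1 / 2) ^ (k * σ) * (2 * (x + 1 / 2)) ^ (-(α / 2))) := by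
          rw [Real.rpow_add hy]; ring
      _ ≤ (x + 1 / 2) ^ (-1 : ℝ) * (x + 1 / 2) ^ (- (α / 4)) := by gcongr
      _ = _ := by rw [← Real.rpow_add hy]; ring_nf
  · filter_upwards [ae_restrict_mem measurableSet_Ioi] with x hx
    have hx : 0 < x := hx
    have hy : 0 < x + 1 / 2 := by positivity
    have e : ∀ σ : ℝ, x ^ m * ((1 / 2 : ℝ) + x) ^ (-(((m + 1 : ℕ) : ℝ) - k * σ)) *
                Real.exp (-(α * (2 : ℝ) ^ (σ - 1) / σ) *
                  (((1 / 2 : ℝ) + x) ^ σ - (2 : ℝ) ^ (-σ)))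
        = (x / (x + 1 / 2)) ^ m * (x + 1 / 2) ^ (-1 + k * σ) *
          Real.exp (-(α / 2) * (((2 * (x + 1 / 2)) ^ σ - 1) / σ)) := by
      intro σ
      rw [key x hx, add_comm (1/2) x, expo_eq α σ hy]
    simp only [e]
    have l1 : Filter.Tendsto (fun σ : ℝ => (x + 1 / 2) ^ (-1 + k * σ)) (nhdsWithin 0 (Set.Ioi 0))
        (nhds ((x + 1 / 2) ^ (-1 + k * (0:ℝ)))) := by
      refine Filter.Tendsto.mono_left ?_ nhdsWithin_le_nhds
      exact ((Real.continuous_const_rpow hy.ne').comp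
        (by fun_prop : Continuous fun σ : ℝ => -1 + k * σ)).tendsto 0
    have l2 := (Real.continuous_exp.tendsto _).comp
      ((slope_lim (c := 2 * (x + 1 / 2)) (by positivity)).const_mul (-(α / 2)))
    have l3 := (l1.const_mul ((x / (x + 1 / 2)) ^ m)).mul l2
    suffices hs : 2 ^ (-(α / 2)) * Jfun (α / 2) m x = (x / (x + 1 / 2)) ^ m *
        (x + 1 / 2) ^ (-1 + k * (0:ℝ)) * Real.exp (-(α / 2) * Real.log (2 * (x + 1 / 2))) by
      rw [hs]; exact l3
    rw [mul_comm (-(α/2)), ← Real.rpow_def_of_pos (by positivity),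
      Real.mul_rpow (by norm_num) hy.le, mul_zero, add_zero, Jfun,
      show -1 - α / 2 = -1 + -(α / 2) by ring, Real.rpow_add hy]
    ring

/-- As `σ → 0⁺`, the NGGP partition probability `V_{m,k} ∏ᵢ (1−σ)_(nᵢ−1)` converges
to the Dirichlet process (Ewens-type) quantity `((α/2)^k/(α/2)_(m)) ∏ᵢ (nᵢ−1)!`. -/
theorem stmt18 (α : ℝ) (hα : 0 < α) (m k : ℕ) (hk : 1 ≤ k) (hkm : k ≤ m)
    (n : Fin k → ℕ) (hn : ∀ i, 0 < n i) (hsum : ∑ i, n i = m) :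
    Filter.Tendsto
      (fun σ : ℝ =>
        (((α * (2 : ℝ) ^ (σ - 1)) ^ k / Real.Gamma m) *
            ∫ x in Set.Ioi (0 : ℝ),
              x ^ (m - 1) * ((1 / 2 : ℝ) + x) ^ (-((m : ℝ) - k * σ)) *
                Real.exp (-(α * (2 : ℝ) ^ (σ - 1) / σ) *
                  (((1 / 2 : ℝ) + x) ^ σ - (2 : ℝ) ^ (-σ)))) *
          ∏ i, risingFactorial (1 - σ) (n i - 1))
      (nhdsWithin 0 (Set.Ioi 0))
      (nhds (((α / 2) ^ k / risingFactorial (α / 2) m) *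
        ∏ i, ((n i - 1).factorial : ℝ))) := by
  obtain ⟨M, rfl⟩ : ∃ M, m = M + 1 := ⟨m - 1, by omega⟩
  have ha : 0 < α / 2 := by positivity
  have hI := int_lim α hα M k
  rw [integral_const_mul, J_val ha, Real.rpow_neg (by norm_num)] at hI
  have hc : Filter.Tendsto (fun σ : ℝ => (α * (2 : ℝ) ^ (σ - 1)) ^ k / Real.Gamma ((M + 1 : ℕ) : ℝ))
      (nhdsWithin 0 (Set.Ioi 0))
      (nhds ((α * (2 : ℝ) ^ ((0:ℝ) - 1)) ^ k / Real.Gamma ((M + 1 : ℕ) : ℝ))) := by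
    refine Filter.Tendsto.mono_left ?_ nhdsWithin_le_nhds
    refine Filter.Tendsto.div_const (Filter.Tendsto.pow (Filter.Tendsto.const_mul _ ?_) _) _
    exact ((Real.continuous_const_rpow (two_ne_zero : (2:ℝ) ≠ 0)).comp
        (by fun_prop : Continuous fun σ : ℝ => σ - 1)).tendsto 0
  have hp : Filter.Tendsto (fun σ : ℝ => ∏ i, risingFactorial (1 - σ) (n i - 1))
      (nhdsWithin 0 (Set.Ioi 0)) (nhds (∏ i, ((n i - 1).factorial : ℝ))) := by
    refine Filter.Tendsto.mono_left ?_ nhdsWithin_le_nhds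
    refine tendsto_finsetProd _ fun i _ => ?_
    have h := ((rf_cont (n i - 1)).comp (continuous_const.sub continuous_id :
      Continuous fun σ : ℝ => 1 - σ)).tendsto 0
    simpa [rf_one, Function.comp_def] using h
  have h := (hc.mul hI).mul hp
  simp only [Nat.add_sub_cancel]
  convert h using 3
  have hr := rf_pos ha (M + 1)
  have hf : (0:ℝ) < M.factorial := by positivity
  have h2 : (0:ℝ) < 2 ^ (α / 2) := by positivity
  rw [Nat.cast_add_one, Real.Gamma_nat_eq_factorial, zero_sub, Real.rpow_neg_one, ← div_eq_mul_inv]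
  field_simp
end
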